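/- arXiv:math/0703416 — 3 statements merged into one kernel-verified Lean document; each statement's English description precedes it below -/
import Mathlib

section
/- Let P be a terminal simplicial reflexive d-polytope with exactly 3d-1 vertices, where d is odd. Then P is isomorphic (as a lattice polytope) either to the convex hull of ±e_1, ..., ±e_{d-1}, e_d, ±(e_1 - e_2), ±(e_3 - e_4), ..., ±(e_{d-2} - e_{d-1}), e_1 - e_d, or to the convex hull of ±e_1, ..., ±e_d, ±(e_2 - e_3), ±(e_4 - e_5), ..., ±(e_{d-1} - e_d), where e_1, ..., e_d is a basis of the lattice N. -/
/-!
A facet `F` of the polytope is a simplex whose `d` vertices `b i` form a basis of `ℝ^d`; write `u` for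
its integral functional, so that every vertex has an integral level `u x ≤ 1`, and `c i` for the
coordinates. Two local facts carry the proof. A vertex at level `0` has a negative coordinate, and one
with `c i x < 0` is the new vertex of the facet across the ridge opposite to `b i`
(`TSR.Good.nbr_vertex`). So different vertices at level `0` have disjoint sets of negative coordinates,
and there are at most `d` of them. Terminality makes a sum of two vertices without a common facet a
vertex or zero (`TSR.Good.add_mem`) and excludes lattice points at midpoints of vertices.

Choose `F` special: its cone contains the sum of all vertices. With `3 * d - 1` vertices, counting by
levels bounds the level of the sum by `1`, so it is `0` or `1` (`TSR.Good.classification`).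

If it is `1`, the sum is a vertex `b o`, and `F` as well as its neighbours containing `b o` have exactly
`d` vertices at level `0`. These are `b (φ i) - b i`, one for each `i`, and comparing `F` with its
neighbours shows that the `d - 1` vertices at level `-1` are all the `-b i` but one, say `-b p`, and that
`φ` is an involution off `p`. As `d` is odd, `p ≠ o`, and `φ p = o` (`TSR.Good.shapeA`).

If the sum is zero, a vertex at level `-2` of some facet is incompatible with the `d` vertices at level
`0` that it forces (`TSR.Good.no_level_neg_two`). Hence all levels are at least `-1`, and the polytope is
centrally symmetric as `-x` satisfies all facet inequalities. There are then `d - 1` vertices at level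
`0`, which are `b (κ i) - b i` for an involution `κ` of all indices but one (`TSR.Good.shapeB`).

In both cases the `b i` are a lattice basis, and listing the pairs of the involution consecutively
gives the two normal forms. The properties of facets used above (`TSR.Good`) are derived from the
definition of the polytope by linear programming: special facets come from extreme points of the dual
polytope, and neighbouring facets from the ratio test.
-/

open Finset

/-- A point of `ℝ^d` is a lattice point if all of its coordinates are integers. -/
def IsLatticePt {d : ℕ} (x : Fin d → ℝ) : Prop := ∀ i, ∃ z : ℤ, x i = (z : ℝ)

/-- The pairing between `M_ℝ` and `N_ℝ`, both identified with `ℝ^d`. -/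
noncomputable def pairing {d : ℕ} (u x : Fin d → ℝ) : ℝ := ∑ i, u i * x i

/-- The `i`-th standard basis vector of `ℝ^d`. -/
noncomputable def stdVec {d : ℕ} (i : Fin d) : Fin d → ℝ := Pi.single i 1

/-- A polytope in `ℝ^d`, given by its finite vertex set (each listed point is
required to be an extreme point of the convex hull, i.e. a genuine vertex). -/
structure Polytope (d : ℕ) where
  verts : Finset (Fin d → ℝ)
  vertsExtreme : ∀ v ∈ verts,
    v ∈ Set.extremePoints ℝ (convexHull ℝ (verts : Set (Fin d → ℝ)))

namespace Polytope

variable {d : ℕ}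

/-- The polytope as a subset of `ℝ^d`. -/
def carrier (P : Polytope d) : Set (Fin d → ℝ) :=
  convexHull ℝ (P.verts : Set (Fin d → ℝ))

/-- A proper face of `P`, cut out by a supporting hyperplane. -/
def IsFace (P : Polytope d) (F : Set (Fin d → ℝ)) : Prop :=
  ∃ u : Fin d → ℝ, u ≠ 0 ∧ ∃ c : ℝ,
    (∀ x ∈ P.carrier, pairing u x ≤ c) ∧ F = {x ∈ P.carrier | pairing u x = c}

/-- A facet of `P`: a nonempty proper face of dimension `d - 1`. -/
def IsFacet (P : Polytope d) (F : Set (Fin d → ℝ)) : Prop :=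
  P.IsFace F ∧ F.Nonempty ∧ Module.finrank ℝ (vectorSpan ℝ F) = d - 1

/-- The set of vertices of `P` lying on `F`. -/
def vertsOn (P : Polytope d) (F : Set (Fin d → ℝ)) : Set (Fin d → ℝ) :=
  {v | v ∈ P.verts ∧ v ∈ F}

/-- `P` is simplicial if every facet has exactly `d` vertices. -/
def IsSimplicial (P : Polytope d) : Prop :=
  ∀ F, P.IsFacet F → (P.vertsOn F).ncard = d

/-- `P` is a lattice polytope. -/
def IsLattice (P : Polytope d) : Prop := ∀ v ∈ P.verts, IsLatticePt v

/-- `u` is the supporting functional `u_F` of the facet `F`, i.e. `⟨u, ·⟩ = 1` on `F`. -/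
def IsUF (P : Polytope d) (F : Set (Fin d → ℝ)) (u : Fin d → ℝ) : Prop :=
  ∀ x ∈ F, pairing u x = 1

/-- `u` is the dual basis element `u_F^v`: it takes value `1` at the vertex `v` of `F`
and `0` at all other vertices of `F`. -/
def IsDualBasisElt (P : Polytope d) (F : Set (Fin d → ℝ)) (v : Fin d → ℝ)
    (u : Fin d → ℝ) : Prop :=
  pairing u v = 1 ∧ ∀ w ∈ P.vertsOn F, w ≠ v → pairing u w = 0

/-- `P` is reflexive: it is a lattice polytope with `0` in its interior, and every
facet lies on a hyperplane `⟨u, ·⟩ = 1` with `u` integral (equivalently, the dual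
polytope is a lattice polytope). -/
def IsReflexive (P : Polytope d) : Prop :=
  P.IsLattice ∧ 0 ∈ interior P.carrier ∧
    ∀ F, P.IsFacet F → ∃ u : Fin d → ℤ, P.IsUF F (fun i => (u i : ℝ))

/-- `P` is terminal: the only lattice points of `P` are its vertices and the origin. -/
def IsTerminal (P : Polytope d) : Prop :=
  ∀ x ∈ P.carrier, IsLatticePt x → x = 0 ∨ x ∈ P.verts

/-- `F'` is the neighboring facet `N(F, v)`: the facet different from `F` containing
all vertices of `F` except `v`. -/
def IsNeighborFacet (P : Polytope d) (F : Set (Fin d → ℝ)) (v : Fin d → ℝ)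
    (F' : Set (Fin d → ℝ)) : Prop :=
  P.IsFacet F' ∧ F' ≠ F ∧ ∀ w ∈ P.vertsOn F, w ≠ v → w ∈ F'

/-- `y` is the neighboring vertex `n(F, v)`: the unique vertex of `N(F, v)` not on `F`. -/
def IsNeighborVertex (P : Polytope d) (F : Set (Fin d → ℝ)) (v : Fin d → ℝ)
    (y : Fin d → ℝ) : Prop :=
  ∃ F', P.IsNeighborFacet F v F' ∧ y ∈ P.vertsOn F' ∧ y ∉ F

/-- `F` is a special facet of `P`: the sum of all vertices of `P` is a nonnegative
linear combination of the vertices of `F`, i.e. `⟨u_F^w, ν_P⟩ ≥ 0` for every vertex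
`w` of `F`. -/
def IsSpecialFacet (P : Polytope d) (F : Set (Fin d → ℝ)) : Prop :=
  P.IsFacet F ∧ ∀ w ∈ P.vertsOn F, ∀ uFw : Fin d → ℝ,
    P.IsDualBasisElt F w uFw → 0 ≤ pairing uFw (∑ v ∈ P.verts, v)

end Polytope

/-- `S` is a `ℤ`-basis of the lattice `ℤ^d ⊆ ℝ^d`. -/
def IsLatticeBasis {d : ℕ} (S : Set (Fin d → ℝ)) : Prop :=
  ∃ v : Fin d → (Fin d → ℝ), Set.range v = S ∧
    ∀ x : Fin d → ℝ, (IsLatticePt x ↔ ∃ a : Fin d → ℤ, x = ∑ i, (a i : ℝ) • v i)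

/-- The vertex set of polytope (2): `±e_1, …, ±e_{d-1}, e_d,
±(e_1-e_2), ±(e_3-e_4), …, ±(e_{d-2}-e_{d-1}), e_1 - e_d` (0-based indices). -/
def oddTargetVertsA (d : ℕ) : Set (Fin d → ℝ) :=
  {x | (∃ i : Fin d, (i : ℕ) + 1 < d ∧ (x = stdVec i ∨ x = -stdVec i)) ∨
       (∃ i : Fin d, (i : ℕ) + 1 = d ∧ x = stdVec i) ∨
       (∃ i j : Fin d, (i : ℕ) % 2 = 0 ∧ (j : ℕ) = (i : ℕ) + 1 ∧ (j : ℕ) + 1 < d ∧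
         (x = stdVec i - stdVec j ∨ x = stdVec j - stdVec i)) ∨
       (∃ i j : Fin d, (i : ℕ) = 0 ∧ (j : ℕ) + 1 = d ∧ x = stdVec i - stdVec j)}

/-- The vertex set of polytope (3): `±e_1, …, ±e_d,
±(e_2-e_3), ±(e_4-e_5), …, ±(e_{d-1}-e_d)` (0-based indices). -/
def oddTargetVertsB (d : ℕ) : Set (Fin d → ℝ) :=
  {x | (∃ i : Fin d, x = stdVec i ∨ x = -stdVec i) ∨
       (∃ i j : Fin d, (i : ℕ) % 2 = 1 ∧ (j : ℕ) = (i : ℕ) + 1 ∧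
         (x = stdVec i - stdVec j ∨ x = stdVec j - stdVec i))}

namespace TSR

section Facets

/-! ### Facets and lattice points -/

variable {d : ℕ}

/-- A facet of the polytope with vertex set `V`, in the form used throughout the proof: the
functional `u` with `u = 1` on the facet, together with an enumeration `b` of the vertices of the
facet, which is a basis of `ℝ^d` because the facet is a simplex avoiding the origin. -/
structure Fac (V : Finset (Fin d → ℝ)) where
  u : (Fin d → ℝ) →ₗ[ℝ] ℝ
  b : Module.Basis (Fin d) ℝ (Fin d → ℝ)
  le : ∀ x ∈ V, u x ≤ 1
  mem : ∀ i, b i ∈ V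
  tight : ∀ x ∈ V, u x = 1 → ∃ i, x = b i
  one : ∀ i, u (b i) = 1
  int : ∀ x, IsLatticePt x → ∃ z : ℤ, u x = z

/-- The properties of the vertex set `V` of a terminal simplicial reflexive polytope on which the
classification rests: every vector lies in the cone over some facet (`special`), facets have
neighbours across each ridge (`nbr`), and the polytope is cut out by its facets and contains no
lattice points besides the origin and the vertices (`hull`). -/
structure Good (V : Finset (Fin d → ℝ)) : Prop where
  latt : ∀ x ∈ V, IsLatticePt x
  zero : (0 : Fin d → ℝ) ∉ V
  special : ∀ x, ∃ F : Fac V, ∀ i, 0 ≤ F.b.coord i x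
  nbr : ∀ (F : Fac V) (i : Fin d), ∃ (F' : Fac V) (t : ℤ), 1 ≤ t ∧
    (∀ x, F'.u x = F.u x - t * F.b.coord i x) ∧ ∀ j, j ≠ i → F'.b j = F.b j
  hull : ∀ x, IsLatticePt x → (∀ F : Fac V, F.u x ≤ 1) → x = 0 ∨ x ∈ V

lemma latt_add {x y : Fin d → ℝ} (hx : IsLatticePt x) (hy : IsLatticePt y) :
    IsLatticePt (x + y) := by
  intro i
  obtain ⟨a, ha⟩ := hx i
  obtain ⟨b, hb⟩ := hy i
  exact ⟨a + b, by simp [ha, hb]⟩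

lemma latt_neg {x : Fin d → ℝ} (hx : IsLatticePt x) : IsLatticePt (-x) := by
  intro i
  obtain ⟨a, ha⟩ := hx i
  exact ⟨-a, by simp [ha]⟩

lemma latt_sub {x y : Fin d → ℝ} (hx : IsLatticePt x) (hy : IsLatticePt y) :
    IsLatticePt (x - y) := by
  rw [sub_eq_add_neg]
  exact latt_add hx (latt_neg hy)

lemma latt_zsmul {x : Fin d → ℝ} (a : ℤ) (hx : IsLatticePt x) :
    IsLatticePt ((a : ℝ) • x) := by
  intro i
  obtain ⟨z, hz⟩ := hx i
  exact ⟨a * z, by simp [hz]⟩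

lemma latt_sum {ι : Type*} (s : Finset ι) (f : ι → Fin d → ℝ) (h : ∀ i ∈ s, IsLatticePt (f i)) :
    IsLatticePt (∑ i ∈ s, f i) := by
  classical
  induction s using Finset.induction_on with
  | empty => intro i; exact ⟨0, by simp⟩
  | insert a s ha ih =>
    rw [Finset.sum_insert ha]
    exact latt_add (h a (by simp)) (ih fun i hi => h i (by simp [hi]))

namespace Fac

variable {V : Finset (Fin d → ℝ)} (F : Fac V)

/-- The `i`-th coordinate with respect to the vertices of the facet, i.e. the functional that is
`1` at the `i`-th vertex of the facet and `0` at the others. -/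
noncomputable def c (i : Fin d) : (Fin d → ℝ) →ₗ[ℝ] ℝ := F.b.coord i

lemma c_b (i j : Fin d) : F.c i (F.b j) = if j = i then 1 else 0 := by
  simp [c, Finsupp.single_apply]

lemma c_self (i : Fin d) : F.c i (F.b i) = 1 := by simp [c_b]

lemma c_ne {i j : Fin d} (h : j ≠ i) : F.c i (F.b j) = 0 := by simp [c_b, h]

lemma sum_c (x : Fin d → ℝ) : ∑ i, F.c i x • F.b i = x := F.b.sum_repr x

lemma ext {x y : Fin d → ℝ} (h : ∀ i, F.c i x = F.c i y) : x = y := F.b.ext_elem h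

lemma u_eq (x : Fin d → ℝ) : F.u x = ∑ i, F.c i x := by
  conv_lhs => rw [← F.sum_c x]
  simp [F.one]

lemma b_inj {i j : Fin d} (h : F.b i = F.b j) : i = j := F.b.injective h

lemma u_le_zero {x : Fin d → ℝ} (hx : IsLatticePt x) (h : F.u x < 1) : F.u x ≤ 0 := by
  obtain ⟨z, hz⟩ := F.int x hx
  rw [hz] at h ⊢
  have : z < 1 := by exact_mod_cast h
  exact_mod_cast (by omega : z ≤ 0)

lemma u_le_neg_one {x : Fin d → ℝ} (hx : IsLatticePt x) (h : F.u x < 0) : F.u x ≤ -1 := by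
  obtain ⟨z, hz⟩ := F.int x hx
  rw [hz] at h ⊢
  have : z < 0 := by exact_mod_cast h
  exact_mod_cast (by omega : z ≤ -1)

lemma u_eq_one {x : Fin d → ℝ} (hx : IsLatticePt x) (hV : x ∈ V) (h : 0 < F.u x) :
    F.u x = 1 := by
  by_contra hne
  have := F.u_le_zero hx (lt_of_le_of_ne (F.le x hV) hne)
  linarith

/-- A sum of two vertices of a simplicial facet has only the obvious decomposition as a sum of two
vertices: the level of the sum forces the other two vertices onto the same facet, whose vertices
are linearly independent. -/
lemma parallelogram {x y z w : Fin d → ℝ} (hz : z ∈ V) (hw : w ∈ V)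
    (h : x + y = z + w) (hx1 : x ∈ V) (hy1 : y ∈ V) (hx : F.u x = 1) (hy : F.u y = 1) :
    z = x ∨ z = y := by
  have hs : F.u z + F.u w = 2 := by
    rw [← map_add, ← h, map_add, hx, hy]; norm_num
  have hz1 := F.le z hz
  have hw1 := F.le w hw
  obtain ⟨i, rfl⟩ := F.tight x hx1 hx
  obtain ⟨j, rfl⟩ := F.tight y hy1 hy
  obtain ⟨k, rfl⟩ := F.tight z hz (by linarith)
  obtain ⟨l, rfl⟩ := F.tight w hw (by linarith)
  have := congrArg (F.c k) h
  simp only [map_add, c_b] at this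
  by_cases hik : i = k
  · left; rw [hik]
  by_cases hjk : j = k
  · right; rw [hjk]
  simp only [hik, hjk, if_false, if_true] at this
  split_ifs at this <;> norm_num at this

end Fac

namespace Good

variable {V : Finset (Fin d → ℝ)} (hV : Good V)

include hV in
lemma ne_zero {x : Fin d → ℝ} (hx : x ∈ V) : x ≠ 0 := fun h => hV.zero (h ▸ hx)

include hV in
/-- A vertex lies on some facet. -/
lemma exists_vertex {x : Fin d → ℝ} (hx : x ∈ V) : ∃ F : Fac V, F.u x = 1 := by
  obtain ⟨F, hF⟩ := hV.special x
  refine ⟨F, F.u_eq_one (hV.latt x hx) hx ?_⟩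
  have h0 : 0 ≤ F.u x := by
    rw [F.u_eq]; exact Finset.sum_nonneg fun i _ => hF i
  refine lt_of_le_of_ne h0 fun h => hV.ne_zero hx (F.ext fun i => ?_)
  rw [F.u_eq] at h
  rw [map_zero]
  exact (Finset.sum_eq_zero_iff_of_nonneg (fun i _ => hF i)).1 h.symm i (Finset.mem_univ i)

include hV in
/-- A sum of two vertices without a common facet is a lattice point of the polytope, hence by
terminality it is a vertex or zero. -/
lemma add_mem {x y : Fin d → ℝ} (hx : x ∈ V) (hy : y ∈ V)
    (h : ∀ F : Fac V, F.u x = 1 → F.u y = 1 → False) : x + y = 0 ∨ x + y ∈ V := by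
  refine hV.hull _ (latt_add (hV.latt x hx) (hV.latt y hy)) fun F => ?_
  rw [map_add]
  by_cases h1 : F.u x = 1
  · have h2 : F.u y ≠ 1 := fun h2 => h F h1 h2
    have := F.u_le_zero (hV.latt y hy) (lt_of_le_of_ne (F.le y hy) h2)
    linarith
  · have := F.u_le_zero (hV.latt x hx) (lt_of_le_of_ne (F.le x hx) h1)
    linarith [F.le y hy]

include hV in
/-- If a vector has two different decompositions as a sum of two vertices, the summands have no
common facet, so the vector itself is a vertex or zero. -/
lemma add_mem_of_eq {x y z w : Fin d → ℝ} (hx : x ∈ V) (hy : y ∈ V) (hz : z ∈ V) (hw : w ∈ V)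
    (h : x + y = z + w) (h1 : z ≠ x) (h2 : z ≠ y) : x + y = 0 ∨ x + y ∈ V := by
  refine hV.add_mem hx hy fun F hFx hFy => ?_
  rcases F.parallelogram hz hw h hx hy hFx hFy with h' | h'
  · exact h1 h'
  · exact h2 h'

include hV in
/-- A nonzero lattice point is not the midpoint of two distinct vertices, nor of a vertex and the
origin. -/
lemma midpoint {x y z : Fin d → ℝ} (hx : x ∈ V) (hy : y = 0 ∨ y ∈ V) (hz : IsLatticePt z)
    (hz0 : z ≠ 0) (h : z + z = x + y) : x = y := by
  have hle : ∀ F : Fac V, F.u y ≤ 1 := by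
    intro F
    rcases hy with rfl | hy
    · simp
    · exact F.le y hy
  have hzV : z ∈ V := by
    refine (hV.hull z hz fun F => ?_).resolve_left hz0
    have := congrArg F.u h
    simp only [map_add] at this
    linarith [F.le x hx, hle F]
  obtain ⟨F, hF⟩ := hV.exists_vertex hzV
  have hu := congrArg F.u h
  simp only [map_add, hF] at hu
  have hy1 : F.u y = 1 := le_antisymm (hle F) (by linarith [F.le x hx])
  have hyV : y ∈ V := by
    rcases hy with rfl | hy
    · simp at hy1
    · exact hy
  have hxz : x = z := by
    rcases F.parallelogram hx hyV h hzV hzV hF hF with h' | h' <;> exact h'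
  subst hxz
  exact add_left_cancel h

include hV in
/-- A nonzero lattice point is not the centroid of three vertices, unless all are equal. -/
lemma centroid {x y w z : Fin d → ℝ} (hx : x ∈ V) (hy : y ∈ V) (hw : w ∈ V)
    (hz : IsLatticePt z) (hz0 : z ≠ 0) (h : z + z + z = x + y + w) : x = z := by
  have hzV : z ∈ V := by
    refine (hV.hull z hz fun F => ?_).resolve_left hz0
    have := congrArg F.u h
    simp only [map_add] at this
    linarith [F.le x hx, F.le y hy, F.le w hw]
  obtain ⟨F, hF⟩ := hV.exists_vertex hzV
  have hu := congrArg F.u h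
  simp only [map_add, hF] at hu
  have h1 := F.le x hx
  have h2 := F.le y hy
  have h3 := F.le w hw
  obtain ⟨i, rfl⟩ := F.tight x hx (by linarith)
  obtain ⟨j, rfl⟩ := F.tight y hy (by linarith)
  obtain ⟨k, rfl⟩ := F.tight w hw (by linarith)
  obtain ⟨l, rfl⟩ := F.tight z hzV hF
  have := congrArg (F.c l) h
  simp only [map_add, F.c_b, if_true] at this
  by_cases hil : i = l
  · rw [hil]
  · simp only [hil, if_false] at this
    split_ifs at this <;> norm_num at this

/-! ### Vertices at level zero -/

include hV in
/-- If `x` is a vertex at level `0` with a negative `i`-th coordinate, then `x` is the new vertex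
of the facet adjacent to `F` across the ridge opposite to the `i`-th vertex. -/
lemma nbr_vertex (F F' : Fac V) (i : Fin d) (t : ℤ) (ht : 1 ≤ t)
    (hu : ∀ x, F'.u x = F.u x - t * F.c i x) (hb : ∀ j, j ≠ i → F'.b j = F.b j)
    {x : Fin d → ℝ} (hx : x ∈ V) (h0 : F.u x = 0) (hneg : F.c i x < 0) :
    x = F'.b i ∧ t * F.c i x = -1 := by
  have htr : (1 : ℝ) ≤ t := by exact_mod_cast ht
  have h1 : F'.u x = 1 := by
    refine F'.u_eq_one (hV.latt x hx) hx ?_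
    rw [hu, h0]
    nlinarith
  obtain ⟨j, rfl⟩ := F'.tight x hx h1
  refine ⟨?_, ?_⟩
  · by_cases hj : j = i
    · rw [hj]
    · rw [hb j hj, F.one] at h0
      norm_num at h0
  · rw [hu, h0] at h1; linarith

include hV in
lemma level_zero_unique (F : Fac V) (i : Fin d) {x y : Fin d → ℝ} (hx : x ∈ V) (hy : y ∈ V)
    (hx0 : F.u x = 0) (hy0 : F.u y = 0) (hxn : F.c i x < 0) (hyn : F.c i y < 0) : x = y := by
  obtain ⟨F', t, ht, hu, hb⟩ := hV.nbr F i
  rw [(hV.nbr_vertex F F' i t ht hu hb hx hx0 hxn).1,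
    (hV.nbr_vertex F F' i t ht hu hb hy hy0 hyn).1]

include hV in
lemma exists_neg (F : Fac V) {x : Fin d → ℝ} (hx : x ∈ V) (h0 : F.u x ≤ 0) :
    ∃ i, F.c i x < 0 := by
  by_contra! hcon
  rw [F.u_eq] at h0
  have h0' := le_antisymm h0 (Finset.sum_nonneg fun i _ => hcon i)
  refine hV.ne_zero hx (F.ext fun i => ?_)
  rw [map_zero]
  exact (Finset.sum_eq_zero_iff_of_nonneg (fun i _ => hcon i)).1 h0' i (Finset.mem_univ i)

include hV in
/-- A lattice point in the facet is one of its vertices. -/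
lemma eq_vertex_of_nonneg (F : Fac V) {x : Fin d → ℝ} (hx : IsLatticePt x) (h1 : F.u x = 1)
    (hnn : ∀ i, 0 ≤ F.c i x) : ∃ k, x = F.b k := by
  have hxV : x ∈ V := by
    refine (hV.hull x hx fun G => ?_).resolve_left ?_
    · rw [← F.sum_c x, map_sum]
      calc ∑ i, G.u (F.c i x • F.b i) ≤ ∑ i, F.c i x := by
            refine Finset.sum_le_sum fun i _ => ?_
            rw [map_smul, smul_eq_mul]
            exact mul_le_of_le_one_right (hnn i) (G.le _ (F.mem i))
        _ = 1 := by rw [← F.u_eq, h1]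
        _ ≤ 1 := le_refl 1
    · rintro rfl
      simp at h1
  exact F.tight x hxV h1

include hV in
/-- A vertex `x` at level `0` with a single negative coordinate, the `i`-th, is a difference of two
vertices of the facet: `x + F.b i` is a lattice point at level `1` with nonnegative coordinates.
The functional of the facet across the ridge opposite to `F.b i` is then `F.u - F.c i`, so that
`F.c i` is integral on the lattice. -/
lemma level_zero_form (F : Fac V) (i : Fin d) {x : Fin d → ℝ} (hx : x ∈ V) (h0 : F.u x = 0)
    (hneg : F.c i x < 0) (hnn : ∀ j, j ≠ i → 0 ≤ F.c j x) :
    (∃ k, k ≠ i ∧ x = F.b k - F.b i) ∧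
    ∃ F' : Fac V, (∀ y, F'.u y = F.u y - F.c i y) ∧ F'.b i = x ∧ ∀ j, j ≠ i → F'.b j = F.b j := by
  obtain ⟨F', t, ht, hu, hb⟩ := hV.nbr F i
  obtain ⟨hxb, hc⟩ := hV.nbr_vertex F F' i t ht hu hb hx h0 hneg
  have htr : (1 : ℝ) ≤ t := by exact_mod_cast ht
  have hform : ∃ k, k ≠ i ∧ x = F.b k - F.b i := by
    obtain ⟨k, hk⟩ := hV.eq_vertex_of_nonneg F
      (latt_add (hV.latt x hx) (hV.latt _ (F.mem i))) (by rw [map_add, h0, F.one]; norm_num)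
      (fun j => by
        rw [map_add, F.c_b]
        split_ifs with h
        · subst h
          nlinarith
        · linarith [hnn j (Ne.symm h)])
    have hxk : x = F.b k - F.b i := eq_sub_of_add_eq hk
    refine ⟨k, ?_, hxk⟩
    rintro rfl
    rw [hxk] at hneg
    simp at hneg
  refine ⟨hform, F', fun y => ?_, hxb.symm, hb⟩
  obtain ⟨k, hk, rfl⟩ := hform
  rw [map_sub, F.c_self, F.c_ne hk] at hc
  have ht1 : (t : ℝ) = 1 := by linarith
  rw [hu, ht1, one_mul]; rfl

/-- The vertices at level `0` of a facet. -/
noncomputable def lvl0 (F : Fac V) : Finset (Fin d → ℝ) := V.filter fun x => F.u x = 0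

/-- The indices at which `x` has a negative coordinate. -/
noncomputable def negs (F : Fac V) (x : Fin d → ℝ) : Finset (Fin d) :=
  Finset.univ.filter fun i => F.c i x < 0

lemma mem_lvl0 (F : Fac V) {x : Fin d → ℝ} : x ∈ lvl0 F ↔ x ∈ V ∧ F.u x = 0 := by
  simp [lvl0]

include hV in
/-- The bound `d` comes from the sets of negative coordinates of the vertices at level `0` being
pairwise disjoint. -/
lemma sum_negs_le (F : Fac V) : ∑ x ∈ lvl0 F, (negs F x).card ≤ d := by
  classical
  rw [← Finset.card_biUnion]
  · exact (Finset.card_le_univ _).trans (by simp)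
  · intro x hx y hy hxy
    rw [Function.onFun, Finset.disjoint_left]
    intro i hi hi'
    simp only [negs, Finset.mem_filter, Finset.mem_univ, true_and] at hi hi'
    have hx := (mem_lvl0 F).1 hx
    have hy := (mem_lvl0 F).1 hy
    exact hxy (hV.level_zero_unique F i hx.1 hy.1 hx.2 hy.2 hi hi')

include hV in
lemma one_le_card_negs (F : Fac V) {x : Fin d → ℝ} (hx : x ∈ lvl0 F) :
    1 ≤ (negs F x).card := by
  have hx := (mem_lvl0 F).1 hx
  obtain ⟨i, hi⟩ := hV.exists_neg F hx.1 hx.2.le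
  exact Finset.card_pos.2 ⟨i, by simpa [negs] using hi⟩

include hV in
lemma card_lvl0_le (F : Fac V) : (lvl0 F).card ≤ d := by
  refine le_trans ?_ (hV.sum_negs_le F)
  simpa using Finset.card_nsmul_le_sum (lvl0 F) (fun x => (negs F x).card) 1
    fun x hx => hV.one_le_card_negs F hx

include hV in
/-- The excess of negative coordinates of two distinct vertices at level `0` is bounded by the
number of missing vertices at that level. -/
lemma card_negs_add_le (F : Fac V) {x y : Fin d → ℝ} (hx : x ∈ lvl0 F) (hy : y ∈ lvl0 F)
    (hxy : x ≠ y) : (negs F x).card + (negs F y).card + (lvl0 F).card ≤ d + 2 := by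
  classical
  have h1 := hV.sum_negs_le F
  rw [← Finset.add_sum_erase _ _ hx,
    ← Finset.add_sum_erase _ _ (Finset.mem_erase.2 ⟨hxy.symm, hy⟩)] at h1
  have h2 := Finset.card_nsmul_le_sum (((lvl0 F).erase x).erase y) (fun x => (negs F x).card) 1
    fun z hz => hV.one_le_card_negs F (Finset.mem_of_mem_erase (Finset.mem_of_mem_erase hz))
  rw [Finset.card_erase_of_mem (Finset.mem_erase.2 ⟨hxy.symm, hy⟩),
    Finset.card_erase_of_mem hx] at h2
  simp only [smul_eq_mul, mul_one] at h2
  omega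

include hV in
lemma card_negs_le (F : Fac V) {x : Fin d → ℝ} (hx : x ∈ lvl0 F) :
    (negs F x).card + (lvl0 F).card ≤ d + 1 := by
  classical
  have h1 := hV.sum_negs_le F
  rw [← Finset.add_sum_erase _ _ hx] at h1
  have h2 := Finset.card_nsmul_le_sum ((lvl0 F).erase x) (fun x => (negs F x).card) 1
    fun z hz => hV.one_le_card_negs F (Finset.mem_of_mem_erase hz)
  rw [Finset.card_erase_of_mem hx] at h2
  simp only [smul_eq_mul, mul_one] at h2
  omega

lemma nonneg_of_card_negs (F : Fac V) {x : Fin d → ℝ} {i : Fin d} (hc : (negs F x).card ≤ 1)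
    (hi : F.c i x < 0) (j : Fin d) (hj : j ≠ i) : 0 ≤ F.c j x := by
  by_contra! hcon
  exact hj (Finset.card_le_one.1 hc j (by simpa [negs] using hcon) i (by simpa [negs] using hi))

/-- The combinatorial pattern at level `0` when there are `d` vertices there: for each vertex
`b i` of the facet there is exactly one vertex of the polytope of the form `b (φ i) - b i`, and
there are no further vertices at level `0`. -/
structure Full (F : Fac V) (φ : Fin d → Fin d) : Prop where
  ne : ∀ i, φ i ≠ i
  mem : ∀ i, F.b (φ i) - F.b i ∈ V
  eq : ∀ x ∈ V, F.u x = 0 → ∃ i, x = F.b (φ i) - F.b i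
  uniq : ∀ i k, k ≠ i → F.b k - F.b i ∈ V → k = φ i

/-- `G` is the facet adjacent to `F` across the ridge opposite to `F.b i`, and its new vertex is
`F.b (φ i) - F.b i`. -/
structure Flip (F : Fac V) (φ : Fin d → Fin d) (i : Fin d) (G : Fac V) : Prop where
  u : ∀ y, G.u y = F.u y - F.c i y
  new : G.b i = F.b (φ i) - F.b i
  old : ∀ j, j ≠ i → G.b j = F.b j

include hV in
/-- With `d` vertices at level `0`, their sets of negative coordinates partition the `d` indices into
singletons, so each of these vertices is a difference of two vertices of the facet. -/
lemma exists_full (F : Fac V) (hcard : (lvl0 F).card = d) :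
    ∃ φ, Full F φ ∧ ∀ i, ∃ G, Flip F φ i G := by
  classical
  have hneg1 : ∀ x ∈ lvl0 F, (negs F x).card ≤ 1 := fun x hx => by
    have := hV.card_negs_le F hx
    omega
  -- By counting, each index is the negative one of some vertex at level zero.
  have hcover : ∀ i, ∃ x ∈ lvl0 F, F.c i x < 0 := by
    have hsum : ((lvl0 F).biUnion (negs F)).card = d := by
      rw [Finset.card_biUnion]
      · rw [Finset.sum_congr rfl fun x hx =>
          le_antisymm (hneg1 x hx) (hV.one_le_card_negs F hx)]
        simp [hcard]
      · intro x hx y hy hxy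
        rw [Function.onFun, Finset.disjoint_left]
        intro i hi hi'
        simp only [negs, Finset.mem_filter, Finset.mem_univ, true_and] at hi hi'
        have hx := (mem_lvl0 F).1 hx
        have hy := (mem_lvl0 F).1 hy
        exact hxy (hV.level_zero_unique F i hx.1 hy.1 hx.2 hy.2 hi hi')
    intro i
    have huniv := (Finset.card_eq_iff_eq_univ _).1 (hsum.trans (Fintype.card_fin d).symm)
    have hi := Finset.mem_univ i
    rw [← huniv, Finset.mem_biUnion] at hi
    obtain ⟨x, hx, hxi⟩ := hi
    exact ⟨x, hx, by simpa [negs] using hxi⟩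
  have hform : ∀ i, ∃ k, k ≠ i ∧ F.b k - F.b i ∈ V ∧
      ∃ G : Fac V, (∀ y, G.u y = F.u y - F.c i y) ∧ G.b i = F.b k - F.b i ∧
        ∀ j, j ≠ i → G.b j = F.b j := by
    intro i
    obtain ⟨x, hx, hxi⟩ := hcover i
    have hx' := (mem_lvl0 F).1 hx
    obtain ⟨⟨k, hk, rfl⟩, G, hG⟩ := hV.level_zero_form F i hx'.1 hx'.2 hxi
      (nonneg_of_card_negs F (hneg1 x hx) hxi)
    exact ⟨k, hk, hx'.1, G, hG⟩
  choose φ hφ using hform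
  have huniq : ∀ i x, x ∈ V → F.u x = 0 → F.c i x < 0 → x = F.b (φ i) - F.b i := by
    intro i x hx h0 hn
    refine hV.level_zero_unique F i hx (hφ i).2.1 h0 ?_ hn ?_
    · simp [F.one]
    · simp [F.c_self, F.c_ne (hφ i).1]
  refine ⟨φ, ⟨fun i => (hφ i).1, fun i => (hφ i).2.1, fun x hx h0 => ?_, fun i k hk hm => ?_⟩,
    fun i => ?_⟩
  · obtain ⟨i, hi⟩ := hV.exists_neg F hx h0.le
    exact ⟨i, huniq i x hx h0 hi⟩
  · have := huniq i _ hm (by simp [F.one]) (by simp [F.c_self, F.c_ne hk])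
    exact F.b_inj (sub_left_injective this)
  · obtain ⟨G, h1, h2, h3⟩ := (hφ i).2.2
    exact ⟨G, h1, h2, h3⟩

/-- The `i`-th coordinate functional is integral on the lattice, being the difference of the
functionals of two adjacent facets. -/
lemma c_int (F : Fac V) {φ : Fin d → Fin d} {i : Fin d} {G : Fac V} (hG : Flip F φ i G)
    {x : Fin d → ℝ} (hx : IsLatticePt x) : ∃ z : ℤ, F.c i x = z := by
  obtain ⟨a, ha⟩ := F.int x hx
  obtain ⟨b, hb⟩ := G.int x hx
  refine ⟨a - b, ?_⟩
  have := hG.u x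
  push_cast
  linarith

/-! ### Counting vertices by level -/

/-- Splitting a sum over the vertices into the levels `1`, `0` and the negative levels. -/
lemma sum_split (F : Fac V) (hlatt : ∀ x ∈ V, IsLatticePt x) (f : (Fin d → ℝ) → ℝ) :
    ∑ x ∈ V, f x = ∑ i, f (F.b i) + ∑ x ∈ lvl0 F, f x +
      ∑ x ∈ V.filter (fun x => F.u x < 0), f x := by
  classical
  have hN : V.filter (fun x => F.u x < 0) =
      (V.filter (fun x => ¬ F.u x = 1)).filter (fun x => ¬ F.u x = 0) := by
    ext x
    simp only [Finset.mem_filter]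
    constructor
    · rintro ⟨h1, h2⟩
      exact ⟨⟨h1, by linarith⟩, by linarith⟩
    · rintro ⟨⟨h1, h2⟩, h3⟩
      exact ⟨h1, lt_of_le_of_ne (F.u_le_zero (hlatt x h1) (lt_of_le_of_ne (F.le x h1) h2)) h3⟩
  have hZ : lvl0 F = (V.filter (fun x => ¬ F.u x = 1)).filter (fun x => F.u x = 0) := by
    ext x
    simp only [lvl0, Finset.mem_filter]
    constructor
    · rintro ⟨h1, h2⟩
      exact ⟨⟨h1, by rw [h2]; norm_num⟩, h2⟩
    · rintro ⟨⟨h1, h2⟩, h3⟩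
      exact ⟨h1, h3⟩
  have hO : V.filter (fun x => F.u x = 1) = Finset.univ.image F.b := by
    ext x
    simp only [Finset.mem_filter, Finset.mem_image, Finset.mem_univ, true_and]
    constructor
    · rintro ⟨h1, h2⟩
      obtain ⟨i, rfl⟩ := F.tight x h1 h2
      exact ⟨i, rfl⟩
    · rintro ⟨i, rfl⟩
      exact ⟨F.mem i, F.one i⟩
  rw [hN, hZ, add_assoc, Finset.sum_filter_add_sum_filter_not,
    ← Finset.sum_filter_add_sum_filter_not V (fun x => F.u x = 1) f, hO,
    Finset.sum_image fun i _ j _ h => F.b.injective h]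

lemma card_levels (F : Fac V) (hlatt : ∀ x ∈ V, IsLatticePt x) :
    V.card = d + (lvl0 F).card + (V.filter (fun x => F.u x < 0)).card := by
  have := sum_split F hlatt fun _ => 1
  simp only [Finset.sum_const, Finset.card_univ, Fintype.card_fin, nsmul_eq_mul, mul_one] at this
  exact_mod_cast this

/-- The vertices at the negative levels have little room below level `-1`, since the facet contains
`d` vertices, level `0` at most `d`, and there are only `d - 1` others to compensate for the
vertices of the facet in the vertex sum. -/
lemma sum_levels (F : Fac V) (hlatt : ∀ x ∈ V, IsLatticePt x)
    (hcard : (V.card : ℤ) = 3 * d - 1) :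
    (∀ x ∈ V.filter (fun x => F.u x < 0), 0 ≤ -F.u x - 1) ∧
    ∑ x ∈ V.filter (fun x => F.u x < 0), (-F.u x - 1) =
      (lvl0 F).card - d + 1 - F.u (∑ v ∈ V, v) := by
  classical
  refine ⟨fun x hx => ?_, ?_⟩
  · rw [Finset.mem_filter] at hx
    linarith [F.u_le_neg_one (hlatt x hx.1) hx.2]
  have h1 := sum_split F hlatt fun x => -F.u x - 1
  have h3 : ∑ i, (-F.u (F.b i) - 1) = -2 * d := by
    simp only [F.one, Finset.sum_const, Finset.card_univ, Fintype.card_fin, nsmul_eq_mul]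
    ring
  have h4 : ∑ x ∈ lvl0 F, (-F.u x - 1) = -(lvl0 F).card := by
    rw [Finset.sum_congr rfl (g := fun _ => (-1 : ℝ)), Finset.sum_const]
    · simp
    · intro x hx
      rw [((mem_lvl0 F).1 hx).2]; norm_num
  have h5 : ∑ x ∈ V, (-F.u x - 1) = -F.u (∑ v ∈ V, v) - (3 * d - 1) := by
    rw [Finset.sum_sub_distrib, Finset.sum_neg_distrib, map_sum]
    have : (V.card : ℝ) = 3 * d - 1 := by exact_mod_cast hcard
    simp [this]
  linarith

section Count

variable (hcard : (V.card : ℤ) = 3 * d - 1)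

include hV hcard in
/-- The level of the vertex sum is at most `1`. If it is nonnegative, as for a special facet, this
leaves the cases `0` and `1`. -/
lemma u_sum_le (F : Fac V) : F.u (∑ v ∈ V, v) ≤ 1 := by
  obtain ⟨h1, h2⟩ := sum_levels F hV.latt hcard
  have h3 := Finset.sum_nonneg h1
  have : ((lvl0 F).card : ℝ) ≤ d := by exact_mod_cast hV.card_lvl0_le F
  linarith

include hV hcard in
/-- If the vertex sum is at level `1`, all bounds on the levels are attained: there are `d` vertices
at level `0`, and all others off the facet are at level `-1`. -/
lemma count_one (F : Fac V) (hF : F.u (∑ v ∈ V, v) = 1) :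
    (lvl0 F).card = d ∧ ∀ x ∈ V, -1 ≤ F.u x := by
  obtain ⟨h1, h2⟩ := sum_levels F hV.latt hcard
  have h3 := Finset.sum_nonneg h1
  have h4 : ((lvl0 F).card : ℝ) ≤ d := by exact_mod_cast hV.card_lvl0_le F
  refine ⟨?_, fun x hx => ?_⟩
  · have : (d : ℝ) ≤ (lvl0 F).card := by linarith
    exact le_antisymm (by exact_mod_cast h4) (by exact_mod_cast this)
  · by_contra! hcon
    have := Finset.single_le_sum h1 (Finset.mem_filter.2 ⟨hx, by linarith⟩)
    linarith

include hV hcard in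
/-- If the vertex sum vanishes, the vertices have level at least `-2`, and there is at most one
at level `-2`; if there is one, then there are `d` vertices at level `0`, and otherwise `d - 1`. -/
lemma count_zero (F : Fac V) (hF : ∑ v ∈ V, v = 0) :
    (∀ x ∈ V, -2 ≤ F.u x) ∧
    (∀ x ∈ V, ∀ y ∈ V, F.u x = -2 → F.u y = -2 → x = y) ∧
    (∀ x ∈ V, F.u x = -2 → (lvl0 F).card = d) ∧
    ((∀ x ∈ V, -1 ≤ F.u x) → (lvl0 F).card + 1 = d) := by
  classical
  obtain ⟨h1, h2⟩ := sum_levels F hV.latt hcard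
  rw [hF, map_zero] at h2
  have h4 : ((lvl0 F).card : ℝ) ≤ d := by exact_mod_cast hV.card_lvl0_le F
  refine ⟨fun x hx => ?_, fun x hx y hy hxu hyu => ?_, fun x hx hxu => ?_, fun h => ?_⟩
  · by_contra! hcon
    have := Finset.single_le_sum h1 (Finset.mem_filter.2 ⟨hx, by linarith⟩)
    linarith
  · by_contra hxy
    have hxm : x ∈ V.filter (fun x => F.u x < 0) :=
      Finset.mem_filter.2 ⟨hx, by rw [hxu]; norm_num⟩
    have hym : y ∈ V.filter (fun x => F.u x < 0) :=
      Finset.mem_filter.2 ⟨hy, by rw [hyu]; norm_num⟩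
    rw [← Finset.add_sum_erase _ _ hxm] at h2
    have := Finset.single_le_sum (f := fun x => -F.u x - 1)
      (fun z hz => h1 z (Finset.mem_of_mem_erase hz))
      (Finset.mem_erase.2 ⟨Ne.symm hxy, hym⟩)
    simp only [hyu, hxu] at this h2
    linarith
  · have hxm : x ∈ V.filter (fun x => F.u x < 0) :=
      Finset.mem_filter.2 ⟨hx, by rw [hxu]; norm_num⟩
    have := Finset.single_le_sum h1 hxm
    simp only [hxu] at this
    have : (d : ℝ) ≤ (lvl0 F).card := by linarith
    exact le_antisymm (by exact_mod_cast h4) (by exact_mod_cast this)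
  · rw [Finset.sum_eq_zero] at h2
    · have : ((lvl0 F).card : ℝ) + 1 = d := by linarith
      exact_mod_cast this
    · intro x hx
      have hx' := Finset.mem_filter.1 hx
      linarith [F.u_le_neg_one (hV.latt x hx'.1) hx'.2, h x hx'.1]

end Count

/-! ### Nonzero vertex sum -/

/-- The vertex set has the shape of the first polytope, in the basis `F.b`: the involution `τ`
with the single fixed point `p` pairs up the basis vectors, and `o ≠ p` is the index with
`F.b o - F.b p` a vertex. -/
structure ShapeA (F : Fac V) (τ : Fin d → Fin d) (p o : Fin d) : Prop where
  int : ∀ x, IsLatticePt x → ∀ i, ∃ z : ℤ, F.c i x = z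
  inv : ∀ i, τ (τ i) = i
  fix : ∀ i, τ i = i ↔ i = p
  ne : o ≠ p
  verts : ∀ x, x ∈ V ↔ (∃ i, x = F.b i) ∨ (∃ i, i ≠ p ∧ x = -F.b i) ∨
    (∃ i, i ≠ p ∧ x = F.b (τ i) - F.b i) ∨ x = F.b o - F.b p

/-- The vertex set has the shape of the second polytope, in the basis `F.b`: the involution `τ`
with the single fixed point `p` pairs up the basis vectors. -/
structure ShapeB (F : Fac V) (τ : Fin d → Fin d) (p : Fin d) : Prop where
  int : ∀ x, IsLatticePt x → ∀ i, ∃ z : ℤ, F.c i x = z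
  inv : ∀ i, τ (τ i) = i
  fix : ∀ i, τ i = i ↔ i = p
  verts : ∀ x, x ∈ V ↔ (∃ i, x = F.b i) ∨ (∃ i, x = -F.b i) ∨
    (∃ i, i ≠ p ∧ x = F.b (τ i) - F.b i)

/-- A set of odd cardinality has no fixed-point-free involution. -/
lemma no_involution (hd : Odd d) (φ : Fin d → Fin d) (h1 : ∀ i, φ (φ i) = i)
    (h2 : ∀ i, φ i ≠ i) : False := by
  have h := Equiv.Perm.two_dvd_card_support (σ := Function.Involutive.toPerm φ h1) (by
    ext i
    simp only [sq, Equiv.Perm.mul_apply, Equiv.Perm.one_apply]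
    exact congrArg Fin.val (h1 i))
  have hs : (Function.Involutive.toPerm φ h1).support = Finset.univ := by
    ext i
    simp only [Equiv.Perm.mem_support, Finset.mem_univ, iff_true]
    exact h2 i
  rw [hs] at h
  simp only [Finset.card_univ, Fintype.card_fin] at h
  exact (Nat.not_even_iff_odd.2 hd) (even_iff_two_dvd.2 h)

include hV in
/-- A vertex at level `-1` whose `i`-th coordinate is less than `-1` would be a vertex of the
neighbouring facet `G`; but all vertices of `G` are at level `1` or `0` of `F`. -/
lemma neg_one_le_c (F : Fac V) {φ : Fin d → Fin d} {i : Fin d} {G : Fac V}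
    (hG : Flip F φ i G) {x : Fin d → ℝ} (hx : x ∈ V) (hu : F.u x = -1) :
    -1 ≤ F.c i x := by
  by_contra! hcon
  have h1 := hG.u x
  have h2 := G.le x hx
  obtain ⟨z, hz⟩ := c_int F hG (hV.latt x hx)
  have hz1 : z < -1 := by rw [hz] at hcon; exact_mod_cast hcon
  have hz2 : (z : ℝ) ≤ -2 := by exact_mod_cast (by omega : z ≤ -2)
  obtain ⟨j, hj⟩ := G.tight x hx (by linarith)
  by_cases hji : j = i
  · rw [hji, hG.new] at hj
    rw [hj] at hu
    simp [F.one] at hu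
  · rw [hG.old j hji] at hj
    rw [hj, F.one] at hu
    norm_num at hu

include hV in
lemma c_eq_neg_one (F : Fac V) {φ : Fin d → Fin d} {i : Fin d} {G : Fac V}
    (hG : Flip F φ i G) {x : Fin d → ℝ} (hx : x ∈ V) (hu : F.u x = -1) (hneg : F.c i x < 0) :
    F.c i x = -1 := by
  have h1 := hV.neg_one_le_c F hG hx hu
  obtain ⟨z, hz⟩ := c_int F hG (hV.latt x hx)
  rw [hz] at h1 hneg ⊢
  have h1' : -1 ≤ z := by exact_mod_cast h1
  have h2' : z < 0 := by exact_mod_cast hneg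
  have : z = -1 := by omega
  rw [this]; simp

include hV in
/-- The classification when the vertex sum is a vertex `F.b o` of a facet `F`. All facets
containing `F.b o` then have `d`, `d` and `d - 1` vertices at the levels `1`, `0` and `-1`, and
comparing `F` with its neighbours determines the vertices at level `-1`. -/
lemma shapeA (hd : Odd d) (hcard : (V.card : ℤ) = 3 * d - 1) (F : Fac V) (o : Fin d)
    (hsum : ∑ v ∈ V, v = F.b o) : ∃ τ p, ShapeA F τ p o := by
  classical
  obtain ⟨hc, hlv⟩ := hV.count_one hcard F (by rw [hsum, F.one])
  obtain ⟨φ, hφ, hflip⟩ := hV.exists_full F hc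
  have hflip' : ∀ i, i ≠ o → ∃ G ψ, Flip F φ i G ∧ Full G ψ ∧ ∀ x ∈ V, -1 ≤ F.u x - F.c i x := by
    intro i hi
    obtain ⟨G, hG⟩ := hflip i
    obtain ⟨hc', hlv'⟩ := hV.count_one hcard G (by
      rw [hsum, hG.u, F.one, F.c_ne (Ne.symm hi)]; norm_num)
    obtain ⟨ψ, hψ, -⟩ := hV.exists_full G hc'
    exact ⟨G, ψ, hG, hψ, fun x hx => hG.u x ▸ hlv' x hx⟩
  -- A positive coordinate at `i ≠ o` would put `x` at level `-2` of the neighbour at `i`.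
  have h1 : ∀ x ∈ V, F.u x = -1 → ∀ i, i ≠ o → F.c i x ≤ 0 := by
    intro x hx hu i hi
    obtain ⟨_, _, _, _, h⟩ := hflip' i hi
    linarith [h x hx]
  have h2 : ∀ x ∈ V, F.u x = -1 → ∀ i, F.c i x < 0 → F.c i x = -1 := by
    intro x hx hu i hi
    obtain ⟨G, hG⟩ := hflip i
    exact hV.c_eq_neg_one F hG hx hu hi
  -- A level `-1` vertex with negative `i`-th coordinate is at level `0` for the neighbour at `i`.
  have h3 : ∀ x ∈ V, F.u x = -1 → ∀ i, i ≠ o → F.c i x < 0 →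
      ∃ l, l ≠ i ∧ x = F.b (φ i) - F.b i - F.b l ∧ (l = φ i ∨ φ i = o) := by
    intro x hx hu i hi hneg
    have hc1 := h2 x hx hu i hneg
    obtain ⟨G, ψ, hG, hψ, -⟩ := hflip' i hi
    obtain ⟨l, hl⟩ := hψ.eq x hx (by rw [hG.u, hu, hc1]; norm_num)
    have hne := hψ.ne l
    by_cases hli : l = i
    · rw [hli] at hl hne
      rw [hG.new, hG.old _ hne] at hl
      rw [hl] at hc1
      simp [F.c_b, hne, hφ.ne i] at hc1
      norm_num at hc1
    rw [hG.old l hli] at hl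
    have hki : ψ l = i := by
      by_contra hk
      rw [hG.old _ hk] at hl
      rw [hl] at hc1
      simp [F.c_b, hk, hli] at hc1
    rw [hki, hG.new] at hl
    refine ⟨l, hli, hl, ?_⟩
    by_contra! hcon
    have := h1 x hx hu (φ i) hcon.2
    rw [hl] at this
    simp [F.c_b, hcon.1, (hφ.ne i).symm] at this
    norm_num at this
  -- In the basis of the neighbour `G` at `i`, the level `0` vertex of `G` with negative coordinate
  -- at `j = φ⁻¹ i` can only be `G.b i - G.b j = b (φ i) - b i - b j`; this is `-b i` if `φ i = j`,
  -- and the other case contradicts `h3`.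
  have h4 : ∀ i j, i ≠ o → φ j = i → φ i = j ∧ -F.b i ∈ V := by
    intro i j hi hj
    have hji : j ≠ i := fun h => hφ.ne j (hj.trans h.symm)
    obtain ⟨G, ψ, hG, hψ, -⟩ := hflip' i hi
    have hm := hψ.mem j
    rw [hG.old j hji] at hm
    have hmj := hψ.ne j
    by_cases hmi : ψ j = i
    · rw [hmi, hG.new] at hm
      by_cases hij : φ i = j
      · refine ⟨hij, ?_⟩
        rw [hij] at hm
        simpa using hm
      · exfalso
        have hu : F.u (F.b (φ i) - F.b i - F.b j) = -1 := by simp [F.one]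
        have hio : φ i = o := by
          by_contra hcon
          have := h1 _ hm hu (φ i) hcon
          simp [F.c_b, (hφ.ne i).symm, Ne.symm hij] at this
          norm_num at this
        have hjo : j ≠ o := fun h => hij (hio.trans h.symm)
        obtain ⟨l, hl, hx, -⟩ := h3 _ hm hu j hjo (by
          simp [F.c_b, hij, hji.symm])
        have := congrArg (F.c i) hx
        rw [hj] at this
        simp only [map_sub, F.c_b, hφ.ne i, hji, if_false, if_true] at this
        split_ifs at this <;> norm_num at this
    · rw [hG.old _ hmi] at hm
      exact absurd ((hφ.uniq j _ hmj hm).trans hj) hmi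
  -- If `i` is not in the image of `φ`, the neighbour at `i` would have two vertices at level `0`
  -- with the same negative coordinate.
  have h5 : ∀ i, i ≠ o → (∀ j, φ j ≠ i) → ∀ x ∈ V, F.u x = -1 → 0 ≤ F.c i x := by
    intro i hi hj x hx hu
    by_contra! hneg
    obtain ⟨l, hl, hxe, -⟩ := h3 x hx hu i hi hneg
    obtain ⟨G, ψ, hG, hψ, -⟩ := hflip' i hi
    have e1 := hψ.uniq l i hl.symm (by rw [hG.new, hG.old l hl, ← hxe]; exact hx)
    have e2 := hψ.uniq l (φ l) (hφ.ne l) (by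
      rw [hG.old l hl, hG.old _ (hj l)]; exact hφ.mem l)
    exact hj l (e2.trans e1.symm)
  have h6 : ∀ x ∈ V, F.u x = -1 → ∃ i, x = -F.b i ∧ (i = o ∨ ∃ j, φ j = i) := by
    intro x hx hu
    by_cases hex : ∃ i, i ≠ o ∧ F.c i x < 0
    · obtain ⟨i, hi, hneg⟩ := hex
      obtain ⟨l, hl, hxe, hor⟩ := h3 x hx hu i hi hneg
      have hj : ∃ j, φ j = i := by
        by_contra! hcon
        linarith [h5 i hi hcon x hx hu]
      refine ⟨i, ?_, Or.inr hj⟩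
      by_cases hli : l = φ i
      · rw [hxe, hli]; abel
      exfalso
      have hio := hor.resolve_left hli
      have hlo : l ≠ o := fun h => hli (h.trans hio.symm)
      have hnegl : F.c l x < 0 := by
        rw [hxe]
        simp [F.c_b, Ne.symm hli, hl.symm]
      obtain ⟨j, hj⟩ := hj
      have hjo : o = j := hio.symm.trans (h4 i j hi hj).1
      have hj' : ∃ j', φ j' = l := by
        by_contra! hcon
        linarith [h5 l hlo hcon x hx hu]
      obtain ⟨j', hj'⟩ := hj'
      obtain ⟨l', hl', hxe', -⟩ := h3 x hx hu l hlo hnegl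
      have hlo' : φ l = o := by
        by_contra hne
        have e := congrArg (F.c o) (hxe.symm.trans hxe')
        simp only [map_sub, F.c_b, hio, hi, hlo, hne, if_false, if_true] at e
        split_ifs at e <;> norm_num at e
      have := (h4 l j' hlo hj').1
      rw [hlo'] at this
      rw [← this] at hj'
      rw [← hjo] at hj
      exact hl (hj'.symm.trans hj)
    · push Not at hex
      have hz : ∀ i, i ≠ o → F.c i x = 0 := fun i hi =>
        le_antisymm (h1 x hx hu i hi) (hex i hi)
      refine ⟨o, F.ext fun i => ?_, Or.inl rfl⟩
      rw [map_neg]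
      by_cases hi : i = o
      · rw [hi, F.c_self, ← hu, F.u_eq, Finset.sum_eq_single o]
        · intro j _ hj; exact hz j hj
        · simp
      · rw [hz i hi, F.c_ne (Ne.symm hi), neg_zero]
  -- There are `d - 1` vertices at level `-1`, all of the form `-b i`, so exactly one of the vectors
  -- `-b i` fails to be a vertex.
  have hN : V.filter (fun x => F.u x < 0) =
      (Finset.univ.filter fun i => -F.b i ∈ V).image fun i => -F.b i := by
    ext x
    simp only [Finset.mem_filter, Finset.mem_image, Finset.mem_univ, true_and]
    constructor
    · rintro ⟨hx, hu⟩
      have hu1 : F.u x = -1 :=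
        le_antisymm (F.u_le_neg_one (hV.latt x hx) hu) (hlv x hx)
      obtain ⟨i, rfl, -⟩ := h6 x hx hu1
      exact ⟨i, hx, rfl⟩
    · rintro ⟨i, hi, rfl⟩
      exact ⟨hi, by simp [F.one]⟩
  have hcardN := card_levels F hV.latt
  rw [hN, Finset.card_image_of_injective _ fun i j h => F.b_inj (neg_injective h), hc] at hcardN
  have hcompl := Finset.card_filter_add_card_filter_not (s := (Finset.univ : Finset (Fin d)))
    fun i => -F.b i ∈ V
  rw [Finset.card_univ, Fintype.card_fin] at hcompl
  obtain ⟨p, hp⟩ := Finset.card_eq_one.1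
    (by omega : (Finset.univ.filter fun i => ¬ -F.b i ∈ V).card = 1)
  have hpiff : ∀ i, -F.b i ∉ V ↔ i = p := by
    intro i
    have := Finset.ext_iff.1 hp i
    simpa using this
  have himg : ∀ i, i ≠ o → i ≠ p → φ (φ i) = i := by
    intro i hio hip
    have hm : -F.b i ∈ V := by
      by_contra h
      exact hip ((hpiff i).1 h)
    obtain ⟨i', hi', hor⟩ := h6 _ hm (by simp [F.one])
    have hii : i = i' := F.b_inj (neg_injective hi')
    rw [← hii] at hor
    obtain ⟨j, hj⟩ := hor.resolve_left hio
    rw [(h4 i j hio hj).1, hj]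
  have hφo : φ (φ o) = o := (h4 (φ o) o (hφ.ne o) rfl).1
  -- If `o = p`, then `φ` would be a fixed-point-free involution of an odd set.
  have hop : o ≠ p := by
    intro hop
    refine no_involution hd φ (fun i => ?_) hφ.ne
    by_cases hio : i = o
    · rw [hio, hφo]
    · exact himg i hio fun h => hio (h.trans hop.symm)
  have hpimg : ∀ j, φ j ≠ p := fun j hj => (hpiff p).2 rfl (h4 p j hop.symm hj).2
  have hφp : φ p = o := by
    by_contra hne
    exact hpimg _ (h4 (φ p) p hne rfl).1
  have hinv : ∀ i, i ≠ p → φ (φ i) = i := fun i hip => by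
    by_cases hio : i = o
    · rw [hio, hφo]
    · exact himg i hio hip
  refine ⟨fun i => if i = p then p else φ i, p, ?_, fun i => ?_, fun i => ?_, hop, fun x => ?_⟩
  · intro x hx i
    obtain ⟨G, hG⟩ := hflip i
    exact c_int F hG hx
  · by_cases hi : i = p
    · simp [hi]
    · simp [hi, hpimg i, hinv i hi]
  · by_cases hi : i = p
    · simp [hi]
    · simp [hi, hφ.ne i]
  · constructor
    · intro hx
      by_cases hu1 : F.u x = 1
      · exact Or.inl (F.tight x hx hu1)
      by_cases hu0 : F.u x = 0
      · obtain ⟨i, hi⟩ := hφ.eq x hx hu0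
        by_cases hip : i = p
        · rw [hip, hφp] at hi
          exact Or.inr (Or.inr (Or.inr hi))
        · exact Or.inr (Or.inr (Or.inl ⟨i, hip, by simpa [hip] using hi⟩))
      · have hu2 := F.u_le_zero (hV.latt x hx) (lt_of_le_of_ne (F.le x hx) hu1)
        have hu3 : F.u x = -1 :=
          le_antisymm (F.u_le_neg_one (hV.latt x hx) (lt_of_le_of_ne hu2 hu0)) (hlv x hx)
        obtain ⟨i, hi, -⟩ := h6 x hx hu3
        refine Or.inr (Or.inl ⟨i, fun hip => ?_, hi⟩)
        exact (hpiff i).2 hip (hi ▸ hx)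
    · rintro (⟨i, rfl⟩ | ⟨i, hi, rfl⟩ | ⟨i, hi, rfl⟩ | rfl)
      · exact F.mem i
      · by_contra h
        exact hi ((hpiff i).1 h)
      · simpa [hi] using hφ.mem i
      · rw [← hφp]; exact hφ.mem p

/-! ### Vanishing vertex sum -/

/-- Nonpositive integers with sum `-2` are the coordinates of a vector `-e_i - e_j`. -/
lemma exists_decomp (m : Fin d → ℤ) (h0 : ∀ i, m i ≤ 0) (hs : ∑ i, m i = -2) :
    ∃ i j, ∀ k, m k = -(if i = k then 1 else 0) - (if j = k then 1 else 0) := by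
  obtain ⟨i, -, hi⟩ := Finset.exists_lt_of_sum_lt (s := Finset.univ) (f := m) (g := fun _ => 0)
    (by rw [hs]; simp)
  have hs1 : ∑ k, (m k + if i = k then 1 else 0) = -1 := by
    rw [Finset.sum_add_distrib, hs]; simp
  obtain ⟨j, -, hj⟩ := Finset.exists_lt_of_sum_lt (s := Finset.univ)
    (f := fun k => m k + if i = k then 1 else 0) (g := fun _ => 0) (by rw [hs1]; simp)
  have hs2 : ∑ k, (m k + (if i = k then 1 else 0) + if j = k then 1 else 0) = 0 := by
    rw [Finset.sum_add_distrib, hs1]; simp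
  have hle : ∀ k ∈ (Finset.univ : Finset (Fin d)),
      (m k + (if i = k then 1 else 0) + if j = k then 1 else 0) ≤ 0 := by
    intro k _
    have := h0 k
    by_cases h1 : i = k <;> by_cases h2 : j = k
    · subst h1; subst h2; simp at hj ⊢; omega
    · subst h1; simp [h2]; omega
    · subst h2; simp [h1] at hj ⊢; omega
    · simp [h1, h2]; omega
  refine ⟨i, j, fun k => ?_⟩
  have := (Finset.sum_eq_zero_iff_of_nonpos hle).1 hs2 k (Finset.mem_univ k)
  linarith

include hV in
/-- If the vertex sum vanishes, no vertex is at level `-2` of a facet. Such a vertex would be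
`y = -b i - b j` with `i ≠ j`, and it stays at level `-2` for all neighbours of the facet other
than those across the ridges opposite to `b i` and `b j`; together with the vertices
`b (φ i) - b i` and `b (φ j) - b j` this violates convexity or terminality. -/
lemma no_level_neg_two (hcard : (V.card : ℤ) = 3 * d - 1) (hsum : ∑ v ∈ V, v = 0) (F : Fac V)
    {y : Fin d → ℝ} (hy : y ∈ V) (hyu : F.u y = -2) : False := by
  classical
  obtain ⟨-, -, hfull, -⟩ := hV.count_zero hcard F hsum
  obtain ⟨φ, hφ, hflip⟩ := hV.exists_full F (hfull y hy hyu)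
  have hb : ∀ i, IsLatticePt (F.b i) := fun i => hV.latt _ (F.mem i)
  have hb0 : ∀ i, F.b i ≠ 0 := fun i => hV.ne_zero (F.mem i)
  have hnb0 : ∀ i, -F.b i ≠ 0 := fun i => neg_ne_zero.2 (hb0 i)
  obtain ⟨i, j, hij⟩ : ∃ i j, y = -F.b i - F.b j := by
    choose m hm using fun i => c_int F (hflip i).choose_spec (hV.latt y hy)
    obtain ⟨i, j, h⟩ := exists_decomp m (fun i => by
      obtain ⟨G, hG⟩ := hflip i
      have h1 := (hV.count_zero hcard G hsum).1 y hy
      rw [hG.u, hyu, hm] at h1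
      exact_mod_cast (by linarith : (m i : ℝ) ≤ 0)) (by
      rw [F.u_eq] at hyu
      simp only [hm] at hyu
      exact_mod_cast hyu)
    refine ⟨i, j, F.ext fun k => ?_⟩
    rw [hm, h]
    simp [F.c_b]
  have hijne : i ≠ j := by
    rintro rfl
    have := hV.midpoint hy (Or.inl rfl) (latt_neg (hb i)) (hnb0 i) (by rw [hij]; abel)
    exact hV.ne_zero hy this
  have hcy : ∀ l, l ≠ i → l ≠ j → F.c l y = 0 := by
    intro l hi hj
    rw [hij]
    simp [F.c_b, hi.symm, hj.symm]
  -- For `l ≠ i, j` the neighbour at `l` has `y` as its unique vertex at level `-2`.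
  have hpos : ∀ l, l ≠ i → l ≠ j → ∀ x ∈ V, F.u x = -1 → F.c l x = 1 → False := by
    intro l hi hj x hx hxu hxc
    obtain ⟨G, hG⟩ := hflip l
    have := (hV.count_zero hcard G hsum).2.1 x hx y hy
      (by rw [hG.u, hxu, hxc]; norm_num) (by rw [hG.u, hyu, hcy l hi hj]; norm_num)
    rw [this, hyu] at hxu
    norm_num at hxu
  have hki : φ i ≠ i := hφ.ne i
  have hkj : φ i ≠ j := by
    intro h
    have hf := hφ.mem i
    rw [h] at hf
    have := hV.midpoint hf (Or.inr hy) (latt_neg (hb i)) (hnb0 i) (by rw [hij]; abel)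
    have := congrArg F.u this
    rw [hyu] at this
    simp [F.one] at this
  have hmj : φ j ≠ j := hφ.ne j
  have hmi : φ j ≠ i := by
    intro h
    have hf := hφ.mem j
    rw [h] at hf
    have := hV.midpoint hf (Or.inr hy) (latt_neg (hb j)) (hnb0 j) (by rw [hij]; abel)
    have := congrArg F.u this
    rw [hyu] at this
    simp [F.one] at this
  -- The neighbour at `φ i` again has `d` vertices at level `0`, which yields `-b (φ i) ∈ V`.
  have hneg : -F.b (φ i) ∈ V := by
    obtain ⟨G, hG⟩ := hflip (φ i)
    have hGy : G.u y = -2 := by rw [hG.u, hyu, hcy _ hki hkj]; norm_num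
    obtain ⟨ψ, hψ, -⟩ := hV.exists_full G ((hV.count_zero hcard G hsum).2.2.1 y hy hGy)
    have hm := hψ.mem i
    have hne := hψ.ne i
    rw [hG.old i hki.symm] at hm
    by_cases hw : ψ i = φ i
    · rw [hw, hG.new] at hm
      have hu : F.u (F.b (φ (φ i)) - F.b (φ i) - F.b i) = -1 := by simp [F.one]
      by_cases h1 : φ (φ i) = i
      · rw [h1] at hm
        simpa using hm
      by_cases h2 : φ (φ i) = j
      · exfalso
        rw [h2] at hm
        have := hV.centroid hm hy (hφ.mem i) (latt_neg (hb i)) (hnb0 i) (by rw [hij]; abel)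
        have := congrArg (F.c j) this
        simp [F.c_b, hkj, hijne] at this
      · exfalso
        refine hpos _ h1 h2 _ hm hu ?_
        simp [F.c_b, (hφ.ne (φ i)).symm, Ne.symm h1]
    · exfalso
      rw [hG.old _ hw] at hm
      exact hw (hφ.uniq i _ hne hm)
  have hbi : -F.b i ∈ V := by
    have h := hV.add_mem_of_eq (hφ.mem i) hneg hy (F.mem j) (by rw [hij]; abel)
      (fun h => by
        have := congrArg F.u h
        rw [hyu] at this
        simp [F.one] at this)
      (fun h => by
        have := congrArg F.u h
        rw [hyu] at this
        simp [F.one] at this)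
    have he : F.b (φ i) - F.b i + -F.b (φ i) = -F.b i := by abel
    rw [he] at h
    exact h.resolve_left (hnb0 i)
  have hu : F.u (-F.b i + (F.b (φ j) - F.b j)) = -1 := by simp [F.one]
  have h := hV.add_mem_of_eq hbi (hφ.mem j) hy (F.mem (φ j)) (by rw [hij]; abel)
    (fun h => by
      have := congrArg F.u h
      rw [hyu] at this
      simp [F.one] at this)
    (fun h => by
      have := congrArg F.u h
      rw [hyu] at this
      simp [F.one] at this)
  rcases h with h | h
  · rw [h] at hu
    simp at hu
  · exact hpos (φ j) hmi hmj _ h hu (by simp [F.c_b, hmi.symm, hmj.symm])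

include hV in
/-- The classification when the vertex sum vanishes: all vertices are at levels `1`, `0`, `-1` for
every facet, so the polytope is centrally symmetric. -/
lemma shapeB (hcard : (V.card : ℤ) = 3 * d - 1) (hsum : ∑ v ∈ V, v = 0) (F : Fac V) :
    ∃ τ p, ShapeB F τ p := by
  classical
  have hlv : ∀ G : Fac V, ∀ x ∈ V, -1 ≤ G.u x := by
    intro G x hx
    by_contra! hcon
    obtain ⟨z, hz⟩ := G.int x (hV.latt x hx)
    have h2 := (hV.count_zero hcard G hsum).1 x hx
    refine hV.no_level_neg_two hcard hsum G hx (le_antisymm ?_ h2)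
    rw [hz] at hcon ⊢
    have : z < -1 := by exact_mod_cast hcon
    exact_mod_cast (by omega : z ≤ -2)
  have hsymm : ∀ x ∈ V, -x ∈ V := by
    intro x hx
    refine (hV.hull _ (latt_neg (hV.latt x hx)) fun G => ?_).resolve_left
      (neg_ne_zero.2 (hV.ne_zero hx))
    rw [map_neg]
    linarith [hlv G x hx]
  have hc := (hV.count_zero hcard F hsum).2.2.2 (hlv F)
  have hform : ∀ x ∈ lvl0 F, ∃ i k, k ≠ i ∧ x = F.b k - F.b i := by
    intro x hx
    have hx' := (mem_lvl0 F).1 hx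
    have hnx : -x ∈ lvl0 F := (mem_lvl0 F).2 ⟨hsymm x hx'.1, by rw [map_neg, hx'.2, neg_zero]⟩
    have hne : x ≠ -x := fun h => hV.ne_zero hx'.1 (self_eq_neg.1 h)
    have hcn := hV.card_negs_add_le F hx hnx hne
    have key : ∀ z ∈ lvl0 F, (negs F z).card ≤ 1 → ∃ i k, k ≠ i ∧ z = F.b k - F.b i := by
      intro z hz h1
      have hz' := (mem_lvl0 F).1 hz
      obtain ⟨i, hi⟩ := hV.exists_neg F hz'.1 hz'.2.le
      obtain ⟨k, hk⟩ := (hV.level_zero_form F i hz'.1 hz'.2 hi (nonneg_of_card_negs F h1 hi)).1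
      exact ⟨i, k, hk⟩
    by_cases h1 : (negs F x).card ≤ 1
    · exact key x hx h1
    · obtain ⟨i, k, hk, he⟩ := key (-x) hnx (by omega)
      exact ⟨k, i, hk.symm, by rw [← neg_neg x, he]; abel⟩
  have huniq : ∀ i k k', k ≠ i → k' ≠ i → F.b k - F.b i ∈ V → F.b k' - F.b i ∈ V → k = k' := by
    intro i k k' hk hk' h h'
    have := hV.level_zero_unique F i h h' (by simp [F.one]) (by simp [F.one])
      (by simp [F.c_b, hk]) (by simp [F.c_b, hk'])
    exact F.b_inj (sub_left_injective this)
  -- The `d - 1` vertices at level `0` have distinct negative indices, which form the set `D` and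
  -- miss exactly one index `p`. By symmetry `κ` is an involution of `D`.
  let D : Finset (Fin d) := Finset.univ.filter fun i => ∃ k, k ≠ i ∧ F.b k - F.b i ∈ V
  have hD : ∀ i, i ∈ D ↔ ∃ k, k ≠ i ∧ F.b k - F.b i ∈ V := fun i => by simp [D]
  have hκ : ∃ κ : Fin d → Fin d, ∀ i ∈ D, κ i ≠ i ∧ F.b (κ i) - F.b i ∈ V := by
    refine ⟨fun i => if h : ∃ k, k ≠ i ∧ F.b k - F.b i ∈ V then h.choose else i, fun i hi => ?_⟩
    have h := (hD i).1 hi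
    simp only [h, dite_true]
    exact h.choose_spec
  obtain ⟨κ, hκ⟩ := hκ
  have hDcard : D.card = (lvl0 F).card := by
    refine Finset.card_bij (fun i _ => F.b (κ i) - F.b i) (fun i hi => ?_) (fun i hi j hj h => ?_)
      (fun x hx => ?_)
    · exact (mem_lvl0 F).2 ⟨(hκ i hi).2, by simp [F.one]⟩
    · by_contra hne
      have := congrArg (F.c i) h
      simp only [map_sub, F.c_b, (hκ i hi).1, Ne.symm hne, if_false, if_true] at this
      split_ifs at this <;> norm_num at this
    · obtain ⟨i, k, hk, rfl⟩ := hform x hx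
      have hm := ((mem_lvl0 F).1 hx).1
      have hi : i ∈ D := (hD i).2 ⟨k, hk, hm⟩
      exact ⟨i, hi, by rw [huniq i k (κ i) hk (hκ i hi).1 hm (hκ i hi).2]⟩
  have hcompl := Finset.card_compl D
  rw [Fintype.card_fin] at hcompl
  obtain ⟨p, hp⟩ := Finset.card_eq_one.1 (by omega : Dᶜ.card = 1)
  have hpD : ∀ i, i ∈ D ↔ i ≠ p := by
    intro i
    have := Finset.ext_iff.1 hp i
    simp only [Finset.mem_compl, Finset.mem_singleton] at this
    rw [Ne, ← this, not_not]
  have hκD : ∀ i, i ≠ p → κ i ≠ p ∧ κ (κ i) = i := by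
    intro i hi
    have hi' := (hpD i).2 hi
    have hm : F.b i - F.b (κ i) ∈ V := by
      have := hsymm _ (hκ i hi').2
      rwa [neg_sub] at this
    have hkD : κ i ∈ D := (hD _).2 ⟨i, (hκ i hi').1.symm, hm⟩
    exact ⟨(hpD _).1 hkD, huniq (κ i) _ _ (hκ _ hkD).1 (hκ i hi').1.symm (hκ _ hkD).2 hm⟩
  have hcoord : ∀ x, IsLatticePt x → ∀ i, i ≠ p → ∃ z : ℤ, F.c i x = z := by
    intro x hx i hi
    have hi' := (hpD i).2 hi
    obtain ⟨-, G, hG, -⟩ := hV.level_zero_form F i (hκ i hi').2 (by simp [F.one])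
      (by simp [F.c_b, (hκ i hi').1]) (fun j hj => by
        simp only [map_sub, F.c_b, hj.symm, if_false, sub_zero]
        split_ifs <;> norm_num)
    obtain ⟨a, ha⟩ := F.int x hx
    obtain ⟨b, hb⟩ := G.int x hx
    refine ⟨a - b, ?_⟩
    have := hG x
    push_cast
    linarith
  refine ⟨fun i => if i = p then p else κ i, p, fun x hx i => ?_, fun i => ?_, fun i => ?_,
    fun x => ?_⟩
  · by_cases hi : i = p
    · -- The remaining coordinate is integral because `F.u`, the sum of all coordinates, is.
      choose! m hm using hcoord x hx
      obtain ⟨a, ha⟩ := F.int x hx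
      refine ⟨a - ∑ j ∈ Finset.univ.erase p, m j, ?_⟩
      rw [F.u_eq, ← Finset.add_sum_erase _ _ (Finset.mem_univ p)] at ha
      push_cast
      rw [hi, ← ha, ← Finset.sum_congr rfl fun j hj => hm j (Finset.ne_of_mem_erase hj)]
      ring
    · exact hcoord x hx i hi
  · by_cases hi : i = p
    · simp [hi]
    · simp [hi, hκD i hi]
  · by_cases hi : i = p
    · simp [hi]
    · simp [hi, (hκ i ((hpD i).2 hi)).1]
  · constructor
    · intro hx
      by_cases hu1 : F.u x = 1
      · exact Or.inl (F.tight x hx hu1)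
      by_cases hu0 : F.u x = 0
      · obtain ⟨i, k, hk, rfl⟩ := hform x ((mem_lvl0 F).2 ⟨hx, hu0⟩)
        have hi : i ∈ D := (hD i).2 ⟨k, hk, hx⟩
        refine Or.inr (Or.inr ⟨i, (hpD i).1 hi, ?_⟩)
        simp only [(hpD i).1 hi, if_false]
        rw [huniq i k (κ i) hk (hκ i hi).1 hx (hκ i hi).2]
      · have hu2 := F.u_le_zero (hV.latt x hx) (lt_of_le_of_ne (F.le x hx) hu1)
        have hu3 : F.u x = -1 :=
          le_antisymm (F.u_le_neg_one (hV.latt x hx) (lt_of_le_of_ne hu2 hu0)) (hlv F x hx)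
        obtain ⟨i, hi⟩ := F.tight (-x) (hsymm x hx) (by rw [map_neg, hu3, neg_neg])
        exact Or.inr (Or.inl ⟨i, by rw [← hi, neg_neg]⟩)
    · rintro (⟨i, rfl⟩ | ⟨i, rfl⟩ | ⟨i, hi, rfl⟩)
      · exact F.mem i
      · exact hsymm _ (F.mem i)
      · simpa [hi] using (hκ i ((hpD i).2 hi)).2

include hV in
/-- A special facet sees the vertex sum at level `1`, in which case the sum is a vertex, or at level
`0`, in which case it vanishes. -/
lemma classification (hd : Odd d) (hcard : (V.card : ℤ) = 3 * d - 1) :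
    (∃ (F : Fac V) (τ : Fin d → Fin d) (p o : Fin d), ShapeA F τ p o) ∨
    ∃ (F : Fac V) (τ : Fin d → Fin d) (p : Fin d), ShapeB F τ p := by
  obtain ⟨F, hF⟩ := hV.special (∑ v ∈ V, v)
  have hlatt : IsLatticePt (∑ v ∈ V, v) := latt_sum _ _ hV.latt
  have h1 := hV.u_sum_le hcard F
  have h0 : 0 ≤ F.u (∑ v ∈ V, v) := by
    rw [F.u_eq]; exact Finset.sum_nonneg fun i _ => hF i
  by_cases h : F.u (∑ v ∈ V, v) = 1
  · obtain ⟨o, ho⟩ := hV.eq_vertex_of_nonneg F hlatt h hF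
    exact Or.inl ⟨F, by
      obtain ⟨τ, p, hs⟩ := hV.shapeA hd hcard F o ho
      exact ⟨τ, p, o, hs⟩⟩
  · have hz := le_antisymm (F.u_le_zero hlatt (lt_of_le_of_ne h1 h)) h0
    have hsum : ∑ v ∈ V, v = 0 := F.ext fun i => by
      rw [F.u_eq] at hz
      rw [map_zero]
      exact (Finset.sum_eq_zero_iff_of_nonneg fun i _ => hF i).1 hz i (Finset.mem_univ i)
    exact Or.inr ⟨F, hV.shapeB hcard hsum F⟩


end Good

/-! ### Normal form of the pairing and the lattice isomorphism -/

/-- A section `g 0, …, g (n - 1)` of the two-element orbits of an involution of `Fin (2 * n + 1)`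
with a single fixed point, starting at a prescribed element. -/
lemma exists_section {n : ℕ} (hd : d = 2 * n + 1) (τ : Fin d → Fin d) (p a : Fin d)
    (inv : ∀ i, τ (τ i) = i) (fix : ∀ i, τ i = i ↔ i = p) (ha : a ≠ p) :
    ∃ g : ℕ → Fin d, g 0 = a ∧ (∀ k < n, g k ≠ p) ∧
      (∀ k < n, ∀ l < n, g k = g l → k = l) ∧ ∀ k < n, ∀ l < n, g k ≠ τ (g l) := by
  classical
  have hinj : Function.Injective τ := fun x y h => by rw [← inv x, h, inv]
  have hp : τ p = p := (fix p).2 rfl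
  -- From each orbit take the smaller element, except that `a` is taken from its own.
  let S : Finset (Fin d) := Finset.univ.filter fun x => x = a ∨ (x ≠ τ a ∧ x < τ x)
  have hS : ∀ x, x ∈ S ↔ x = a ∨ (x ≠ τ a ∧ x < τ x) := by simp [S]
  have haa : τ a ≠ a := fun h => ha ((fix a).1 h)
  have hSp : ∀ x ∈ S, x ≠ p := by
    rintro x hx rfl
    rcases (hS x).1 hx with h | h
    · exact ha h.symm
    · rw [hp] at h; exact lt_irrefl _ h.2
  have hST : ∀ x ∈ S, ∀ y ∈ S, x ≠ τ y := by
    intro x hx y hy h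
    rcases (hS x).1 hx with rfl | ⟨h1, h2⟩ <;> rcases (hS y).1 hy with rfl | ⟨h3, h4⟩
    · exact haa h.symm
    · exact h3 (by rw [h, inv])
    · exact h1 h
    · rw [h, inv] at h2
      exact lt_asymm h2 h4
  have hcov : ∀ x, x ≠ p → x ∈ S ∨ x ∈ S.image τ := by
    intro x hx
    have hxx : τ x ≠ x := fun h => hx ((fix x).1 h)
    by_cases h1 : x = a
    · exact Or.inl ((hS x).2 (Or.inl h1))
    by_cases h2 : x = τ a
    · exact Or.inr (Finset.mem_image.2 ⟨a, (hS a).2 (Or.inl rfl), h2.symm⟩)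
    rcases lt_or_gt_of_ne hxx with h | h
    · refine Or.inr (Finset.mem_image.2 ⟨τ x, (hS _).2 (Or.inr ⟨fun h' => h1 (hinj h'), ?_⟩),
        inv x⟩)
      rwa [inv]
    · exact Or.inl ((hS x).2 (Or.inr ⟨h2, h⟩))
  have hdisj : Disjoint S (S.image τ) := by
    rw [Finset.disjoint_left]
    intro x hx hx'
    obtain ⟨y, hy, rfl⟩ := Finset.mem_image.1 hx'
    exact hST _ hx y hy rfl
  have hun : S ∪ S.image τ = Finset.univ.erase p := by
    ext x
    simp only [Finset.mem_union, Finset.mem_erase, Finset.mem_univ, and_true]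
    refine ⟨?_, hcov x⟩
    rintro (h | h)
    · exact hSp x h
    · obtain ⟨y, hy, rfl⟩ := Finset.mem_image.1 h
      exact fun h' => hSp y hy (hinj (h'.trans hp.symm))
  have hcard : S.card = n := by
    have h := Finset.card_union_of_disjoint hdisj
    rw [hun, Finset.card_image_of_injective _ hinj, Finset.card_erase_of_mem (Finset.mem_univ p),
      Finset.card_univ, Fintype.card_fin] at h
    omega
  have haS : a ∈ S := (hS a).2 (Or.inl rfl)
  have hn : 0 < n := hcard ▸ Finset.card_pos.2 ⟨a, haS⟩
  let e : Fin n ≃ S := ((Finset.equivFinOfCardEq hcard).symm).setValue ⟨0, hn⟩ ⟨a, haS⟩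
  have he0 : e ⟨0, hn⟩ = ⟨a, haS⟩ := Equiv.setValue_eq _ _ _
  let g : ℕ → Fin d := fun k => if h : k < n then (e ⟨k, h⟩ : Fin d) else p
  have hg : ∀ k (h : k < n), g k = e ⟨k, h⟩ := fun k h => dif_pos h
  refine ⟨g, by rw [hg 0 hn, he0], fun k hk => ?_, fun k hk l hl h => ?_, fun k hk l hl => ?_⟩
  · rw [hg k hk]; exact hSp _ (e _).2
  · rw [hg k hk, hg l hl] at h
    simpa using e.injective (Subtype.ext h)
  · rw [hg k hk, hg l hl]; exact hST _ (e _).2 _ (e _).2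

/-- An enumeration of the basis in which the indices paired by `τ` are consecutive, the first pair
contains `o` and the unpaired index `p` comes last. -/
lemma exists_perm_A (hd : Odd d) (τ : Fin d → Fin d) (p o : Fin d)
    (inv : ∀ i, τ (τ i) = i) (fix : ∀ i, τ i = i ↔ i = p) (ho : o ≠ p) :
    ∃ σ : Equiv.Perm (Fin d), (∀ i : Fin d, (i : ℕ) + 1 = d → σ i = p) ∧
      (∀ i : Fin d, (i : ℕ) = 0 → σ i = o) ∧
      ∀ i j : Fin d, (i : ℕ) % 2 = 0 → (j : ℕ) = i + 1 → (j : ℕ) + 1 < d → σ j = τ (σ i) := by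
  obtain ⟨n, hn⟩ := hd
  obtain ⟨g, g0, gp, ginj, gτ⟩ := exists_section hn τ p o inv fix ho
  have hinj : Function.Injective τ := fun x y h => by rw [← inv x, h, inv]
  have hp : τ p = p := (fix p).2 rfl
  have hτp : ∀ k < n, τ (g k) ≠ p := fun k hk h => gp k hk (hinj (h.trans hp.symm))
  let h : Fin d → Fin d := fun i =>
    if (i : ℕ) + 1 = d then p else if (i : ℕ) % 2 = 0 then g (i / 2) else τ (g (i / 2))
  have hh : Function.Injective h := by
    intro i j hij
    have hi := i.2
    have hj := j.2
    ext
    simp only [h] at hij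
    split_ifs at hij with h1 h2 h3 h4 h5 h6 h7 h8
    · omega
    · exact absurd hij.symm (gp _ (by omega))
    · exact absurd hij.symm (hτp _ (by omega))
    · exact absurd hij (gp _ (by omega))
    · have := ginj _ (by omega) _ (by omega) hij
      omega
    · exact absurd hij (gτ _ (by omega) _ (by omega))
    · exact absurd hij (hτp _ (by omega))
    · exact absurd hij.symm (gτ _ (by omega) _ (by omega))
    · have := ginj _ (by omega) _ (by omega) (hinj hij)
      omega
  have hd1 : d ≠ 1 := by
    rintro rfl
    exact ho (Subsingleton.elim _ _)
  refine ⟨Equiv.ofBijective h (Finite.injective_iff_bijective.1 hh), fun i hi => ?_,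
    fun i hi => ?_, fun i j hi hj hj' => ?_⟩
  · simp [h, hi]
  · have : (i : ℕ) + 1 ≠ d := by omega
    simp only [Equiv.ofBijective_apply, h, this, if_false]
    simp [hi, g0]
  · have h1 : (i : ℕ) + 1 ≠ d := by omega
    have h2 : (j : ℕ) + 1 ≠ d := by omega
    have h3 : (j : ℕ) % 2 ≠ 0 := by omega
    have h4 : (j : ℕ) / 2 = i / 2 := by omega
    simp only [Equiv.ofBijective_apply, h, h1, h2, h3, hi, h4, if_false, if_true]

/-- An enumeration of the basis in which the indices paired by `τ` are consecutive and the unpaired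
index `p` comes first. -/
lemma exists_perm_B (hd : Odd d) (τ : Fin d → Fin d) (p : Fin d)
    (inv : ∀ i, τ (τ i) = i) (fix : ∀ i, τ i = i ↔ i = p) :
    ∃ σ : Equiv.Perm (Fin d), (∀ i : Fin d, (i : ℕ) = 0 → σ i = p) ∧
      ∀ i j : Fin d, (i : ℕ) % 2 = 1 → (j : ℕ) = i + 1 → σ j = τ (σ i) := by
  obtain ⟨n, hn⟩ := hd
  obtain ⟨g, gp, ginj, gτ⟩ : ∃ g : ℕ → Fin d, (∀ k < n, g k ≠ p) ∧
      (∀ k < n, ∀ l < n, g k = g l → k = l) ∧ ∀ k < n, ∀ l < n, g k ≠ τ (g l) := by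
    rcases Nat.eq_zero_or_pos n with rfl | hn0
    · exact ⟨fun _ => p, by simp, by simp, by simp⟩
    · have : Nontrivial (Fin d) := Fin.nontrivial_iff_two_le.2 (by omega)
      obtain ⟨a, ha⟩ := exists_ne p
      obtain ⟨g, -, h⟩ := exists_section hn τ p a inv fix ha
      exact ⟨g, h⟩
  have hinj : Function.Injective τ := fun x y h => by rw [← inv x, h, inv]
  have hp : τ p = p := (fix p).2 rfl
  have hτp : ∀ k < n, τ (g k) ≠ p := fun k hk h => gp k hk (hinj (h.trans hp.symm))
  let h : Fin d → Fin d := fun i =>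
    if (i : ℕ) = 0 then p else if (i : ℕ) % 2 = 1 then g ((i - 1) / 2) else τ (g ((i - 1) / 2))
  have hh : Function.Injective h := by
    intro i j hij
    have hi := i.2
    have hj := j.2
    ext
    simp only [h] at hij
    split_ifs at hij with h1 h2 h3 h4 h5 h6 h7 h8
    · omega
    · exact absurd hij.symm (gp _ (by omega))
    · exact absurd hij.symm (hτp _ (by omega))
    · exact absurd hij (gp _ (by omega))
    · have := ginj _ (by omega) _ (by omega) hij
      omega
    · exact absurd hij (gτ _ (by omega) _ (by omega))
    · exact absurd hij (hτp _ (by omega))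
    · exact absurd hij.symm (gτ _ (by omega) _ (by omega))
    · have := ginj _ (by omega) _ (by omega) (hinj hij)
      omega
  refine ⟨Equiv.ofBijective h (Finite.injective_iff_bijective.1 hh), fun i hi => ?_,
    fun i j hi hj => ?_⟩
  · simp [h, hi]
  · have h1 : (i : ℕ) ≠ 0 := by omega
    have h2 : (j : ℕ) ≠ 0 := by omega
    have h3 : (j : ℕ) % 2 ≠ 1 := by omega
    have h4 : ((j : ℕ) - 1) / 2 = (i - 1) / 2 := by omega
    simp only [Equiv.ofBijective_apply, h, h1, h2, h3, hi, h4, if_false, if_true]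

/-- The lattice isomorphism sending the vertices of a facet, listed in the order given by `σ`, to
the standard basis. -/
lemma exists_iso {V : Finset (Fin d → ℝ)} (F : Fac V) (hlatt : ∀ x ∈ V, IsLatticePt x)
    (int : ∀ x, IsLatticePt x → ∀ i, ∃ z : ℤ, F.c i x = z) (σ : Equiv.Perm (Fin d))
    (T : Set (Fin d → ℝ))
    (hT : ∀ φ : (Fin d → ℝ) ≃ₗ[ℝ] (Fin d → ℝ), (∀ i, φ (F.b (σ i)) = stdVec i) →
      ∀ x, φ x ∈ T ↔ x ∈ V) :
    ∃ φ : (Fin d → ℝ) ≃ₗ[ℝ] (Fin d → ℝ), (∀ x, IsLatticePt (φ x) ↔ IsLatticePt x) ∧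
      φ '' convexHull ℝ (V : Set (Fin d → ℝ)) = convexHull ℝ T := by
  let φ := (F.b.reindex σ.symm).equivFun
  have hφ : ∀ x i, φ x i = F.c (σ i) x := fun x i => by
    simp [φ, Fac.c, Module.Basis.equivFun_apply]
  have hφb : ∀ i, φ (F.b (σ i)) = stdVec i := fun i => by
    ext j
    rw [hφ, F.c_b, stdVec, Pi.single_apply]
    simp [eq_comm]
  refine ⟨φ, fun x => ⟨fun h => ?_, fun h i => ?_⟩, ?_⟩
  · rw [← F.sum_c x]
    refine latt_sum _ _ fun i _ => ?_
    obtain ⟨z, hz⟩ := h (σ.symm i)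
    rw [hφ, Equiv.apply_symm_apply] at hz
    rw [hz]
    exact latt_zsmul z (hlatt _ (F.mem i))
  · rw [hφ]; exact int x h _
  · have h1 : φ '' (V : Set (Fin d → ℝ)) = T := by
      ext y
      obtain ⟨x, rfl⟩ := φ.surjective y
      rw [φ.injective.mem_set_image, hT φ hφb]
      rfl
    rw [← h1]
    exact φ.toLinearMap.image_convexHull _

lemma iso_A {V : Finset (Fin d → ℝ)} (hd : Odd d) (hlatt : ∀ x ∈ V, IsLatticePt x) {F : Fac V}
    {τ : Fin d → Fin d} {p o : Fin d} (hA : Good.ShapeA F τ p o) :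
    ∃ φ : (Fin d → ℝ) ≃ₗ[ℝ] (Fin d → ℝ), (∀ x, IsLatticePt (φ x) ↔ IsLatticePt x) ∧
      φ '' convexHull ℝ (V : Set (Fin d → ℝ)) = convexHull ℝ (oddTargetVertsA d) := by
  obtain ⟨σ, hσp, hσo, hσ⟩ := exists_perm_A hd τ p o hA.inv hA.fix hA.ne
  have hd0 : 0 < d := hd.pos
  have hσp' : ∀ i : Fin d, (i : ℕ) + 1 < d ↔ σ i ≠ p := fun i => by
    have := hσp ⟨d - 1, by omega⟩ (by simp; omega)
    rw [← this, Ne, σ.injective.eq_iff, Fin.ext_iff]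
    have := i.2
    simp only
    omega
  have hp : σ ⟨d - 1, by omega⟩ = p := hσp _ (by simp; omega)
  have ho : σ ⟨0, hd0⟩ = o := hσo _ rfl
  obtain ⟨n, hn⟩ := hd
  refine exists_iso F hlatt hA.int σ _ fun φ hφ x => ?_
  rw [hA.verts]
  simp only [oddTargetVertsA, Set.mem_ofPred_eq, ← hφ, ← map_neg, ← map_sub, φ.injective.eq_iff]
  constructor
  · rintro (⟨i, hi, rfl | rfl⟩ | ⟨i, hi, rfl⟩ | ⟨i, j, hi, hj, hj', rfl | rfl⟩ | ⟨i, j, hi, hj, rfl⟩)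
    · exact Or.inl ⟨_, rfl⟩
    · exact Or.inr (Or.inl ⟨_, (hσp' i).1 hi, rfl⟩)
    · exact Or.inl ⟨_, rfl⟩
    · refine Or.inr (Or.inr (Or.inl ⟨σ j, (hσp' j).1 hj', ?_⟩))
      rw [hσ i j hi hj hj', hA.inv]
    · refine Or.inr (Or.inr (Or.inl ⟨σ i, (hσp' i).1 (by omega), ?_⟩))
      rw [hσ i j hi hj hj']
    · rw [hσo i hi, hσp j hj]
      exact Or.inr (Or.inr (Or.inr rfl))
  · rintro (⟨i, rfl⟩ | ⟨i, hi, rfl⟩ | ⟨i, hi, rfl⟩ | rfl)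
    · obtain ⟨i, rfl⟩ := σ.surjective i
      by_cases h : (i : ℕ) + 1 < d
      · exact Or.inl ⟨i, h, Or.inl rfl⟩
      · exact Or.inr (Or.inl ⟨i, by have := i.2; omega, rfl⟩)
    · obtain ⟨i, rfl⟩ := σ.surjective i
      exact Or.inl ⟨i, (hσp' i).2 hi, Or.inr rfl⟩
    · obtain ⟨i, rfl⟩ := σ.surjective i
      have hi' := (hσp' i).2 hi
      refine Or.inr (Or.inr (Or.inl ?_))
      rcases Nat.mod_two_eq_zero_or_one i with h | h
      · have hj : (i : ℕ) + 1 + 1 < d := by omega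
        exact ⟨i, ⟨i + 1, hi'⟩, h, rfl, hj, Or.inr (by rw [hσ i ⟨i + 1, hi'⟩ h rfl hj])⟩
      · have hj : ((⟨i - 1, by omega⟩ : Fin d) : ℕ) % 2 = 0 := by simp only; omega
        have hj' : (i : ℕ) = ((⟨i - 1, by omega⟩ : Fin d) : ℕ) + 1 := by simp only; omega
        exact ⟨⟨i - 1, by omega⟩, i, hj, hj', hi', Or.inl (by
          rw [hσ _ i hj hj' hi', hA.inv])⟩
    · exact Or.inr (Or.inr (Or.inr ⟨⟨0, hd0⟩, ⟨d - 1, by omega⟩, rfl, by simp only; omega,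
        by rw [hp, ho]⟩))

lemma iso_B {V : Finset (Fin d → ℝ)} (hd : Odd d) (hlatt : ∀ x ∈ V, IsLatticePt x) {F : Fac V}
    {τ : Fin d → Fin d} {p : Fin d} (hB : Good.ShapeB F τ p) :
    ∃ φ : (Fin d → ℝ) ≃ₗ[ℝ] (Fin d → ℝ), (∀ x, IsLatticePt (φ x) ↔ IsLatticePt x) ∧
      φ '' convexHull ℝ (V : Set (Fin d → ℝ)) = convexHull ℝ (oddTargetVertsB d) := by
  obtain ⟨σ, hσp, hσ⟩ := exists_perm_B hd τ p hB.inv hB.fix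
  have hd0 : 0 < d := hd.pos
  have hσp' : ∀ i : Fin d, (i : ℕ) ≠ 0 ↔ σ i ≠ p := fun i => by
    rw [← hσp ⟨0, hd0⟩ rfl, Ne, Ne, σ.injective.eq_iff, Fin.ext_iff]
  obtain ⟨n, hn⟩ := hd
  refine exists_iso F hlatt hB.int σ _ fun φ hφ x => ?_
  rw [hB.verts]
  simp only [oddTargetVertsB, Set.mem_ofPred_eq, ← hφ, ← map_neg, ← map_sub, φ.injective.eq_iff]
  constructor
  · rintro (⟨i, rfl | rfl⟩ | ⟨i, j, hi, hj, rfl | rfl⟩)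
    · exact Or.inl ⟨_, rfl⟩
    · exact Or.inr (Or.inl ⟨_, rfl⟩)
    · refine Or.inr (Or.inr ⟨σ j, (hσp' j).1 (by omega), ?_⟩)
      rw [hσ i j hi hj, hB.inv]
    · refine Or.inr (Or.inr ⟨σ i, (hσp' i).1 (by omega), ?_⟩)
      rw [hσ i j hi hj]
  · rintro (⟨i, rfl⟩ | ⟨i, rfl⟩ | ⟨i, hi, rfl⟩)
    · obtain ⟨i, rfl⟩ := σ.surjective i
      exact Or.inl ⟨i, Or.inl rfl⟩
    · obtain ⟨i, rfl⟩ := σ.surjective i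
      exact Or.inl ⟨i, Or.inr rfl⟩
    · obtain ⟨i, rfl⟩ := σ.surjective i
      have hi' := (hσp' i).2 hi
      have hi2 := i.2
      refine Or.inr ?_
      rcases Nat.mod_two_eq_zero_or_one i with h | h
      · have hj : ((⟨i - 1, by omega⟩ : Fin d) : ℕ) % 2 = 1 := by simp only; omega
        have hj' : (i : ℕ) = ((⟨i - 1, by omega⟩ : Fin d) : ℕ) + 1 := by simp only; omega
        exact ⟨⟨i - 1, by omega⟩, i, hj, hj', Or.inl (by rw [hσ _ i hj hj', hB.inv])⟩
      · have hj : (i : ℕ) + 1 < d := by omega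
        exact ⟨i, ⟨i + 1, hj⟩, h, rfl, Or.inr (by rw [hσ i ⟨i + 1, hj⟩ h rfl])⟩

/-! ### The facets of a polytope -/

namespace Poly

open Filter Topology

/-- The pairing with a fixed dual vector `w`, as a linear functional. -/
noncomputable def pairL (w : Fin d → ℝ) : (Fin d → ℝ) →ₗ[ℝ] ℝ := ∑ i, w i • LinearMap.proj i

lemma pairL_apply (w x : Fin d → ℝ) : pairL w x = pairing w x := by
  simp [pairL, pairing]

lemma pairL_comm (w x : Fin d → ℝ) : pairL w x = pairL x w := by
  simp [pairL, mul_comm]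

lemma exists_pairL (u : (Fin d → ℝ) →ₗ[ℝ] ℝ) : ∃ w, pairL w = u := by
  refine ⟨fun i => u fun j => if i = j then 1 else 0, LinearMap.ext fun x => ?_⟩
  rw [LinearMap.pi_apply_eq_sum_univ u x]
  simp [pairL, mul_comm]

variable {P : Polytope d}

lemma mem_carrier {x : Fin d → ℝ} (hx : x ∈ P.verts) : x ∈ P.carrier :=
  subset_convexHull ℝ _ hx

lemma le_on_carrier (u : (Fin d → ℝ) →ₗ[ℝ] ℝ) {c : ℝ} (h : ∀ x ∈ P.verts, u x ≤ c) :
    ∀ x ∈ P.carrier, u x ≤ c :=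
  fun _ hx => convexHull_min (s := (P.verts : Set (Fin d → ℝ))) (t := {x | u x ≤ c})
    (fun x hx => h x hx) (convex_halfSpace_le u.isLinear c) hx

/-- The polytope contains a symmetric segment in every direction. -/
lemma absorb (h0 : 0 ∈ interior P.carrier) (x : Fin d → ℝ) :
    ∃ ε : ℝ, 0 < ε ∧ ε • x ∈ P.carrier ∧ -(ε • x) ∈ P.carrier := by
  have hc : P.carrier ∈ 𝓝 (0 : Fin d → ℝ) := mem_interior_iff_mem_nhds.1 h0
  have h1 : ∀ᶠ t : ℝ in 𝓝 0, t • x ∈ P.carrier := by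
    have : Tendsto (fun t : ℝ => t • x) (𝓝 0) (𝓝 0) := by
      have : Continuous fun t : ℝ => t • x := by fun_prop
      simpa using this.tendsto 0
    exact this hc
  have h2 : ∀ᶠ t : ℝ in 𝓝 0, -(t • x) ∈ P.carrier := by
    have : Tendsto (fun t : ℝ => -(t • x)) (𝓝 0) (𝓝 0) := by
      have : Continuous fun t : ℝ => -(t • x) := by fun_prop
      simpa using this.tendsto 0
    exact this hc
  have h3 : ∀ᶠ t : ℝ in 𝓝[>] 0, 0 < t := self_mem_nhdsWithin
  obtain ⟨ε, h3, h1, h2⟩ := (h3.and ((h1.and h2).filter_mono nhdsWithin_le_nhds)).exists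
  exact ⟨ε, h3, h1, h2⟩

/-- As the origin is an interior point, a linear functional that is nonpositive on the vertices
vanishes. -/
lemma eq_zero_of_nonpos (h0 : 0 ∈ interior P.carrier) (u : (Fin d → ℝ) →ₗ[ℝ] ℝ)
    (h : ∀ x ∈ P.verts, u x ≤ 0) : u = 0 := by
  refine LinearMap.ext fun x => ?_
  obtain ⟨ε, hε, h1, h2⟩ := absorb h0 x
  have h1 := le_on_carrier u h _ h1
  have h2 := le_on_carrier u h _ h2
  rw [map_neg, map_smul, smul_eq_mul] at h2
  rw [map_smul, smul_eq_mul] at h1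
  have : ε * u x = 0 := by linarith
  simpa [hε.ne'] using this

/-- The origin is an interior point, hence not an extreme point. -/
lemma zero_notMem (hd : 0 < d) (h0 : 0 ∈ interior P.carrier) : (0 : Fin d → ℝ) ∉ P.verts := by
  intro h
  have h1 := (mem_extremePoints.1 (P.vertsExtreme _ h)).2
  obtain ⟨ε, hε, h2, h3⟩ := absorb h0 (fun _ : Fin d => (1 : ℝ))
  have h4 := (h1 _ h2 _ h3 ⟨1 / 2, 1 / 2, by norm_num, by norm_num, by norm_num, by simp⟩).1
  have := congrFun h4 ⟨0, hd⟩
  simp [hε.ne'] at this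

/-- The ratio test: a small step from `u` in a direction `f` that does not increase the value at
the vertices with `u = 1` keeps all vertices at level at most `1`. -/
lemma perturb (V : Finset (Fin d → ℝ)) (u f : (Fin d → ℝ) →ₗ[ℝ] ℝ) (h1 : ∀ x ∈ V, u x ≤ 1)
    (h2 : ∀ x ∈ V, u x = 1 → f x ≤ 0) :
    ∀ᶠ t : ℝ in 𝓝[>] 0, ∀ x ∈ V, u x + t * f x ≤ 1 := by
  rw [Filter.eventually_all_finset]
  intro x hx
  rcases (h1 x hx).eq_or_lt with h | h
  · filter_upwards [self_mem_nhdsWithin] with t ht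
    have := mul_nonpos_of_nonneg_of_nonpos (le_of_lt ht) (h2 x hx h)
    linarith
  · have hc : Tendsto (fun t : ℝ => u x + t * f x) (𝓝 0) (𝓝 (u x)) := by
      have : Continuous fun t : ℝ => u x + t * f x := by fun_prop
      simpa using this.tendsto 0
    filter_upwards [nhdsWithin_le_nhds (hc.eventually_lt_const h)] with t ht using ht.le

/-- A valid inequality `u ≤ 1` that is tight at the members of a basis defines a facet. The facet
is a simplex, so the basis exhausts its vertices, and by reflexivity `u` is integral. -/
lemma exists_fac (hd : 0 < d) (hrefl : P.IsReflexive) (hsimp : P.IsSimplicial)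
    (u : (Fin d → ℝ) →ₗ[ℝ] ℝ) (hle : ∀ x ∈ P.verts, u x ≤ 1)
    (b : Module.Basis (Fin d) ℝ (Fin d → ℝ)) (hb : ∀ i, b i ∈ P.verts) (h1 : ∀ i, u (b i) = 1) :
    ∃ F : Fac P.verts, F.u = u ∧ F.b = b := by
  obtain ⟨w, rfl⟩ := exists_pairL u
  have hw : ∀ x, pairing w x = pairL w x := fun x => (pairL_apply w x).symm
  set u := pairL w with hu
  let S : Set (Fin d → ℝ) := {x ∈ P.carrier | pairing w x = 1}
  have hbS : ∀ i, b i ∈ S := fun i => ⟨mem_carrier (hb i), by rw [hw, h1]⟩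
  have hspan : vectorSpan ℝ S = LinearMap.ker u := by
    apply le_antisymm
    · rw [vectorSpan, Submodule.span_le]
      rintro _ ⟨x, hx, y, hy, rfl⟩
      have hx := hx.2
      have hy := hy.2
      rw [hw] at hx hy
      simp [hx, hy]
    · intro x hx
      have hx : u x = 0 := hx
      have hsum : ∑ i, b.repr x i = 0 := by
        have h := congrArg u (b.sum_repr x)
        rw [map_sum] at h
        simp only [map_smul, h1, smul_eq_mul, mul_one] at h
        rw [h, hx]
      have : x = ∑ i, b.repr x i • (b i -ᵥ b ⟨0, hd⟩) := by
        simp only [vsub_eq_sub, smul_sub, Finset.sum_sub_distrib, ← Finset.sum_smul, hsum,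
          zero_smul, sub_zero, b.sum_repr]
      rw [this]
      exact Submodule.sum_mem _ fun i _ =>
        Submodule.smul_mem _ _ (vsub_mem_vectorSpan ℝ (hbS i) (hbS _))
  have hrank : Module.finrank ℝ (vectorSpan ℝ S) = d - 1 := by
    rw [hspan]
    have h := u.finrank_range_add_finrank_ker
    have hr : LinearMap.range u = ⊤ := LinearMap.range_eq_top.2 fun r =>
      ⟨r • b ⟨0, hd⟩, by simp [h1]⟩
    rw [hr, finrank_top, Module.finrank_self, Module.finrank_fin_fun] at h
    omega
  have hfacet : P.IsFacet S := by
    refine ⟨⟨w, ?_, 1, ?_, rfl⟩, ⟨_, hbS ⟨0, hd⟩⟩, hrank⟩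
    · rintro rfl
      have h := h1 ⟨0, hd⟩
      simp [hu, pairL] at h
    · intro x hx
      rw [hw]
      exact le_on_carrier u hle x hx
  have htight : ∀ x ∈ P.verts, u x = 1 → ∃ i, x = b i := by
    have hsub : Set.range b ⊆ P.vertsOn S := by
      rintro _ ⟨i, rfl⟩
      exact ⟨hb i, hbS i⟩
    have heq := Set.eq_of_subset_of_ncard_le hsub (by
      rw [hsimp S hfacet, Set.ncard_range_of_injective b.injective, Nat.card_fin])
      (P.verts.finite_toSet.subset fun x hx => hx.1)
    intro x hx hux
    have : x ∈ P.vertsOn S := ⟨hx, mem_carrier hx, by rw [hw, hux]⟩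
    rw [← heq] at this
    obtain ⟨i, hi⟩ := this
    exact ⟨i, hi.symm⟩
  obtain ⟨z, hz⟩ := hrefl.2.2 S hfacet
  have huz : u = pairL fun i => (z i : ℝ) := b.ext fun i => by
    rw [h1, pairL_apply, hz _ (hbS i)]
  refine ⟨⟨u, b, hle, hb, htight, h1, fun x hx => ?_⟩, rfl, rfl⟩
  choose y hy using hx
  exact ⟨∑ i, z i * y i, by rw [huz, pairL_apply]; simp [pairing, hy]⟩

/-- The dual polytope, given by the inequalities at the vertices. -/
def dual (P : Polytope d) : Set (Fin d → ℝ) := {w | ∀ x ∈ P.verts, pairL w x ≤ 1}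

lemma isCompact_dual (h0 : 0 ∈ interior P.carrier) : IsCompact (dual P) := by
  choose ε hε h1 h2 using fun i : Fin d => absorb h0 (Pi.single i (1 : ℝ))
  have hcl : IsClosed (dual P) := by
    have : dual P = ⋂ x ∈ P.verts, {w | pairL w x ≤ 1} := by
      ext w; simp [dual]
    rw [this]
    refine isClosed_biInter fun x _ => isClosed_le ?_ continuous_const
    simp only [pairL_comm _ x]
    exact (pairL x).continuous_of_finiteDimensional
  refine (isCompact_univ_pi fun i : Fin d => isCompact_Icc (a := -(ε i)⁻¹)
    (b := (ε i)⁻¹)).of_isClosed_subset hcl fun w hw i _ => ?_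
  have hw1 := le_on_carrier (pairL w) hw _ (h1 i)
  have hw2 := le_on_carrier (pairL w) hw _ (h2 i)
  have hwi : pairL w (Pi.single i 1) = w i := by simp [pairL, Pi.single_apply]
  rw [map_neg, map_smul, hwi, smul_eq_mul] at hw2
  rw [map_smul, hwi, smul_eq_mul] at hw1
  have hi := hε i
  constructor
  · rw [neg_le, ← one_div, le_div_iff₀ hi]; linarith
  · rw [← one_div, le_div_iff₀ hi]; linarith

/-- The vertices at which an extreme point of the dual polytope takes the value `1` span the
space; otherwise the extreme point could be moved in opposite directions. -/
lemma span_tight {w : Fin d → ℝ} (hw : w ∈ Set.extremePoints ℝ (dual P)) :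
    ⊤ ≤ Submodule.span ℝ {x | x ∈ P.verts ∧ pairL w x = 1} := by
  rw [top_le_iff]
  by_contra hne
  obtain ⟨f, hf0, hf⟩ := Submodule.exists_le_ker_of_lt_top _ (lt_top_iff_ne_top.2 hne)
  obtain ⟨v, rfl⟩ := exists_pairL f
  have hf : ∀ x ∈ P.verts, pairL w x = 1 → pairL v x = 0 := fun x hx h =>
    hf (Submodule.subset_span ⟨hx, h⟩)
  obtain ⟨hwd, hext⟩ := mem_extremePoints.1 hw
  have h3 : ∀ᶠ t : ℝ in 𝓝[>] 0, 0 < t := self_mem_nhdsWithin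
  obtain ⟨t, ht, h1, h2⟩ := (h3.and ((perturb P.verts (pairL w) (pairL v) hwd
    fun x hx h => (hf x hx h).le).and (perturb P.verts (pairL w) (-pairL v) hwd
    fun x hx h => by simp [hf x hx h]))).exists
  have hadd : ∀ s x, pairL (w + s • v) x = pairL w x + s * pairL v x := fun s x => by
    rw [pairL_comm, map_add, map_smul, pairL_comm x, pairL_comm x, smul_eq_mul]
  have h := (hext (w + t • v) (fun x hx => by rw [hadd]; exact h1 x hx) (w + (-t) • v)
    (fun x hx => by rw [hadd]; simpa using h2 x hx)
    ⟨1 / 2, 1 / 2, by norm_num, by norm_num, by norm_num, by module⟩).1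
  have hv : v = 0 := by simpa [ht.ne'] using h
  exact hf0 (by rw [hv]; simp [pairL])

/-- The cones over the facets cover the space: a vertex of the dual polytope at which `x` is
maximal gives a facet whose cone contains `x`. -/
lemma exists_special (hd : 0 < d) (hrefl : P.IsReflexive) (hsimp : P.IsSimplicial)
    (x : Fin d → ℝ) : ∃ F : Fac P.verts, ∀ i, 0 ≤ F.b.coord i x := by
  have hK := isCompact_dual hrefl.2.1
  have hcont := (pairL x).continuous_of_finiteDimensional
  obtain ⟨w₀, hw₀, hmax⟩ := hK.exists_isMaxOn ⟨0, fun y _ => by simp [pairL]⟩ hcont.continuousOn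
  let M : Set (Fin d → ℝ) := {w | w ∈ dual P ∧ ∀ y ∈ dual P, pairL x y ≤ pairL x w}
  have hM : IsExposed ℝ (dual P) M := fun _ => ⟨(pairL x).toContinuousLinearMap, rfl⟩
  obtain ⟨w, hwM⟩ := (hM.isCompact hK).extremePoints_nonempty ⟨w₀, hw₀, hmax⟩
  have hw := hM.isExtreme.extremePoints_subset_extremePoints hwM
  have hwmax := hwM.1.2
  have hwd := hwM.1.1
  have hs := span_tight hw
  -- The maximality of `w` in direction `x` forces the coordinates of `x` to be nonnegative: otherwise
  -- `w` could be moved along the negative of that coordinate functional.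
  let b₀ := Module.Basis.ofSpan hs
  have hb₀ : ∀ i, b₀ i ∈ {x | x ∈ P.verts ∧ pairL w x = 1} := fun i =>
    Module.Basis.ofSpan_subset hs ⟨i, rfl⟩
  let b := b₀.reindex (b₀.indexEquiv (Pi.basisFun ℝ (Fin d)))
  have hb : ∀ i, b i ∈ {x | x ∈ P.verts ∧ pairL w x = 1} := fun i => by
    rw [Module.Basis.reindex_apply]
    exact hb₀ _
  obtain ⟨F, hFu, hFb⟩ := exists_fac hd hrefl hsimp (pairL w) hwd b (fun i => (hb i).1)
    fun i => (hb i).2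
  refine ⟨F, fun i => ?_⟩
  by_contra! hneg
  obtain ⟨v, hv⟩ := exists_pairL (-F.c i)
  have h3 : ∀ᶠ t : ℝ in 𝓝[>] 0, 0 < t := self_mem_nhdsWithin
  obtain ⟨t, ht, h1⟩ := (h3.and (perturb P.verts (pairL w) (pairL v) hwd fun y hy h => by
    rw [← hFu] at h
    obtain ⟨j, rfl⟩ := F.tight y hy h
    rw [hv, LinearMap.neg_apply, F.c_b]
    split_ifs <;> norm_num)).exists
  have hadd : ∀ s x, pairL (w + s • v) x = pairL w x + s * pairL v x := fun s x => by
    rw [pairL_comm, map_add, map_smul, pairL_comm x, pairL_comm x, smul_eq_mul]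
  have h := hwmax (w + t • v) fun y hy => by rw [hadd]; exact h1 y hy
  rw [pairL_comm, hadd, pairL_comm x, hv, LinearMap.neg_apply] at h
  have hneg : F.c i x < 0 := hneg
  nlinarith

/-- Crossing a ridge: the neighbouring facet is found by tilting the supporting functional away
from the `i`-th vertex of the facet until it meets a further vertex. -/
lemma exists_nbr (hd : 0 < d) (hrefl : P.IsReflexive) (hsimp : P.IsSimplicial)
    (F : Fac P.verts) (i : Fin d) : ∃ (F' : Fac P.verts) (t : ℤ), 1 ≤ t ∧
      (∀ x, F'.u x = F.u x - t * F.b.coord i x) ∧ ∀ j, j ≠ i → F'.b j = F.b j := by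
  classical
  let S := P.verts.filter fun x => F.c i x < 0
  have hS : S.Nonempty := by
    by_contra hne
    rw [Finset.not_nonempty_iff_eq_empty, Finset.filter_eq_empty_iff] at hne
    have h := eq_zero_of_nonpos hrefl.2.1 (-F.c i) fun x hx => by simpa using hne hx
    have h1 := F.c_self i
    rw [neg_eq_zero.1 h] at h1
    simp at h1
  obtain ⟨x₀, hx₀, hmin⟩ := S.exists_min_image (fun x => (1 - F.u x) / -F.c i x) hS
  obtain ⟨hx₀V, hx₀c⟩ := Finset.mem_filter.1 hx₀
  set t := (1 - F.u x₀) / -F.c i x₀ with ht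
  have ht0 : 0 < t := by
    refine div_pos (sub_pos.2 (lt_of_le_of_ne (F.le _ hx₀V) fun h => ?_)) (neg_pos.2 hx₀c)
    obtain ⟨j, rfl⟩ := F.tight _ hx₀V h
    rw [F.c_b] at hx₀c
    split_ifs at hx₀c <;> linarith
  have hle : ∀ x ∈ P.verts, (F.u - t • F.c i) x ≤ 1 := by
    intro x hx
    simp only [LinearMap.sub_apply, LinearMap.smul_apply, smul_eq_mul]
    by_cases hc : F.c i x < 0
    · have := hmin x (Finset.mem_filter.2 ⟨hx, hc⟩)
      rw [le_div_iff₀ (neg_pos.2 hc)] at this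
      linarith
    · have := mul_nonneg ht0.le (not_lt.1 hc)
      linarith [F.le x hx]
  have : Nonempty (Fin d) := ⟨i⟩
  have hli : LinearIndependent ℝ (Function.update F.b i x₀) := by
    refine F.b.linearIndependent.update i x₀ ⟨1, one_mem _, F.b.repr x₀, ?_, ?_⟩
    · exact mem_nonZeroDivisors_of_ne_zero hx₀c.ne
    · rw [one_smul, F.b.linearCombination_repr]
  let b' := basisOfLinearIndependentOfCardEqFinrank hli (by simp)
  have hb' : ∀ j, b' j = Function.update F.b i x₀ j := fun j => by simp [b']
  have hbi : b' i = x₀ := by simp [hb']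
  have hbj : ∀ j, j ≠ i → b' j = F.b j := fun j hj => by simp [hb', hj]
  obtain ⟨F', hF'u, hF'b⟩ := exists_fac hd hrefl hsimp (F.u - t • F.c i) hle b'
    (fun j => by
      by_cases hj : j = i
      · rw [hj, hbi]; exact hx₀V
      · rw [hbj j hj]; exact F.mem j)
    (fun j => by
      simp only [LinearMap.sub_apply, LinearMap.smul_apply, smul_eq_mul]
      by_cases hj : j = i
      · rw [hj, hbi, ht]
        field_simp [hx₀c.ne]
        ring
      · rw [hbj j hj, F.one, F.c_ne hj]; ring)
  -- The step length `t = 1 - F'.u (F.b i)` is a positive integer as `F'.u` is integral.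
  obtain ⟨z, hz⟩ := F'.int (F.b i) (hrefl.1 _ (F.mem i))
  simp only [hF'u, LinearMap.sub_apply, LinearMap.smul_apply, smul_eq_mul, F.one, F.c_self] at hz
  have htz : t = ((1 - z : ℤ) : ℝ) := by push_cast; linarith
  rw [htz] at ht0
  have ht0 : 0 < 1 - z := by exact_mod_cast ht0
  refine ⟨F', 1 - z, by omega, fun x => ?_, fun j hj => by rw [hF'b, hbj j hj]⟩
  rw [hF'u, ← htz]
  rfl

lemma good (hd : 0 < d) (hrefl : P.IsReflexive) (hsimp : P.IsSimplicial)
    (hterm : P.IsTerminal) : Good P.verts where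
  latt := hrefl.1
  zero := zero_notMem hd hrefl.2.1
  special := exists_special hd hrefl hsimp
  nbr := exists_nbr hd hrefl hsimp
  hull := by
    intro x hx hle
    refine hterm x ?_ hx
    obtain ⟨F, hF⟩ := exists_special hd hrefl hsimp x
    have hF : ∀ i, 0 ≤ F.c i x := hF
    have hconv : Convex ℝ P.carrier := convex_convexHull ℝ _
    have h0 : (0 : Fin d → ℝ) ∈ P.carrier := interior_subset hrefl.2.1
    rcases (F.u_eq x ▸ Finset.sum_nonneg fun i _ => hF i : 0 ≤ F.u x).eq_or_lt with h | h
    · have : x = 0 := F.ext fun i => by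
        rw [map_zero]
        rw [F.u_eq] at h
        exact (Finset.sum_eq_zero_iff_of_nonneg fun i _ => hF i).1 h.symm i (Finset.mem_univ i)
      rwa [this]
    · have hy : ∑ i, (F.c i x / F.u x) • F.b i ∈ P.carrier :=
        hconv.sum_mem (fun i _ => div_nonneg (hF i) h.le)
          (by rw [← Finset.sum_div, ← F.u_eq, div_self h.ne']) fun i _ => mem_carrier (F.mem i)
      have := hconv.smul_mem_of_zero_mem h0 hy ⟨h.le, hle F⟩
      rw [Finset.smul_sum] at this
      simp only [smul_smul, mul_div_cancel₀ _ h.ne', F.sum_c] at this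
      exact this

end Poly

end Facets

end TSR

/-- A terminal simplicial reflexive `d`-polytope with `3d - 1` vertices, `d` odd,
is isomorphic as a lattice polytope either to the convex hull of
`±e_1, …, ±e_{d-1}, e_d, ±(e_1-e_2), …, ±(e_{d-2}-e_{d-1}), e_1-e_d`, or to the
convex hull of `±e_1, …, ±e_d, ±(e_2-e_3), …, ±(e_{d-1}-e_d)`. -/
theorem terminal_simplicial_reflexive_3d_sub_one_odd {d : ℕ} (hd : Odd d)
    (P : Polytope d) (hrefl : P.IsReflexive) (hsimp : P.IsSimplicial)
    (hterm : P.IsTerminal) (hcard : (P.verts.card : ℤ) = 3 * d - 1) :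
    (∃ φ : (Fin d → ℝ) ≃ₗ[ℝ] (Fin d → ℝ),
      (∀ x, IsLatticePt (φ x) ↔ IsLatticePt x) ∧
      φ '' P.carrier = convexHull ℝ (oddTargetVertsA d)) ∨
    (∃ φ : (Fin d → ℝ) ≃ₗ[ℝ] (Fin d → ℝ),
      (∀ x, IsLatticePt (φ x) ↔ IsLatticePt x) ∧
      φ '' P.carrier = convexHull ℝ (oddTargetVertsB d)) := by
  have hV := TSR.Poly.good hd.pos hrefl hsimp hterm
  rcases hV.classification hd hcard with ⟨F, τ, p, o, h⟩ | ⟨F, τ, p, h⟩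
  · exact Or.inl (TSR.iso_A hd hV.latt h)
  · exact Or.inr (TSR.iso_B hd hV.latt h)
end

section
/- Every terminal simplicial reflexive d-polytope with exactly 3d-1 vertices is a smooth Fano polytope, i.e., for every face F of P the set of vertices of F is part of a basis of the lattice N. -/
/-!
Facets are encoded by their functionals `u = u_F`, which are integral by reflexivity, and points
are measured by their level `⟨u, x⟩`, an integer at most `1`.

For a vertex `v` of `F` with dual basis vector `g = u_F^v`, the neighbouring facet has functional
`u - t g` with `t` a positive integer. Hence a vertex of `P` at level `0` with negative
`v`-coordinate is the neighbouring vertex `n(F, v)` (`nbr_zero`); every vertex at level `0` has a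
negative coordinate, so there are at most `d` of them. If such a vertex has only one negative
coordinate, terminality makes it a difference `w - v` of vertices of `F`; then `t = 1` and `g` is
integral (`single_neg`). A facet with at least `d - 1` vertices of `P` at level `0` therefore has
an integral dual basis, so its vertices form a lattice basis (`dual_mem`).

Let `ν` be the sum of all vertices of `P`. Counting levels with `3d - 1` vertices gives
`⟨u_F, ν⟩ ≤ A - d + 1`, where `A ≤ d` is the number of vertices at level `0` (`count`). A facet
whose cone contains `ν` has `⟨u_F, ν⟩ ≥ 0`, hence `⟨u_F, ν⟩ ∈ {0, 1}`.

* If it is `0`, then `ν = 0`, so every facet has `A ≥ d - 1` and is unimodular.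
* If it is `1`, then `ν` is a vertex `p` of `F`, all facets through `p` have `A = d` and no vertex
  below level `-1`, and comparing `F` with its neighbours through `p` shows that every vertex of
  `P` is `±w` or `w - w'` with `w, w'` in the basis `F` (`roots_of_sum_eq`). Linearly independent
  `d`-tuples of such vectors are lattice bases (`gen_of_roots`), so every facet is unimodular.

Faces lie in facets by linear programming over the polar dual (`exists_max`).
-/


open Finset

/-! ### Facet functionals, dual bases and linear programming -/

section Aux

variable {d : ℕ}

/-- The lattice `ℤ^d` inside `ℝ^d`, as a `ℤ`-submodule. -/
def latt (d : ℕ) : Submodule ℤ (Fin d → ℝ) where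
  carrier := {x | IsLatticePt x}
  add_mem' := by
    intro a b ha hb i
    obtain ⟨m, hm⟩ := ha i
    obtain ⟨n, hn⟩ := hb i
    exact ⟨m + n, by simp [hm, hn]⟩
  zero_mem' := fun i => ⟨0, by simp⟩
  smul_mem' := by
    intro c x hx i
    obtain ⟨m, hm⟩ := hx i
    exact ⟨c * m, by simp [hm]⟩

lemma mem_latt {x : Fin d → ℝ} : x ∈ latt d ↔ IsLatticePt x := Iff.rfl

lemma latt_dot {u x : Fin d → ℝ} (hu : u ∈ latt d) (hx : x ∈ latt d) :
    ∃ z : ℤ, u ⬝ᵥ x = z := by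
  choose a ha using mem_latt.1 hu
  choose b hb using mem_latt.1 hx
  exact ⟨∑ i, a i * b i, by simp [dotProduct, ha, hb]⟩

open Classical in
/-- The points of `V` lying on the hyperplane `⟨u, ·⟩ = 1`. -/
noncomputable def tight (V : Finset (Fin d → ℝ)) (u : Fin d → ℝ) : Finset (Fin d → ℝ) :=
  V.filter (fun v => u ⬝ᵥ v = 1)

lemma mem_tight {V : Finset (Fin d → ℝ)} {u v : Fin d → ℝ} :
    v ∈ tight V u ↔ v ∈ V ∧ u ⬝ᵥ v = 1 := by simp [tight]

/-- `u` is the functional `u_F` of a facet `F` of `conv V`: it is at most `1` on `V`, and the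
points of `V` where it equals `1` span the whole space. A facet is encoded by this functional;
its vertex set is `tight V u`. -/
def Fct (V : Finset (Fin d → ℝ)) (u : Fin d → ℝ) : Prop :=
  (∀ v ∈ V, u ⬝ᵥ v ≤ 1) ∧ Submodule.span ℝ (tight V u : Set (Fin d → ℝ)) = ⊤

/-- The combinatorial content of being the vertex set of a terminal simplicial reflexive
polytope, with facets encoded by their functionals `u_F`. The field `bdd` says that the polar
dual is bounded, i.e. that the origin is interior. -/
structure Good (V : Finset (Fin d → ℝ)) : Prop where
  lat : ∀ v ∈ V, v ∈ latt d
  ne0 : ∀ v ∈ V, v ≠ 0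
  bdd : ∃ r : ℝ, ∀ u : Fin d → ℝ, (∀ v ∈ V, u ⬝ᵥ v ≤ 1) → ∀ i, |u i| ≤ r
  int : ∀ u, Fct V u → u ∈ latt d
  card : ∀ u, Fct V u → (tight V u).card = d
  term : ∀ x ∈ convexHull ℝ (V : Set (Fin d → ℝ)), x ∈ latt d → x = 0 ∨ x ∈ V

/-- `g` is the dual basis vector `u_F^v` at the vertex `v` of the facet given by `u`. -/
def IsDual (V : Finset (Fin d → ℝ)) (u v g : Fin d → ℝ) : Prop :=
  g ⬝ᵥ v = 1 ∧ ∀ w ∈ tight V u, w ≠ v → g ⬝ᵥ w = 0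

lemma exists_dot (f : (Fin d → ℝ) →ₗ[ℝ] ℝ) : ∃ z : Fin d → ℝ, ∀ x, f x = z ⬝ᵥ x := by
  refine ⟨fun i => f (fun j => if i = j then 1 else 0), fun x => ?_⟩
  rw [LinearMap.pi_apply_eq_sum_univ f x]
  simp [dotProduct, mul_comm]

lemma exists_perp {S : Set (Fin d → ℝ)} (h : Submodule.span ℝ S ≠ ⊤) :
    ∃ z : Fin d → ℝ, z ≠ 0 ∧ ∀ x ∈ S, z ⬝ᵥ x = 0 := by
  obtain ⟨f, hf, hle⟩ := Submodule.exists_le_ker_of_lt_top _ (lt_top_iff_ne_top.2 h)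
  obtain ⟨z, hz⟩ := exists_dot f
  refine ⟨z, ?_, fun x hx => ?_⟩
  · rintro rfl
    exact hf (LinearMap.ext fun x => by simp [hz])
  · rw [← hz]
    exact hle (Submodule.subset_span hx)

lemma perp_zero {S : Set (Fin d → ℝ)} (h : Submodule.span ℝ S = ⊤) {z : Fin d → ℝ}
    (hz : ∀ x ∈ S, z ⬝ᵥ x = 0) : z = 0 := by
  apply dotProduct_eq
  intro x
  have hx : x ∈ Submodule.span ℝ S := h ▸ Submodule.mem_top
  induction hx using Submodule.span_induction with
  | mem x hx => simp [hz x hx]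
  | zero => simp
  | add x y _ _ h1 h2 => simp_all [dotProduct_add]
  | smul a x _ h1 => simp_all [dotProduct_smul]

lemma eq_of_span {S : Set (Fin d → ℝ)} (h : Submodule.span ℝ S = ⊤) {z z' : Fin d → ℝ}
    (hz : ∀ x ∈ S, z ⬝ᵥ x = z' ⬝ᵥ x) : z = z' := by
  rw [← sub_eq_zero]
  exact perp_zero h fun x hx => by rw [sub_dotProduct, hz x hx, sub_self]

variable {V : Finset (Fin d → ℝ)} {u : Fin d → ℝ}

lemma exists_dual (hV : Good V) (hu : Fct V u) {v : Fin d → ℝ} (hv : v ∈ tight V u) :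
    ∃ g, IsDual V u v g := by
  classical
  have hne : Submodule.span ℝ (((tight V u).erase v : Finset _) : Set (Fin d → ℝ)) ≠ ⊤ := by
    intro h
    have h1 := finrank_span_finset_le_card (R := ℝ) ((tight V u).erase v)
    rw [Set.finrank, h, finrank_top, Module.finrank_fin_fun, card_erase_of_mem hv,
      hV.card u hu] at h1
    have : 0 < (tight V u).card := card_pos.2 ⟨v, hv⟩
    rw [hV.card u hu] at this
    omega
  obtain ⟨z, hz0, hz⟩ := exists_perp hne
  have hzv : z ⬝ᵥ v ≠ 0 := by
    intro h
    refine hz0 (perp_zero hu.2 fun x hx => ?_)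
    by_cases hxv : x = v
    · rw [hxv, h]
    · exact hz x (by simpa [hxv] using hx)
  refine ⟨(z ⬝ᵥ v)⁻¹ • z, ?_, fun w hw hwv => ?_⟩
  · rw [smul_dotProduct, smul_eq_mul, inv_mul_cancel₀ hzv]
  · rw [smul_dotProduct, hz w (by simp [hw, hwv]), smul_zero]

/-- A choice of dual basis for the vertices of the facet given by `u`. -/
def DualB (V : Finset (Fin d → ℝ)) (u : Fin d → ℝ) (g : (Fin d → ℝ) → (Fin d → ℝ)) : Prop :=
  ∀ v ∈ tight V u, IsDual V u v (g v)

lemma exists_dualB (hV : Good V) (hu : Fct V u) : ∃ g, DualB V u g := by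
  have : ∀ v, ∃ g, v ∈ tight V u → IsDual V u v g := fun v => by
    by_cases hv : v ∈ tight V u
    · obtain ⟨g, hg⟩ := exists_dual hV hu hv
      exact ⟨g, fun _ => hg⟩
    · exact ⟨0, fun h => absurd h hv⟩
  choose g hg using this
  exact ⟨g, fun v hv => hg v hv⟩

variable {g : (Fin d → ℝ) → (Fin d → ℝ)}

lemma DualB.apply (hg : DualB V u g) {v w : Fin d → ℝ} (hv : v ∈ tight V u)
    (hw : w ∈ tight V u) [Decidable (w = v)] : g v ⬝ᵥ w = if w = v then 1 else 0 := by
  split_ifs with h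
  · rw [h]; exact (hg v hv).1
  · exact (hg v hv).2 w hw h

lemma expand (hu : Fct V u) (hg : DualB V u g) (x : Fin d → ℝ) :
    x = ∑ v ∈ tight V u, (g v ⬝ᵥ x) • v := by
  classical
  have hx : x ∈ Submodule.span ℝ (tight V u : Set (Fin d → ℝ)) := hu.2 ▸ Submodule.mem_top
  induction hx using Submodule.span_induction with
  | mem x hx =>
    rw [mem_coe] at hx
    have : ∀ v ∈ tight V u, (g v ⬝ᵥ x) • v = if x = v then x else 0 := by
      intro v hv
      rw [hg.apply hv hx]
      split_ifs with h <;> simp [h]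
    rw [sum_congr rfl this]
    simp [hx]
  | zero => simp
  | add x y _ _ h1 h2 =>
    conv_lhs => rw [h1, h2]
    simp [dotProduct_add, add_smul, sum_add_distrib]
  | smul a x _ h1 =>
    conv_lhs => rw [h1]
    simp [dotProduct_smul, smul_sum, smul_smul]

lemma sum_coord (hu : Fct V u) (hg : DualB V u g) (x : Fin d → ℝ) :
    u ⬝ᵥ x = ∑ v ∈ tight V u, g v ⬝ᵥ x := by
  conv_lhs => rw [expand hu hg x]
  rw [dotProduct_sum]
  refine sum_congr rfl fun v hv => ?_
  rw [dotProduct_smul, (mem_tight.1 hv).2, smul_eq_mul, mul_one]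

lemma sum_dual (hu : Fct V u) (hg : DualB V u g) : u = ∑ v ∈ tight V u, g v := by
  apply dotProduct_eq
  intro x
  rw [sum_dotProduct, sum_coord hu hg]

/-- Linear programming over the polar dual: the maximum of `⟨·, w⟩` is attained at a facet
functional, because the face of maximizers has an extreme point, and an extreme point of the
polar dual has a spanning set of tight constraints. -/
lemma exists_max (hV : Good V) (w : Fin d → ℝ) :
    ∃ u, Fct V u ∧ ∀ u' : Fin d → ℝ, (∀ v ∈ V, u' ⬝ᵥ v ≤ 1) → u' ⬝ᵥ w ≤ u ⬝ᵥ w := by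
  set D : Set (Fin d → ℝ) := {u | ∀ v ∈ V, u ⬝ᵥ v ≤ 1} with hD
  have hcl : IsClosed D := by
    have : D = ⋂ v ∈ V, {u | u ⬝ᵥ v ≤ 1} := by ext; simp [hD]
    rw [this]
    exact isClosed_biInter fun v _ => isClosed_le (by fun_prop) continuous_const
  have hcpt : IsCompact D := by
    obtain ⟨r, hr⟩ := hV.bdd
    refine (isCompact_univ_pi fun _ : Fin d => isCompact_Icc (a := -r) (b := r)).of_isClosed_subset
      hcl fun u hu i _ => ?_
    exact abs_le.1 (hr u hu i)
  obtain ⟨m, hm, hmax⟩ := hcpt.exists_isMaxOn (f := fun u => u ⬝ᵥ w)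
    ⟨0, fun v _ => by simp⟩ (by fun_prop)
  have hmax' : ∀ u' ∈ D, u' ⬝ᵥ w ≤ m ⬝ᵥ w := fun u' hu' => hmax hu'
  set S : Set (Fin d → ℝ) := D ∩ {u | u ⬝ᵥ w = m ⬝ᵥ w} with hS
  have hScpt : IsCompact S := hcpt.inter_right (isClosed_eq (by fun_prop) continuous_const)
  obtain ⟨u, hu⟩ := hScpt.extremePoints_nonempty ⟨m, hm, rfl⟩
  have huS := mem_extremePoints.1 hu
  have huw : u ⬝ᵥ w = m ⬝ᵥ w := huS.1.2
  refine ⟨u, ⟨huS.1.1, ?_⟩, fun u' hu' => huw ▸ hmax' u' hu'⟩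
  by_contra hne
  obtain ⟨z, hz0, hz⟩ := exists_perp hne
  have hev : ∀ y : Fin d → ℝ, (∀ x ∈ tight V u, y ⬝ᵥ x = 0) →
      ∀ᶠ ε : ℝ in nhdsWithin 0 (Set.Ioi 0), u + ε • y ∈ D := by
    intro y hy
    refine (Finset.eventually_all V).2 fun v hv => ?_
    by_cases ht : u ⬝ᵥ v = 1
    · refine Filter.Eventually.of_forall fun ε => ?_
      rw [add_dotProduct, smul_dotProduct, hy v (mem_tight.2 ⟨hv, ht⟩), ht]; simp
    · have hlt : u ⬝ᵥ v < 1 := lt_of_le_of_ne (huS.1.1 v hv) ht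
      have hc : Continuous fun ε : ℝ => (u + ε • y) ⬝ᵥ v := by fun_prop
      have := (hc.tendsto 0).eventually_lt_const (u := 1) (by simpa using hlt)
      exact (this.filter_mono nhdsWithin_le_nhds).mono fun _ h => le_of_lt h
  obtain ⟨ε, ⟨h1, h2⟩, hε⟩ := ((hev z fun x hx => hz x hx).and
    (hev (-z) fun x hx => by rw [neg_dotProduct, hz x hx, neg_zero])|>.and
      self_mem_nhdsWithin).exists
  have hε : 0 < ε := hε
  have a1 := hmax' _ h1
  have a2 := hmax' _ h2
  rw [add_dotProduct, smul_dotProduct, huw, smul_eq_mul] at a1 a2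
  rw [neg_dotProduct] at a2
  have hzw : ε * (z ⬝ᵥ w) = 0 := by linarith
  have s1 : u + ε • z ∈ S := ⟨h1, by simp [add_dotProduct, huw, hzw]⟩
  have s2 : u + ε • (-z) ∈ S := ⟨h2, by simp [add_dotProduct, huw, hzw]⟩
  have := (huS.2 _ s1 _ s2 ⟨1/2, 1/2, by norm_num, by norm_num, by norm_num, by module⟩).1
  have h0 : ε • z = 0 := by simpa using this
  rcases smul_eq_zero.1 h0 with h | h
  · exact hε.ne' h
  · exact hz0 h

/-- Existence of a special facet for `w`, i.e. one whose cone contains `w`: by optimality, moving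
from the maximizer towards a neighbouring facet cannot increase `⟨·, w⟩`. -/
lemma exists_special (hV : Good V) (w : Fin d → ℝ) :
    ∃ u, Fct V u ∧ ∀ v ∈ tight V u, ∀ g, IsDual V u v g → 0 ≤ g ⬝ᵥ w := by
  obtain ⟨u, hu, hmax⟩ := exists_max hV w
  refine ⟨u, hu, fun v hv g hg => ?_⟩
  have hev : ∀ᶠ ε : ℝ in nhdsWithin 0 (Set.Ioi 0), ∀ x ∈ V, (u - ε • g) ⬝ᵥ x ≤ 1 := by
    refine (Finset.eventually_all V).2 fun x hx => ?_
    by_cases ht : u ⬝ᵥ x = 1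
    · filter_upwards [self_mem_nhdsWithin] with ε hε
      have hε : 0 < ε := hε
      rw [sub_dotProduct, smul_dotProduct, ht]
      by_cases hxv : x = v
      · rw [hxv, hg.1]; simp [hε.le]
      · rw [hg.2 x (mem_tight.2 ⟨hx, ht⟩) hxv]; simp
    · have hlt : u ⬝ᵥ x < 1 := lt_of_le_of_ne (hu.1 x hx) ht
      have hc : Continuous fun ε : ℝ => (u - ε • g) ⬝ᵥ x := by fun_prop
      have := (hc.tendsto 0).eventually_lt_const (u := 1) (by simpa using hlt)
      exact (this.filter_mono nhdsWithin_le_nhds).mono fun _ h => le_of_lt h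
  obtain ⟨ε, h1, hε⟩ := (hev.and self_mem_nhdsWithin).exists
  have hε : 0 < ε := hε
  have := hmax _ h1
  rw [sub_dotProduct, smul_dotProduct, smul_eq_mul] at this
  have : 0 ≤ ε * (g ⬝ᵥ w) := by linarith
  exact nonneg_of_mul_nonneg_right this hε

/-! ### Neighbouring facets and points at level zero -/

lemma exists_pos (hV : Good V) {z : Fin d → ℝ} (hz : z ≠ 0) : ∃ v ∈ V, 0 < z ⬝ᵥ v := by
  by_contra! h
  obtain ⟨r, hr⟩ := hV.bdd
  obtain ⟨i, hi⟩ := Function.ne_iff.1 hz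
  have hi : 0 < |z i| := abs_pos.2 hi
  have h0 := hr 0 (fun v _ => by simp) i
  have hr0 : 0 ≤ r := by simpa using h0
  have hc : 0 ≤ (r + 1) / |z i| := by positivity
  have := hr (((r + 1) / |z i|) • z) (fun v hv => by
    rw [smul_dotProduct, smul_eq_mul]
    nlinarith [mul_nonneg hc (neg_nonneg.2 (h v hv))]) i
  rw [Pi.smul_apply, smul_eq_mul, abs_mul, abs_of_nonneg hc, div_mul_cancel₀ _ hi.ne'] at this
  linarith

/-- The neighbouring facet `N(F, v)`: moving `u_F` along `-u_F^v` until a further point `v'` of `V`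
becomes tight. The step length `t` is an integer because both functionals are integral. -/
lemma exists_nbr (hV : Good V) (hu : Fct V u) {v g : Fin d → ℝ} (hv : v ∈ tight V u)
    (hg : IsDual V u v g) [DecidableEq (Fin d → ℝ)] :
    ∃ t : ℤ, 1 ≤ t ∧ ∃ v' ∈ V, v' ∉ tight V u ∧ g ⬝ᵥ v' < 0 ∧ Fct V (u - (t : ℝ) • g) ∧
      tight V (u - (t : ℝ) • g) = insert v' ((tight V u).erase v) := by
  have hg0 : -g ≠ 0 := by
    intro h
    have h1 := hg.1
    rw [neg_eq_zero.1 h, zero_dotProduct] at h1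
    exact zero_ne_one h1
  have hne : (V.filter fun x => g ⬝ᵥ x < 0).Nonempty := by
    obtain ⟨x, hx, hpos⟩ := exists_pos hV hg0
    exact ⟨x, by simpa [hx] using hpos⟩
  obtain ⟨v', hv', hmin⟩ := exists_min_image _ (fun x => (1 - u ⬝ᵥ x) / (-(g ⬝ᵥ x))) hne
  rw [mem_filter] at hv'
  obtain ⟨hv'V, hneg⟩ := hv'
  set t := (1 - u ⬝ᵥ v') / (-(g ⬝ᵥ v')) with ht
  have hnt : v' ∉ tight V u := by
    intro h
    by_cases hvv : v' = v
    · rw [hvv, hg.1] at hneg; linarith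
    · rw [hg.2 v' h hvv] at hneg; linarith
  have hlt : u ⬝ᵥ v' < 1 := lt_of_le_of_ne (hu.1 v' hv'V) fun h => hnt (mem_tight.2 ⟨hv'V, h⟩)
  have htpos : 0 < t := div_pos (by linarith) (by linarith)
  have hval : ∀ x, (u - t • g) ⬝ᵥ x = u ⬝ᵥ x - t * (g ⬝ᵥ x) := fun x => by
    rw [sub_dotProduct, smul_dotProduct, smul_eq_mul]
  have hle : ∀ x ∈ V, (u - t • g) ⬝ᵥ x ≤ 1 := by
    intro x hx
    rw [hval]
    by_cases h : g ⬝ᵥ x < 0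
    · have := hmin x (by simp [hx, h])
      rw [le_div_iff₀ (by linarith)] at this
      linarith
    · have := hu.1 x hx
      nlinarith
  have hv't : v' ∈ tight V (u - t • g) := by
    refine mem_tight.2 ⟨hv'V, ?_⟩
    rw [hval]
    have : t * (-(g ⬝ᵥ v')) = 1 - u ⬝ᵥ v' := div_mul_cancel₀ _ (by linarith)
    linarith
  have hsub : ∀ w ∈ tight V u, w ≠ v → w ∈ tight V (u - t • g) := by
    intro w hw hwv
    refine mem_tight.2 ⟨(mem_tight.1 hw).1, ?_⟩
    rw [hval, hg.2 w hw hwv, (mem_tight.1 hw).2]; ring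
  have hF : Fct V (u - t • g) := by
    refine ⟨hle, ?_⟩
    by_contra hspan
    obtain ⟨z, hz0, hz⟩ := exists_perp hspan
    have hzg : z = (z ⬝ᵥ v) • g := by
      refine eq_of_span hu.2 fun x hx => ?_
      rw [smul_dotProduct, smul_eq_mul]
      by_cases hxv : x = v
      · rw [hxv, hg.1, mul_one]
      · rw [hg.2 x hx hxv, hz x (hsub x hx hxv), mul_zero]
    have h1 := hz v' hv't
    rw [hzg, smul_dotProduct, smul_eq_mul] at h1
    rcases mul_eq_zero.1 h1 with h | h
    · rw [h, zero_smul] at hzg; exact hz0 hzg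
    · linarith
  have htight : insert v' ((tight V u).erase v) = tight V (u - t • g) := by
    refine eq_of_subset_of_card_le ?_ ?_
    · intro w hw
      rcases mem_insert.1 hw with rfl | hw
      · exact hv't
      · exact hsub w (mem_of_mem_erase hw) (ne_of_mem_erase hw)
    · rw [hV.card _ hF, card_insert_of_notMem (fun h => hnt (mem_of_mem_erase h)),
        card_erase_of_mem hv, hV.card u hu]
      omega
  obtain ⟨n, hn⟩ := latt_dot (hV.int _ hF) (hV.lat v (mem_tight.1 hv).1)
  rw [hval, (mem_tight.1 hv).2, hg.1, mul_one] at hn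
  have hteq : t = ((1 - n : ℤ) : ℝ) := by push_cast; linarith
  rw [hteq] at hF htight htpos
  refine ⟨1 - n, ?_, v', hv'V, hnt, hneg, hF, htight.symm⟩
  have : 0 < 1 - n := by exact_mod_cast htpos
  omega

/-- In addition to the neighbouring facet: the only point of `V` on `⟨u_F, ·⟩ = 0` with negative
`v`-coordinate is the neighbouring vertex `v'`, since its level on `N(F, v)` is a positive
integer. Its `v`-coordinate is then `-1 / t`. -/
lemma nbr_zero (hV : Good V) (hu : Fct V u) {v g : Fin d → ℝ} (hv : v ∈ tight V u)
    (hg : IsDual V u v g) [DecidableEq (Fin d → ℝ)] :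
    ∃ t : ℤ, 1 ≤ t ∧ (t : ℝ) • g ∈ latt d ∧ ∃ v' ∈ V, v' ∉ tight V u ∧ g ⬝ᵥ v' < 0 ∧
      Fct V (u - (t : ℝ) • g) ∧
      tight V (u - (t : ℝ) • g) = insert v' ((tight V u).erase v) ∧
      ∀ x ∈ V, u ⬝ᵥ x = 0 → g ⬝ᵥ x < 0 → x = v' ∧ (t : ℝ) * (g ⬝ᵥ x) = -1 := by
  obtain ⟨t, ht, v', hv', hnt, hneg, hF, htight⟩ := exists_nbr hV hu hv hg
  refine ⟨t, ht, ?_, v', hv', hnt, hneg, hF, htight, fun x hx hx0 hgx => ?_⟩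
  · have := sub_mem (hV.int u hu) (hV.int _ hF)
    rwa [sub_sub_cancel] at this
  · obtain ⟨n, hn⟩ := latt_dot (hV.int _ hF) (hV.lat x hx)
    have hle := hF.1 x hx
    have hval : (u - (t : ℝ) • g) ⬝ᵥ x = -(t * (g ⬝ᵥ x)) := by
      rw [sub_dotProduct, smul_dotProduct, smul_eq_mul, hx0, zero_sub]
    have htR : (1 : ℝ) ≤ t := by exact_mod_cast ht
    have hpos : 0 < (u - (t : ℝ) • g) ⬝ᵥ x := by rw [hval]; nlinarith
    have hn1 : n = 1 := by
      rw [hn] at hle hpos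
      have h1 : n ≤ 1 := by exact_mod_cast hle
      have h2 : 0 < n := by exact_mod_cast hpos
      omega
    rw [hn1, Int.cast_one] at hn
    refine ⟨?_, by linarith⟩
    have hxt : x ∈ insert v' ((tight V u).erase v) := htight ▸ mem_tight.2 ⟨hx, hn⟩
    rcases mem_insert.1 hxt with h | h
    · exact h
    · have := (mem_tight.1 (mem_of_mem_erase h)).2
      rw [hx0] at this
      exact absurd this zero_ne_one

lemma zero_unique (hV : Good V) (hu : Fct V u) {v g x y : Fin d → ℝ} (hv : v ∈ tight V u)
    (hg : IsDual V u v g) (hx : x ∈ V) (hy : y ∈ V) (hx0 : u ⬝ᵥ x = 0) (hy0 : u ⬝ᵥ y = 0)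
    (hgx : g ⬝ᵥ x < 0) (hgy : g ⬝ᵥ y < 0) : x = y := by
  classical
  obtain ⟨t, -, -, v', -, -, -, -, -, h⟩ := nbr_zero hV hu hv hg
  rw [(h x hx hx0 hgx).1, (h y hy hy0 hgy).1]

/-- A point of `V` at level `0` with a single negative coordinate is a difference of two vertices
of the facet: adding the vertex with negative coordinate gives a lattice point of the facet. -/
lemma single_neg (hV : Good V) (hu : Fct V u) (hg : DualB V u g) {v x : Fin d → ℝ}
    (hv : v ∈ tight V u) (hx : x ∈ V) (hx0 : u ⬝ᵥ x = 0) (hgx : g v ⬝ᵥ x < 0)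
    (hpos : ∀ w ∈ tight V u, w ≠ v → 0 ≤ g w ⬝ᵥ x) :
    g v ∈ latt d ∧ ∃ w ∈ tight V u, w ≠ v ∧ x = w - v := by
  classical
  obtain ⟨t, ht, hlat, v', -, -, -, -, -, h⟩ := nbr_zero hV hu hv (hg v hv)
  have h1 := (h x hx hx0 hgx).2
  have htR : (1 : ℝ) ≤ t := by exact_mod_cast ht
  have hge : -1 ≤ g v ⬝ᵥ x := by nlinarith
  have hux : u ⬝ᵥ (x + v) = 1 := by rw [dotProduct_add, hx0, (mem_tight.1 hv).2, zero_add]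
  have hco : x + v ∈ convexHull ℝ (V : Set (Fin d → ℝ)) := by
    rw [expand hu hg (x + v)]
    refine (convex_convexHull ℝ _).sum_mem (fun w hw => ?_) ?_ fun w hw => ?_
    · rw [dotProduct_add, hg.apply hw hv]
      split_ifs with hvw
      · subst hvw; linarith
      · linarith [hpos w hw (Ne.symm hvw)]
    · rw [← sum_coord hu hg, hux]
    · exact subset_convexHull ℝ _ (mem_tight.1 hw).1
  have hlx : x + v ∈ latt d := add_mem (hV.lat x hx) (hV.lat v (mem_tight.1 hv).1)
  rcases hV.term _ hco hlx with h0 | hw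
  · rw [h0, dotProduct_zero] at hux
    exact absurd hux zero_ne_one
  · have hwt := mem_tight.2 ⟨hw, hux⟩
    have hne : x + v ≠ v := fun h => hV.ne0 x hx (by simpa using h)
    have hgv := (hg v hv).2 _ hwt hne
    rw [dotProduct_add, (hg v hv).1] at hgv
    have hgm : g v ⬝ᵥ x = -1 := by linarith
    rw [hgm] at h1
    have ht1 : (t : ℝ) = 1 := by linarith
    rw [ht1, one_smul] at hlat
    exact ⟨hlat, x + v, hwt, hne, by simp⟩

lemma exists_neg (hV : Good V) (hu : Fct V u) (hg : DualB V u g) {x : Fin d → ℝ}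
    (hx : x ∈ V) (hx0 : u ⬝ᵥ x = 0) : ∃ v ∈ tight V u, g v ⬝ᵥ x < 0 := by
  by_contra! h
  rw [sum_coord hu hg, sum_eq_zero_iff_of_nonneg h] at hx0
  apply hV.ne0 x hx
  rw [expand hu hg x]
  exact sum_eq_zero fun v hv => by rw [hx0 v hv, zero_smul]

open Classical in
/-- The points of `V` at level `0` with respect to `u`. -/
noncomputable def lev0 (V : Finset (Fin d → ℝ)) (u : Fin d → ℝ) : Finset (Fin d → ℝ) :=
  V.filter (fun v => u ⬝ᵥ v = 0)

lemma mem_lev0 {v : Fin d → ℝ} : v ∈ lev0 V u ↔ v ∈ V ∧ u ⬝ᵥ v = 0 := by simp [lev0]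

/-- Each point `x` at level `0` has a negative coordinate `c x`, and no other point at level `0` is
negative in that coordinate. -/
lemma exists_choice (hV : Good V) (hu : Fct V u) (hg : DualB V u g) :
    ∃ c : (Fin d → ℝ) → (Fin d → ℝ), (∀ x ∈ lev0 V u, c x ∈ tight V u ∧ g (c x) ⬝ᵥ x < 0) ∧
      Set.InjOn c (lev0 V u) ∧
      ∀ x ∈ lev0 V u, ∀ y ∈ lev0 V u, g (c x) ⬝ᵥ y < 0 → x = y := by
  have : ∀ x, ∃ v, x ∈ lev0 V u → v ∈ tight V u ∧ g v ⬝ᵥ x < 0 := by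
    intro x
    by_cases hx : x ∈ lev0 V u
    · obtain ⟨v, hv⟩ := exists_neg hV hu hg (mem_lev0.1 hx).1 (mem_lev0.1 hx).2
      exact ⟨v, fun _ => hv⟩
    · exact ⟨0, fun h => absurd h hx⟩
  choose c hc using this
  have key : ∀ x ∈ lev0 V u, ∀ y ∈ lev0 V u, g (c x) ⬝ᵥ y < 0 → x = y := fun x hx y hy h =>
    zero_unique hV hu (hc x hx).1 (hg _ (hc x hx).1) (mem_lev0.1 hx).1 (mem_lev0.1 hy).1
      (mem_lev0.1 hx).2 (mem_lev0.1 hy).2 (hc x hx).2 h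
  refine ⟨c, hc, fun x hx y hy hxy => key x hx y hy ?_, key⟩
  rw [hxy]
  exact (hc y hy).2

lemma lev0_card_le (hV : Good V) (hu : Fct V u) : (lev0 V u).card ≤ d := by
  obtain ⟨g, hg⟩ := exists_dualB hV hu
  obtain ⟨c, hc, hinj, -⟩ := exists_choice hV hu hg
  exact (card_le_card_of_injOn c (fun x hx => (hc x hx).1) hinj).trans_eq (hV.card u hu)

/-! ### Facets with many points at level zero -/

lemma dual_unique (hu : Fct V u) {v h h' : Fin d → ℝ} (hh : IsDual V u v h)
    (hh' : IsDual V u v h') : h = h' := by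
  refine eq_of_span hu.2 fun x hx => ?_
  by_cases hxv : x = v
  · rw [hxv, hh.1, hh'.1]
  · rw [hh.2 x hx hxv, hh'.2 x hx hxv]

lemma dual_mem_of_others (hV : Good V) (hu : Fct V u) (hg : DualB V u g) {v : Fin d → ℝ}
    (hv : v ∈ tight V u) (h : ∀ w ∈ tight V u, w ≠ v → g w ∈ latt d) : g v ∈ latt d := by
  classical
  have h1 : g v = u - ∑ w ∈ (tight V u).erase v, g w := by
    rw [eq_sub_iff_add_eq, add_sum_erase _ _ hv, ← sum_dual hu hg]
  rw [h1]
  exact sub_mem (hV.int u hu) (sum_mem fun w hw => h w (mem_of_mem_erase hw) (ne_of_mem_erase hw))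

/-- A facet with at least `d - 1` points at level `0` has integral dual basis. A level `0` point
with a single negative coordinate forces the corresponding dual vector to be integral. At most one
level `0` point can have two negative coordinates `v₁`, `v₃`; if their dual vectors are not
integral, that point is `w - (v₁ + v₃) / 2` with `w` a lattice point, so the midpoint of `v₁` and
`v₃` is a lattice point, against terminality. -/
lemma dual_mem (hV : Good V) (hu : Fct V u) (hg : DualB V u g)
    (hA : d ≤ (lev0 V u).card + 1) : ∀ v ∈ tight V u, g v ∈ latt d := by
  classical
  obtain ⟨c, hc, hinj, key⟩ := exists_choice hV hu hg
  have hcard : ∀ v ∈ tight V u, ∀ w ∈ tight V u, v ≠ w → (∀ x ∈ lev0 V u, c x ≠ v) →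
      (∃ x ∈ lev0 V u, c x = w) := by
    intro v hv w hw hvw h1
    by_contra! h2
    have h3 : (lev0 V u).card ≤ (((tight V u).erase v).erase w).card :=
      card_le_card_of_injOn c (fun x hx => by
        simpa [h1 x hx, h2 x hx] using (hc x hx).1) hinj
    have hw' : w ∈ (tight V u).erase v := mem_erase.2 ⟨hvw.symm, hw⟩
    have h4 := card_pos.2 ⟨w, hw'⟩
    rw [card_erase_of_mem hw'] at h3
    rw [card_erase_of_mem hv, hV.card u hu] at h3 h4
    omega
  have hsing : ∀ x ∈ lev0 V u, (∀ w ∈ tight V u, w ≠ c x → 0 ≤ g w ⬝ᵥ x) → g (c x) ∈ latt d :=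
    fun x hx h => (single_neg hV hu hg (hc x hx).1 (mem_lev0.1 hx).1 (mem_lev0.1 hx).2
      (hc x hx).2 h).1
  intro v0 hv0
  by_contra hbad0
  obtain ⟨x0, hx0, hbad1⟩ : ∃ x ∈ lev0 V u, g (c x) ∉ latt d := by
    by_contra! hall
    apply hbad0
    refine dual_mem_of_others hV hu hg hv0 fun w hw hwv => ?_
    obtain ⟨x, hx, rfl⟩ := hcard v0 hv0 w hw hwv.symm fun x hx h => hbad0 (h ▸ hall x hx)
    exact hall x hx
  obtain ⟨v3, hv3, hne, hneg3⟩ : ∃ w ∈ tight V u, w ≠ c x0 ∧ g w ⬝ᵥ x0 < 0 := by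
    by_contra! h
    exact hbad1 (hsing x0 hx0 h)
  have hv3c : ∀ x ∈ lev0 V u, c x ≠ v3 := by
    rintro x hx rfl
    exact hne (by rw [key x hx x0 hx0 hneg3])
  have hcov := fun w hw hw3 => hcard v3 hv3 w hw hw3 hv3c
  have hgood : ∀ w ∈ tight V u, w ≠ c x0 → w ≠ v3 → g w ∈ latt d ∧ 0 ≤ g w ⬝ᵥ x0 := by
    intro w hw h1 h3
    obtain ⟨x, hx, rfl⟩ := hcov w hw (Ne.symm h3)
    refine ⟨hsing x hx fun w' hw' hne' => ?_, ?_⟩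
    · by_contra! hlt
      by_cases h : w' = v3
      · subst h
        have := zero_unique hV hu hv3 (hg _ hv3) (mem_lev0.1 hx).1 (mem_lev0.1 hx0).1
          (mem_lev0.1 hx).2 (mem_lev0.1 hx0).2 hlt hneg3
        exact h1 (by rw [this])
      · obtain ⟨x', hx', rfl⟩ := hcov w' hw' (Ne.symm h)
        exact hne' (by rw [key x' hx' x hx hlt])
    · by_contra! hlt
      exact h1 (by rw [key x hx x0 hx0 hlt])
  obtain ⟨hv1, hneg1⟩ := hc x0 hx0
  generalize c x0 = v1 at hbad1 hne hgood hv1 hneg1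
  have hbad3 : g v3 ∉ latt d := by
    intro h
    refine hbad1 (dual_mem_of_others hV hu hg hv1 fun w hw hw1 => ?_)
    by_cases h3 : w = v3
    · rwa [h3]
    · exact (hgood w hw hw1 h3).1
  obtain ⟨hx0V, hux0⟩ := mem_lev0.1 hx0
  -- a dual vector that is not integral has step length at least two
  have hhalf : ∀ v ∈ tight V u, g v ∉ latt d → g v ⬝ᵥ x0 < 0 → -1 / 2 ≤ g v ⬝ᵥ x0 := by
    intro v hv hbad hneg
    obtain ⟨t, ht, hlat, v', -, -, -, -, -, h⟩ := nbr_zero hV hu hv (hg v hv)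
    have h1 := (h x0 hx0V hux0 hneg).2
    have ht2 : (2 : ℝ) ≤ t := by
      have : t ≠ 1 := by
        rintro rfl
        rw [Int.cast_one, one_smul] at hlat
        exact hbad hlat
      exact_mod_cast (show (2 : ℤ) ≤ t by omega)
    nlinarith
  have ha1 := hhalf v1 hv1 hbad1 hneg1
  have ha3 := hhalf v3 hv3 hbad3 hneg3
  set R := ((tight V u).erase v1).erase v3 with hR
  have hv3' : v3 ∈ (tight V u).erase v1 := mem_erase.2 ⟨hne, hv3⟩
  have hRm : ∀ w ∈ R, w ∈ tight V u ∧ w ≠ v1 ∧ w ≠ v3 := by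
    intro w hw
    simp only [hR, mem_erase] at hw
    tauto
  obtain ⟨n, hn⟩ := latt_dot (sum_mem fun w hw =>
    (hgood w (hRm w hw).1 (hRm w hw).2.1 (hRm w hw).2.2).1 : ∑ w ∈ R, g w ∈ latt d)
    (hV.lat x0 hx0V)
  rw [sum_dotProduct] at hn
  have hsum := sum_coord hu hg x0
  rw [hux0, ← add_sum_erase _ _ hv1, ← add_sum_erase _ _ hv3', hn] at hsum
  have hn1 : n = 1 := by
    have h1 : (0 : ℝ) < n := by linarith
    have h2 : (n : ℝ) ≤ 1 := by linarith
    have h1' : 0 < n := by exact_mod_cast h1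
    have h2' : n ≤ 1 := by exact_mod_cast h2
    omega
  rw [hn1, Int.cast_one] at hsum
  have e1 : g v1 ⬝ᵥ x0 = -1 / 2 := by linarith
  have e3 : g v3 ⬝ᵥ x0 = -1 / 2 := by linarith
  have hexp := expand hu hg x0
  rw [← add_sum_erase _ _ hv1, ← add_sum_erase _ _ hv3', e1, e3] at hexp
  set m : Fin d → ℝ := (1 / 2 : ℝ) • v1 + (1 / 2 : ℝ) • v3 with hm
  have hmeq : m = ∑ w ∈ R, (g w ⬝ᵥ x0) • w - x0 := by
    rw [eq_sub_iff_add_eq]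
    calc m + x0 = m + _ := congrArg (m + ·) hexp
      _ = ∑ w ∈ R, (g w ⬝ᵥ x0) • w := by rw [hm]; module
  have hmlat : m ∈ latt d := by
    rw [hmeq]
    refine sub_mem (sum_mem fun w hw => ?_) (hV.lat x0 hx0V)
    obtain ⟨h1, h2, h3⟩ := hRm w hw
    obtain ⟨z, hz⟩ := latt_dot (hgood w h1 h2 h3).1 (hV.lat x0 hx0V)
    rw [hz, Int.cast_smul_eq_zsmul]
    exact (latt d).smul_mem _ (hV.lat w (mem_tight.1 h1).1)
  have hmco : m ∈ convexHull ℝ (V : Set (Fin d → ℝ)) :=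
    (convex_convexHull ℝ _) (subset_convexHull ℝ _ (mem_tight.1 hv1).1)
      (subset_convexHull ℝ _ (mem_tight.1 hv3).1) (by norm_num) (by norm_num) (by norm_num)
  have hum : u ⬝ᵥ m = 1 := by
    rw [hm, dotProduct_add, dotProduct_smul, dotProduct_smul, (mem_tight.1 hv1).2,
      (mem_tight.1 hv3).2]
    norm_num
  have hgm : g v1 ⬝ᵥ m = 1 / 2 := by
    rw [hm, dotProduct_add, dotProduct_smul, dotProduct_smul, (hg v1 hv1).1,
      (hg v1 hv1).2 v3 hv3 hne]
    norm_num
  rcases hV.term m hmco hmlat with h | h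
  · rw [h, dotProduct_zero] at hum
    exact zero_ne_one hum
  · rw [hg.apply hv1 (mem_tight.2 ⟨h, hum⟩)] at hgm
    split_ifs at hgm <;> norm_num at hgm

/-- The `ℤ`-span of `T` contains the lattice. -/
def Gen (T : Finset (Fin d → ℝ)) : Prop :=
  latt d ≤ Submodule.span ℤ (T : Set (Fin d → ℝ))

lemma gen_of_dual_mem (hu : Fct V u) (hg : DualB V u g)
    (h : ∀ v ∈ tight V u, g v ∈ latt d) : Gen (tight V u) := by
  intro x hx
  rw [expand hu hg x]
  refine sum_mem fun v hv => ?_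
  obtain ⟨z, hz⟩ := latt_dot (h v hv) hx
  rw [hz, Int.cast_smul_eq_zsmul]
  exact Submodule.smul_mem _ _ (Submodule.subset_span hv)

/-- A facet with `d` points at level `0`: every neighbouring facet is reached by a step of length
one, and the points at level `0` are exactly the neighbouring vertices, each the difference of
two vertices of the facet. -/
lemma full_structure (hV : Good V) (hu : Fct V u) (hg : DualB V u g)
    (hA : (lev0 V u).card = d) [DecidableEq (Fin d → ℝ)] :
    (∀ x ∈ lev0 V u, ∃ v ∈ tight V u, ∃ w ∈ tight V u, x = w - v) ∧
    (∀ v ∈ tight V u, ∀ h, IsDual V u v h → ∀ x ∈ lev0 V u, h ⬝ᵥ x < 0 → h ⬝ᵥ x = -1) ∧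
    (∀ v ∈ tight V u, ∃ w ∈ tight V u, w ≠ v ∧ w - v ∈ lev0 V u ∧ Fct V (u - g v) ∧
      tight V (u - g v) = insert (w - v) ((tight V u).erase v)) := by
  obtain ⟨c, hc, hinj, key⟩ := exists_choice hV hu hg
  have hcov : ∀ w ∈ tight V u, ∃ x ∈ lev0 V u, c x = w := by
    have h1 : (lev0 V u).image c = tight V u := by
      refine eq_of_subset_of_card_le (image_subset_iff.2 fun x hx => (hc x hx).1) ?_
      rw [card_image_of_injOn hinj, hA, hV.card u hu]
    intro w hw
    rwa [← h1, mem_image] at hw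
  have hsing : ∀ x ∈ lev0 V u, ∃ w ∈ tight V u, w ≠ c x ∧ x = w - c x := by
    intro x hx
    refine (single_neg hV hu hg (hc x hx).1 (mem_lev0.1 hx).1 (mem_lev0.1 hx).2
      (hc x hx).2 fun w hw hne => ?_).2
    by_contra! hlt
    obtain ⟨x', hx', rfl⟩ := hcov w hw
    exact hne (by rw [key x' hx' x hx hlt])
  have hm1 : ∀ v ∈ tight V u, ∀ x ∈ lev0 V u, g v ⬝ᵥ x < 0 → g v ⬝ᵥ x = -1 := by
    intro v hv x hx hlt
    obtain ⟨x', hx', rfl⟩ := hcov v hv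
    obtain rfl := key x' hx' x hx hlt
    obtain ⟨w, hw, hne, hxw⟩ := hsing x' hx
    have h1 : g (c x') ⬝ᵥ x' = g (c x') ⬝ᵥ (w - c x') := congrArg _ hxw
    rw [h1, dotProduct_sub, (hg _ hv).1, (hg _ hv).2 w hw hne, zero_sub]
  refine ⟨fun x hx => ?_, fun v hv h hh => ?_, fun v hv => ?_⟩
  · obtain ⟨w, hw, -, hxw⟩ := hsing x hx
    exact ⟨c x, (hc x hx).1, w, hw, hxw⟩
  · rw [dual_unique hu hh (hg v hv)]
    exact hm1 v hv
  · obtain ⟨x, hx, rfl⟩ := hcov v hv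
    obtain ⟨w, hw, hne, hxw⟩ := hsing x hx
    obtain ⟨t, ht, hlat, v', -, -, -, hF, htight, h⟩ := nbr_zero hV hu hv (hg _ hv)
    obtain ⟨rfl, htx⟩ := h x (mem_lev0.1 hx).1 (mem_lev0.1 hx).2 (hc x hx).2
    rw [hm1 _ hv x hx (hc x hx).2] at htx
    have ht1 : (t : ℝ) = 1 := by linarith
    rw [ht1, one_smul] at hF htight
    refine ⟨w, hw, hne, ?_, hF, ?_⟩
    · rwa [← hxw]
    · rwa [← hxw]

/-- The count behind the theorem. Each `x` in `V` has level at most `2 [x ∈ F] + [level 0] - 1`;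
summing over the `3d - 1` points bounds `⟨u_F, ν⟩` by the number of level `0` points minus
`d - 1`. -/
lemma count (hV : Good V) (hcard : (V.card : ℤ) = 3 * d - 1) (hu : Fct V u) :
    u ⬝ᵥ (∑ v ∈ V, v) ≤ (lev0 V u).card - d + 1 ∧
    (u ⬝ᵥ (∑ v ∈ V, v) = 1 → (lev0 V u).card = d ∧
      ∀ x ∈ V, x ∈ tight V u ∨ x ∈ lev0 V u ∨ u ⬝ᵥ x = -1) := by
  classical
  have hle : ∀ x ∈ V, u ⬝ᵥ x ≤
      2 * (if u ⬝ᵥ x = 1 then 1 else 0) + (if u ⬝ᵥ x = 0 then 1 else 0) - 1 := by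
    intro x hx
    obtain ⟨n, hn⟩ := latt_dot (hV.int u hu) (hV.lat x hx)
    have h1 := hu.1 x hx
    split_ifs with h2 h3 h3
    · linarith
    · linarith
    · linarith
    · rw [hn] at h1 h2 h3 ⊢
      have h1' : n ≤ 1 := by exact_mod_cast h1
      have h2' : n ≠ 1 := by exact_mod_cast h2
      have h3' : n ≠ 0 := by exact_mod_cast h3
      have : n ≤ -1 := by omega
      have : (n : ℝ) ≤ -1 := by exact_mod_cast this
      linarith
  have hcR : (V.card : ℝ) = 3 * d - 1 := by exact_mod_cast hcard
  have hsum : ∑ x ∈ V, (2 * (if u ⬝ᵥ x = 1 then 1 else 0) + (if u ⬝ᵥ x = 0 then 1 else 0) - 1 : ℝ)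
      = (lev0 V u).card - d + 1 := by
    rw [sum_sub_distrib, sum_add_distrib, ← mul_sum, sum_boole, sum_boole]
    have h1 : (V.filter fun x => u ⬝ᵥ x = 1) = tight V u := by ext; simp [mem_tight]
    have h2 : (V.filter fun x => u ⬝ᵥ x = 0) = lev0 V u := by ext; simp [mem_lev0]
    rw [h1, h2, hV.card u hu]
    simp only [sum_const, nsmul_eq_mul, mul_one, hcR]
    ring
  have hmain := sum_le_sum hle
  rw [hsum, ← dotProduct_sum] at hmain
  refine ⟨hmain, fun h1 => ?_⟩
  have hA : (lev0 V u).card = d := by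
    refine le_antisymm (lev0_card_le hV hu) ?_
    rw [h1] at hmain
    have : (d : ℝ) ≤ (lev0 V u).card := by linarith
    exact_mod_cast this
  refine ⟨hA, ?_⟩
  have heq := (sum_eq_sum_iff_of_le hle).1 (by rw [hsum, ← dotProduct_sum, h1, hA]; ring)
  intro x hx
  by_cases h2 : u ⬝ᵥ x = 1
  · exact Or.inl (mem_tight.2 ⟨hx, h2⟩)
  by_cases h3 : u ⬝ᵥ x = 0
  · exact Or.inr (Or.inl (mem_lev0.2 ⟨hx, h3⟩))
  have := heq x hx
  rw [if_neg h2, if_neg h3] at this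
  exact Or.inr (Or.inr (by linarith))

/-! ### Unimodularity of all facets -/

/-- If every point of `V` is `±w` or `w - w'` for vertices `w`, `w'` of one facet that generates
the lattice, then every facet generates the lattice. Let `Λ` be the `ℤ`-span of another facet and
suppose it misses a vertex `i`. The sum of the coordinates `w` with `w - i ∈ Λ` is then a nonzero
functional vanishing on that facet, although the facet spans. -/
lemma gen_of_roots (hg : DualB V u g) (hgen : Gen (tight V u))
    (hform : ∀ x ∈ V, x ∈ tight V u ∨ -x ∈ tight V u ∨
      ∃ v ∈ tight V u, ∃ w ∈ tight V u, x = w - v)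
    {u' : Fin d → ℝ} (hu' : Fct V u') : Gen (tight V u') := by
  classical
  set Λ := Submodule.span ℤ (tight V u' : Set (Fin d → ℝ)) with hΛ
  by_contra hnot
  obtain ⟨i, hi, hiΛ⟩ : ∃ i ∈ tight V u, i ∉ Λ := by
    by_contra! h
    exact hnot (hgen.trans (Submodule.span_le.2 fun x hx => h x hx))
  set C := (tight V u).filter fun w => w - i ∈ Λ with hC
  have hh : ∀ v ∈ tight V u, (∑ w ∈ C, g w) ⬝ᵥ v = if v ∈ C then 1 else 0 := by
    intro v hv
    rw [sum_dotProduct, sum_congr rfl fun w hw => hg.apply (mem_filter.1 hw).1 hv, sum_ite_eq]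
  have hmemC : ∀ v ∈ tight V u, (v ∈ C ↔ v - i ∈ Λ) := fun v hv => by simp [hC, hv]
  have hnC : ∀ v ∈ tight V u, v ∈ Λ → v ∉ C := by
    intro v hv hvΛ hvC
    have := sub_mem hvΛ ((hmemC v hv).1 hvC)
    rw [sub_sub_cancel] at this
    exact hiΛ this
  have hz : (∑ w ∈ C, g w) = 0 := by
    refine perp_zero hu'.2 fun x hx => ?_
    have hxΛ : x ∈ Λ := Submodule.subset_span hx
    rcases hform x (mem_tight.1 hx).1 with h | h | ⟨v, hv, w, hw, rfl⟩
    · rw [hh x h, if_neg (hnC x h hxΛ)]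
    · have h1 := hh (-x) h
      rw [if_neg (hnC _ h (neg_mem hxΛ)), dotProduct_neg] at h1
      linarith
    · have : w ∈ C ↔ v ∈ C := by
        rw [hmemC w hw, hmemC v hv]
        constructor
        · intro h
          have := sub_mem h hxΛ
          rwa [show w - i - (w - v) = v - i by abel] at this
        · intro h
          have := add_mem h hxΛ
          rwa [show v - i + (w - v) = w - i by abel] at this
      rw [dotProduct_sub, hh w hw, hh v hv]
      simp only [this, sub_self]
  have h1 := hh i hi
  rw [hz, zero_dotProduct, if_pos ((hmemC i hi).2 (by rw [sub_self]; exact zero_mem _))] at h1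
  exact zero_ne_one h1

lemma ext_coord (hu : Fct V u) (hg : DualB V u g) {x y : Fin d → ℝ}
    (h : ∀ v ∈ tight V u, g v ⬝ᵥ x = g v ⬝ᵥ y) : x = y := by
  rw [expand hu hg x, expand hu hg y]
  exact sum_congr rfl fun v hv => by rw [h v hv]

/-- If the sum of all points of `V` is a vertex `p` of the facet `u`, then every point of `V` is
`±w` or `w - w'` for vertices of the facet. All facets through `p` have `d` points at level `0`
and no point below level `-1`; comparing `u` with its neighbours through `p` shows that a point
at level `-1` cannot have two negative coordinates away from `p`. -/
lemma roots_of_sum_eq (hV : Good V) (hcard : (V.card : ℤ) = 3 * d - 1) (hu : Fct V u)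
    (hg : DualB V u g) {p : Fin d → ℝ} (hp : p ∈ tight V u) (hsum : ∑ v ∈ V, v = p) :
    ∀ x ∈ V, x ∈ tight V u ∨ -x ∈ tight V u ∨
      ∃ v ∈ tight V u, ∃ w ∈ tight V u, x = w - v := by
  classical
  have hA : ∀ u', Fct V u' → p ∈ tight V u' → (lev0 V u').card = d ∧
      ∀ x ∈ V, x ∈ tight V u' ∨ x ∈ lev0 V u' ∨ u' ⬝ᵥ x = -1 := fun u' hu' hp' =>
    (count hV hcard hu').2 (by rw [hsum]; exact (mem_tight.1 hp').2)
  obtain ⟨hA1, hA2⟩ := hA u hu hp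
  obtain ⟨hs1, -, hs3⟩ := full_structure hV hu hg hA1
  choose! φ hφ hφne hφ0 hφF hφt using hs3
  intro x hx
  rcases hA2 x hx with h | h | hxm
  · exact Or.inl h
  · exact Or.inr (Or.inr (hs1 x h))
  right; left
  have hpt : ∀ v ∈ tight V u, v ≠ p → p ∈ tight V (u - g v) := fun v hv hvp => by
    rw [hφt v hv]
    exact mem_insert_of_mem (mem_erase.2 ⟨hvp.symm, hp⟩)
  have hval : ∀ v ∈ tight V u, v ≠ p → g v ⬝ᵥ x = 0 ∨ g v ⬝ᵥ x = -1 := by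
    intro v hv hvp
    have hux : (u - g v) ⬝ᵥ x = -1 - g v ⬝ᵥ x := by rw [sub_dotProduct, hxm]
    rcases (hA _ (hφF v hv) (hpt v hv hvp)).2 x hx with h | h | h
    · exfalso
      rw [hφt v hv] at h
      rcases mem_insert.1 h with rfl | h
      · have := (mem_lev0.1 (hφ0 v hv)).2
        rw [this] at hxm; norm_num at hxm
      · have := (mem_tight.1 (mem_of_mem_erase h)).2
        rw [this] at hxm; norm_num at hxm
    · have := (mem_lev0.1 h).2
      right; linarith
    · left; linarith
  -- `x` is at level `0` on the neighbour at `i`, where its coordinates are at least `-1`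
  have hkey : ∀ i ∈ tight V u, i ≠ p → g i ⬝ᵥ x = -1 → ∀ j ∈ tight V u, j ≠ i →
      g j ⬝ᵥ x = -1 → φ i ≠ j ∧ x ∈ lev0 V (u - g i) ∧ j ∈ tight V (u - g i) ∧
        IsDual V (u - g i) j (g j) := by
    intro i hi hip hxi j hj hji hxj
    have hx0 : x ∈ lev0 V (u - g i) := mem_lev0.2 ⟨hx, by rw [sub_dotProduct, hxm, hxi]; ring⟩
    have hjt : j ∈ tight V (u - g i) := by
      rw [hφt i hi]
      exact mem_insert_of_mem (mem_erase.2 ⟨hji, hj⟩)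
    have hφij : φ i ≠ j := by
      intro hφi
      obtain ⟨g', hg'⟩ := exists_dualB hV (hφF i hi)
      have hs := (full_structure hV (hφF i hi) hg' (hA _ (hφF i hi) (hpt i hi hip)).1).2.1 j hjt
        (g i + g j) ?_ x hx0
      · rw [add_dotProduct, hxi, hxj] at hs
        norm_num at hs
      · refine ⟨?_, fun w hw hwj => ?_⟩
        · rw [add_dotProduct, (hg j hj).1, (hg i hi).2 j hj hji, zero_add]
        · rw [hφt i hi] at hw
          rcases mem_insert.1 hw with rfl | hw
          · rw [hφi, add_dotProduct, dotProduct_sub, dotProduct_sub, (hg j hj).1, (hg i hi).1,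
              (hg i hi).2 j hj hji, (hg j hj).2 i hi hji.symm]
            ring
          · rw [add_dotProduct, (hg i hi).2 w (mem_of_mem_erase hw) (ne_of_mem_erase hw),
              (hg j hj).2 w (mem_of_mem_erase hw) hwj, zero_add]
    refine ⟨hφij, hx0, hjt, (hg j hj).1, fun w hw hwj => ?_⟩
    rw [hφt i hi] at hw
    rcases mem_insert.1 hw with rfl | hw
    · rw [dotProduct_sub, (hg j hj).2 _ (hφ i hi) hφij, (hg j hj).2 i hi hji.symm, sub_zero]
    · exact (hg j hj).2 w (mem_of_mem_erase hw) hwj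
  have htwo : ∀ i ∈ tight V u, i ≠ p → g i ⬝ᵥ x = -1 → ∀ j ∈ tight V u, j ≠ i → j ≠ p →
      g j ⬝ᵥ x = 0 := by
    intro i hi hip hxi j hj hji hjp
    refine (hval j hj hjp).resolve_right fun hxj => ?_
    obtain ⟨-, hx0, hjt, hdual⟩ := hkey i hi hip hxi j hj hji hxj
    obtain ⟨hφji, -⟩ := hkey j hj hjp hxj i hi hji.symm hxi
    -- `x` and `φ j - j` compete for the neighbouring vertex at `j` of the facet `N(F, i)`
    have hn := mem_lev0.1 (hφ0 j hj)
    have heq : x = φ j - j := by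
      refine zero_unique hV (hφF i hi) hjt hdual hx hn.1 (mem_lev0.1 hx0).2 ?_ ?_ ?_
      · rw [sub_dotProduct, hn.2, dotProduct_sub, (hg i hi).2 _ (hφ j hj) hφji,
          (hg i hi).2 j hj hji]
        ring
      · rw [hxj]; norm_num
      · rw [dotProduct_sub, (hg j hj).2 _ (hφ j hj) (hφne j hj), (hg j hj).1]; norm_num
    rw [heq, hn.2] at hxm
    norm_num at hxm
  have hsc := sum_coord hu hg x
  rw [hxm, ← add_sum_erase _ _ hp] at hsc
  by_cases hex : ∃ i ∈ tight V u, i ≠ p ∧ g i ⬝ᵥ x = -1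
  · obtain ⟨i, hi, hip, hxi⟩ := hex
    rw [← add_sum_erase _ _ (mem_erase.2 ⟨hip, hi⟩), sum_eq_zero, hxi] at hsc
    · have hxp : g p ⬝ᵥ x = 0 := by linarith
      have : x = -i := by
        refine ext_coord hu hg fun v hv => ?_
        rw [dotProduct_neg, hg.apply hv hi]
        split_ifs with h
        · rw [← h, hxi]
        · by_cases hvp : v = p
          · rw [hvp, hxp, neg_zero]
          · rw [htwo i hi hip hxi v hv (Ne.symm h) hvp, neg_zero]
      rwa [this, neg_neg]
    · intro v hv
      simp only [mem_erase] at hv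
      exact htwo i hi hip hxi v hv.2.2 hv.1 hv.2.1
  · push Not at hex
    have h0 : ∀ v ∈ tight V u, v ≠ p → g v ⬝ᵥ x = 0 := fun v hv hvp =>
      (hval v hv hvp).resolve_right (hex v hv hvp)
    rw [sum_eq_zero fun v hv => h0 v (mem_of_mem_erase hv) (ne_of_mem_erase hv)] at hsc
    have : x = -p := by
      refine ext_coord hu hg fun v hv => ?_
      rw [dotProduct_neg, hg.apply hv hp]
      split_ifs with h
      · rw [← h]; linarith
      · rw [h0 v hv (Ne.symm h), neg_zero]
    rwa [this, neg_neg]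

/-- Every facet generates the lattice. By the count on a special facet, the sum of all points is
`0` or a vertex of that facet. -/
lemma all_gen (hV : Good V) (hcard : (V.card : ℤ) = 3 * d - 1) {u' : Fin d → ℝ}
    (hu' : Fct V u') : Gen (tight V u') := by
  classical
  obtain ⟨u, hu, hspec⟩ := exists_special hV (∑ v ∈ V, v)
  obtain ⟨g, hg⟩ := exists_dualB hV hu
  have hnn : ∀ v ∈ tight V u, 0 ≤ g v ⬝ᵥ (∑ v ∈ V, v) := fun v hv => hspec v hv _ (hg v hv)
  have hνlat : (∑ v ∈ V, v) ∈ latt d := sum_mem hV.lat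
  have hc1 := count hV hcard hu
  have hc2 := fun h => roots_of_sum_eq hV hcard hu hg (p := ∑ v ∈ V, v) h rfl
  have hc3 := fun w (hw : Fct V w) => (count hV hcard hw).1
  generalize (∑ v ∈ V, v) = ν at *
  have hsc := sum_coord hu hg ν
  obtain ⟨n, hn⟩ := latt_dot (hV.int u hu) hνlat
  have hn0 : 0 ≤ n := by
    have : (0 : ℝ) ≤ n := by rw [← hn, hsc]; exact sum_nonneg hnn
    exact_mod_cast this
  have hle : ((lev0 V u).card : ℝ) ≤ d := by exact_mod_cast lev0_card_le hV hu
  have hn1 : n ≤ 1 := by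
    have := hc1.1
    rw [hn] at this
    have : (n : ℝ) ≤ 1 := by linarith
    exact_mod_cast this
  obtain rfl | rfl : n = 0 ∨ n = 1 := by omega
  · have hν : ν = 0 := by
      refine ext_coord hu hg fun v hv => ?_
      rw [hn, Int.cast_zero] at hsc
      rw [dotProduct_zero, (sum_eq_zero_iff_of_nonneg hnn).1 hsc.symm v hv]
    obtain ⟨g', hg'⟩ := exists_dualB hV hu'
    refine gen_of_dual_mem hu' hg' (dual_mem hV hu' hg' ?_)
    have := hc3 u' hu'
    rw [hν, dotProduct_zero] at this
    have : (d : ℝ) ≤ ((lev0 V u').card + 1 : ℕ) := by push_cast; linarith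
    exact_mod_cast this
  · rw [Int.cast_one] at hn
    have hA := (hc1.2 hn).1
    have hdm := dual_mem hV hu hg (by omega)
    have hgen := gen_of_dual_mem hu hg hdm
    refine gen_of_roots hg hgen (hc2 ?_) hu'
    rw [hn] at hsc
    -- the coordinates of `ν` are nonnegative integers with sum `1`
    obtain ⟨p, hp, hpos⟩ : ∃ p ∈ tight V u, 0 < g p ⬝ᵥ ν := by
      by_contra! h
      have := sum_nonpos h
      linarith
    obtain ⟨m, hm⟩ := latt_dot (hdm p hp) hνlat
    have hm1 : (1 : ℝ) ≤ m := by
      rw [hm] at hpos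
      have : 0 < m := by exact_mod_cast hpos
      exact_mod_cast (show 1 ≤ m by omega)
    have hnn' : ∀ v ∈ (tight V u).erase p, 0 ≤ g v ⬝ᵥ ν := fun v hv =>
      hnn v (mem_of_mem_erase hv)
    rw [← add_sum_erase _ _ hp] at hsc
    have hrest := sum_nonneg hnn'
    have hz := (sum_eq_zero_iff_of_nonneg hnn').1 (by linarith)
    have : ν = p := by
      refine ext_coord hu hg fun v hv => ?_
      rw [hg.apply hv hp]
      split_ifs with h
      · rw [← h]; linarith
      · exact hz v (mem_erase.2 ⟨Ne.symm h, hv⟩)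
    rwa [this]

end Aux

/-! ### Passage to polytopes -/

section Translation

variable {d : ℕ}

lemma hull_le {V : Finset (Fin d → ℝ)} {u : Fin d → ℝ} {c : ℝ} (h : ∀ v ∈ V, u ⬝ᵥ v ≤ c) :
    ∀ x ∈ convexHull ℝ (V : Set (Fin d → ℝ)), u ⬝ᵥ x ≤ c := by
  intro x hx
  have hc : Convex ℝ {x : Fin d → ℝ | u ⬝ᵥ x ≤ c} :=
    convex_halfSpace_le ⟨dotProduct_add u, fun a y => dotProduct_smul a u y⟩ c
  exact convexHull_min (fun v hv => h v hv) hc hx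

lemma vertsOn_eq (P : Polytope d) (u : Fin d → ℝ) :
    P.vertsOn {x ∈ P.carrier | pairing u x = 1} = (tight P.verts u : Set (Fin d → ℝ)) := by
  ext v
  constructor
  · rintro ⟨h1, -, h2⟩
    exact mem_tight.2 ⟨h1, h2⟩
  · intro h
    have h := mem_tight.1 h
    exact ⟨h.1, subset_convexHull ℝ _ h.1, h.2⟩

lemma isFacet_of_fct (P : Polytope d) (hd : 0 < d) {u : Fin d → ℝ} (hu : Fct P.verts u) :
    P.IsFacet {x ∈ P.carrier | pairing u x = 1} := by
  have hne : (tight P.verts u).Nonempty := by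
    rw [nonempty_iff_ne_empty]
    intro h
    have h1 := hu.2
    rw [h, coe_empty, Submodule.span_empty] at h1
    have h2 : Module.finrank ℝ (⊤ : Submodule ℝ (Fin d → ℝ)) = 0 := by rw [← h1, finrank_bot]
    rw [finrank_top, Module.finrank_fin_fun] at h2
    omega
  obtain ⟨p, hp⟩ := hne
  obtain ⟨hpV, hp1⟩ := mem_tight.1 hp
  set F : Set (Fin d → ℝ) := {x ∈ P.carrier | pairing u x = 1} with hF
  have htF : ∀ v ∈ tight P.verts u, v ∈ F := fun v hv =>
    ⟨subset_convexHull ℝ _ (mem_tight.1 hv).1, (mem_tight.1 hv).2⟩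
  refine ⟨⟨u, ?_, 1, fun x hx => hull_le hu.1 x hx, rfl⟩, ⟨p, htF p hp⟩, ?_⟩
  · rintro rfl
    rw [zero_dotProduct] at hp1
    exact zero_ne_one hp1
  have hperp : ∀ x ∈ vectorSpan ℝ F, u ⬝ᵥ x = 0 := by
    intro x hx
    rw [vectorSpan_def] at hx
    induction hx using Submodule.span_induction with
    | mem x hx =>
      obtain ⟨a, ha, b, hb, rfl⟩ := hx
      have ha : u ⬝ᵥ a = 1 := ha.2
      have hb : u ⬝ᵥ b = 1 := hb.2
      simp only [vsub_eq_sub]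
      rw [dotProduct_sub, ha, hb, sub_self]
    | zero => simp
    | add x y _ _ h1 h2 => rw [dotProduct_add, h1, h2, add_zero]
    | smul a x _ h1 => rw [dotProduct_smul, h1, smul_zero]
  have hlt : Module.finrank ℝ (vectorSpan ℝ F) < d := by
    have : vectorSpan ℝ F ≠ ⊤ := by
      intro h
      have := hperp p (h ▸ Submodule.mem_top)
      rw [hp1] at this
      exact one_ne_zero this
    have := Submodule.finrank_lt this
    rwa [Module.finrank_fin_fun] at this
  have hge : d ≤ Module.finrank ℝ (vectorSpan ℝ F) + 1 := by
    have htop : (⊤ : Submodule ℝ (Fin d → ℝ)) ≤ vectorSpan ℝ F ⊔ Submodule.span ℝ {p} := by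
      rw [← hu.2, Submodule.span_le]
      intro v hv
      rw [show v = (v -ᵥ p) + p by simp]
      exact Submodule.add_mem_sup (vsub_mem_vectorSpan ℝ (htF v hv) (htF p hp))
        (Submodule.mem_span_singleton_self p)
    have h1 := Submodule.finrank_mono htop
    rw [finrank_top, Module.finrank_fin_fun] at h1
    have h2 := Submodule.finrank_add_le_finrank_add_finrank (vectorSpan ℝ F)
      (Submodule.span ℝ {p})
    have h3 := finrank_span_le_card (R := ℝ) ({p} : Set (Fin d → ℝ))
    simp only [Set.toFinset_singleton, card_singleton] at h3
    omega
  omega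

lemma good_verts (P : Polytope d) (hd : 0 < d) (hrefl : P.IsReflexive)
    (hsimp : P.IsSimplicial) (hterm : P.IsTerminal) : Good P.verts := by
  obtain ⟨hlat, h0, hint⟩ := hrefl
  obtain ⟨ε, hε, hball⟩ := Metric.mem_nhds_iff.1 (mem_interior_iff_mem_nhds.1 h0)
  have hsingle : ∀ i : Fin d, ∀ a : ℝ, |a| < ε → (Pi.single i a : Fin d → ℝ) ∈ P.carrier := by
    intro i a ha
    apply hball
    rw [mem_ball_zero_iff, pi_norm_lt_iff hε]
    intro j
    by_cases h : j = i
    · subst h; simpa using ha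
    · simpa [h] using hε
  refine ⟨hlat, ?_, ⟨2 / ε, ?_⟩, ?_, ?_, hterm⟩
  · rintro v hv rfl
    have hext := (mem_extremePoints.1 (P.vertsExtreme 0 hv)).2
    have habs : |ε / 2| < ε := by rw [abs_of_pos (by positivity)]; linarith
    have h1 := hsingle ⟨0, hd⟩ (ε / 2) habs
    have h2 := hsingle ⟨0, hd⟩ (-(ε / 2)) (by rwa [abs_neg])
    have := (hext _ h1 _ h2 ⟨1 / 2, 1 / 2, by norm_num, by norm_num, by norm_num, by
      rw [Pi.single_neg]; module⟩).1
    have := congrFun this ⟨0, hd⟩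
    simp at this
    exact hε.ne' this
  · intro u hu i
    have key : ∀ a : ℝ, |a| < ε → u i * a ≤ 1 := by
      intro a ha
      have := hull_le hu _ (hsingle i a ha)
      rwa [dotProduct_single] at this
    have habs : |ε / 2| < ε := by rw [abs_of_pos (by positivity)]; linarith
    have h1 := key (ε / 2) habs
    have h2 := key (-(ε / 2)) (by rwa [abs_neg])
    rw [le_div_iff₀ hε]
    rcases abs_cases (u i) with ⟨h, -⟩ | ⟨h, -⟩ <;> rw [h] <;> linarith
  · intro u hu
    obtain ⟨z, hz⟩ := hint _ (isFacet_of_fct P hd hu)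
    have : u = fun i => (z i : ℝ) := by
      refine eq_of_span hu.2 fun v hv => ?_
      have hv' := mem_tight.1 hv
      rw [hv'.2]
      exact (hz v ⟨subset_convexHull ℝ _ hv'.1, hv'.2⟩).symm
    rw [this]
    exact fun i => ⟨z i, rfl⟩
  · intro u hu
    have := hsimp _ (isFacet_of_fct P hd hu)
    rwa [vertsOn_eq, Set.ncard_coe_finset] at this

/-- A set of points of `V` on a common supporting hyperplane not through the origin lies in a
facet: maximize the sum of these points over the polar dual. -/
lemma exists_fct_of_face {V : Finset (Fin d → ℝ)} (hV : Good V) {y : Fin d → ℝ}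
    (hy : ∀ v ∈ V, y ⬝ᵥ v ≤ 1) : ∃ u, Fct V u ∧ tight V y ⊆ tight V u := by
  obtain ⟨u, hu, hmax⟩ := exists_max hV (∑ v ∈ tight V y, v)
  refine ⟨u, hu, fun v hv => ?_⟩
  have hle : ∀ w ∈ tight V y, u ⬝ᵥ w ≤ y ⬝ᵥ w := fun w hw => by
    rw [(mem_tight.1 hw).2]
    exact hu.1 w (mem_tight.1 hw).1
  have h1 := hmax y hy
  rw [dotProduct_sum, dotProduct_sum] at h1
  have h2 := (sum_eq_sum_iff_of_le hle).1 (le_antisymm (sum_le_sum hle) h1) v hv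
  exact mem_tight.2 ⟨(mem_tight.1 hv).1, h2.trans (mem_tight.1 hv).2⟩

lemma isLatticeBasis_of_gen {T : Finset (Fin d → ℝ)} (hT : ∀ v ∈ T, v ∈ latt d)
    (hcard : T.card = d) (hgen : Gen T) : IsLatticeBasis (T : Set (Fin d → ℝ)) := by
  set e := T.equivFinOfCardEq hcard
  have hrange : Set.range (fun i => ((e.symm i : T) : Fin d → ℝ)) = (T : Set (Fin d → ℝ)) := by
    ext x
    constructor
    · rintro ⟨i, rfl⟩
      exact (e.symm i).2
    · intro hx
      exact ⟨e ⟨x, hx⟩, by simp⟩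
  refine ⟨_, hrange, fun x => ⟨fun hx => ?_, ?_⟩⟩
  · have h := hgen hx
    rw [← hrange, Submodule.mem_span_range_iff_exists_fun] at h
    obtain ⟨a, ha⟩ := h
    exact ⟨a, by simp only [← ha, Int.cast_smul_eq_zsmul]⟩
  · rintro ⟨a, rfl⟩
    refine mem_latt.1 (sum_mem fun i _ => ?_)
    rw [Int.cast_smul_eq_zsmul]
    exact Submodule.smul_mem _ _ (hT _ (e.symm i).2)

end Translation

/-- Every terminal simplicial reflexive `d`-polytope with exactly `3d - 1` vertices is
a smooth Fano polytope: for every face `F` of `P`, the vertices of `F` are part of a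
basis of the lattice. -/
theorem terminal_simplicial_reflexive_3d_sub_one_smooth {d : ℕ}
    (P : Polytope d) (hrefl : P.IsReflexive) (hsimp : P.IsSimplicial)
    (hterm : P.IsTerminal) (hcard : (P.verts.card : ℤ) = 3 * d - 1) :
    ∀ F, P.IsFace F → ∃ S : Set (Fin d → ℝ), IsLatticeBasis S ∧ P.vertsOn F ⊆ S := by
  have hV := good_verts P (by omega) hrefl hsimp hterm
  rintro F ⟨y, hy0, c, hle, rfl⟩
  -- the origin is interior, so the supporting value is positive and can be scaled to `1`
  obtain ⟨v, hv, hpos⟩ := exists_pos hV hy0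
  have hvc : y ⬝ᵥ v ≤ c := hle v (subset_convexHull ℝ _ hv)
  have hc : 0 < c := hpos.trans_le hvc
  obtain ⟨u, hu, hsub⟩ := exists_fct_of_face hV (y := c⁻¹ • y) fun w hw => by
    have hwc : y ⬝ᵥ w ≤ c := hle w (subset_convexHull ℝ _ hw)
    rw [smul_dotProduct, smul_eq_mul, inv_mul_le_iff₀ hc, mul_one]
    exact hwc
  refine ⟨tight P.verts u, isLatticeBasis_of_gen (fun w hw => hV.lat w (mem_tight.1 hw).1)
    (hV.card u hu) (all_gen hV hcard hu), ?_⟩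
  rintro w ⟨hw, -, hwc⟩
  refine hsub (mem_tight.2 ⟨hw, ?_⟩)
  have hwc : y ⬝ᵥ w = c := hwc
  rw [smul_dotProduct, hwc, smul_eq_mul, inv_mul_cancel₀ hc.ne']
end

section
/- Let P ⊂ N_ℝ be a simplicial d-polytope containing the origin in its interior, F a facet of P, v a vertex of F, F' = N(F,v) the neighboring facet. Then for every x ∈ N_ℝ one has ⟨u_{F'}, x⟩ = ⟨u_F, x⟩ + (⟨u_{F'}, v⟩ - 1)·⟨u_F^v, x⟩. Consequently: ⟨u_F^v, x⟩ < 0 if and only if ⟨u_{F'}, x⟩ > ⟨u_F, x⟩; ⟨u_F^v, x⟩ > 0 if and only if ⟨u_{F'}, x⟩ < ⟨u_F, x⟩; and ⟨u_F^v, x⟩ = 0 if and only if ⟨u_{F'}, x⟩ = ⟨u_F, x⟩. -/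
/-!
The points of a facet `F` span `ℝ^d`: its direction space has dimension `d - 1` and lies in the
kernel of `u_F`, while a point of `F` has `u_F`-value `1` and so adds one more dimension. Hence a
functional is determined by its values on `F`, and, since every point of `F` is a combination of the
vertices lying on `F`, by its values on those vertices (`eq_of_eqOn_vertsOn`). The
formula for `u_{F'}` is an equality of functionals, which is checked on the vertices of `F`: at `v`
both sides are `⟨u_{F'}, v⟩`, and at every other vertex both sides are `1`.

The three equivalences then amount to `⟨u_{F'}, v⟩ < 1`. As `0 ∈ P`, uniqueness of the supporting
functional shows that `u_{F'} ≤ 1` on `P`, with equality exactly on `F'` (`le_one_and_mem_iff`). If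
`⟨u_{F'}, v⟩` were `1`, the formula would give `u_{F'} = u_F`, whence `F' = F`.
-/

open Finset

namespace Polytope

/-- The pairing with a fixed element of `M_ℝ`, as a linear functional on `N_ℝ`. -/
noncomputable def pairingLin {d : ℕ} (u : Fin d → ℝ) : (Fin d → ℝ) →ₗ[ℝ] ℝ where
  toFun := pairing u
  map_add' x y := by simp [pairing, mul_add, Finset.sum_add_distrib]
  map_smul' c x := by
    simp only [pairing, Pi.smul_apply, smul_eq_mul, RingHom.id_apply, Finset.mul_sum]
    exact Finset.sum_congr rfl fun i _ => by ring

theorem pairingLin_apply {d : ℕ} (u x : Fin d → ℝ) : pairingLin u x = pairing u x := rfl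

theorem pairing_zero_right {d : ℕ} (u : Fin d → ℝ) : pairing u 0 = 0 := by
  simp [pairing]

theorem span_facet_eq_top {d : ℕ} {P : Polytope d} {F : Set (Fin d → ℝ)} (hF : P.IsFacet F)
    {u : Fin d → ℝ} (hu : P.IsUF F u) : Submodule.span ℝ F = ⊤ := by
  obtain ⟨-, ⟨y, hy⟩, hrank⟩ := hF
  have hker : vectorSpan ℝ F ≤ LinearMap.ker (pairingLin u) := by
    rw [vectorSpan_def, Submodule.span_le]
    rintro _ ⟨a, ha, b, hb, rfl⟩
    change pairingLin u (a - b) = 0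
    rw [map_sub, pairingLin_apply, pairingLin_apply, hu a ha, hu b hb, sub_self]
  have hlt : vectorSpan ℝ F < Submodule.span ℝ F := by
    refine lt_of_le_of_ne ?_ fun h => ?_
    · rw [vectorSpan_def, Submodule.span_le]
      rintro _ ⟨a, ha, b, hb, rfl⟩
      exact Submodule.sub_mem _ (Submodule.subset_span ha) (Submodule.subset_span hb)
    · have hy0 : pairing u y = 0 := hker (h ▸ Submodule.subset_span hy)
      linarith [hu y hy]
  have hfin := Submodule.finrank_lt_finrank_of_lt hlt
  have hle := Submodule.finrank_le (Submodule.span ℝ F)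
  apply Submodule.eq_top_of_finrank_eq
  rw [Module.finrank_fin_fun] at hle ⊢
  omega

theorem face_subset_span_vertsOn {d : ℕ} {P : Polytope d} {F : Set (Fin d → ℝ)}
    (hF : P.IsFace F) : F ⊆ Submodule.span ℝ (P.vertsOn F) := by
  obtain ⟨u, -, c, hle, rfl⟩ := hF
  rintro x ⟨hx, hxc⟩
  obtain ⟨w, hw0, hw1, hwx⟩ := Finset.mem_convexHull'.1 hx
  have hsum : ∑ y ∈ P.verts, w y * (c - pairing u y) = 0 := by
    have hux : ∑ y ∈ P.verts, w y * pairing u y = c := by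
      rw [← hxc, ← pairingLin_apply, ← hwx, map_sum]
      simp [pairingLin_apply]
    simp only [mul_sub, Finset.sum_sub_distrib, ← Finset.sum_mul, hw1, hux]
    ring
  have hmem : ∀ y ∈ P.verts, y ∈ P.carrier := fun y hy => subset_convexHull ℝ _ hy
  -- All terms of the vanishing sum are nonnegative, so the weights off the face vanish.
  have hterm := (Finset.sum_eq_zero_iff_of_nonneg fun y hy =>
    mul_nonneg (hw0 y hy) (sub_nonneg.2 (hle y (hmem y hy)))).1 hsum
  rw [← hwx]
  refine Submodule.sum_mem _ fun y hy => ?_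
  rcases mul_eq_zero.1 (hterm y hy) with h | h
  · simp [h]
  · exact Submodule.smul_mem _ _
      (Submodule.subset_span ⟨hy, hmem y hy, (sub_eq_zero.1 h).symm⟩)

/-- A linear functional is determined by its values on the vertices of a facet. -/
theorem eq_of_eqOn_vertsOn {d : ℕ} {P : Polytope d} {F : Set (Fin d → ℝ)} (hF : P.IsFacet F)
    {u : Fin d → ℝ} (hu : P.IsUF F u) {f g : (Fin d → ℝ) →ₗ[ℝ] ℝ}
    (h : Set.EqOn f g (P.vertsOn F)) : f = g :=
  LinearMap.ext_on (eq_top_iff.2 ((span_facet_eq_top hF hu).ge.trans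
    (Submodule.span_le.2 (face_subset_span_vertsOn hF.1)))) h

/-- When `0 ∈ P`, the functional `u_F` is a supporting functional: `u_F ≤ 1` on `P`, with equality
exactly on `F`. -/
theorem le_one_and_mem_iff {d : ℕ} {P : Polytope d} (h0 : 0 ∈ P.carrier)
    {F : Set (Fin d → ℝ)} (hF : P.IsFacet F) {u : Fin d → ℝ} (hu : P.IsUF F u)
    {x : Fin d → ℝ} (hx : x ∈ P.carrier) :
    pairing u x ≤ 1 ∧ (x ∈ F ↔ pairing u x = 1) := by
  obtain ⟨u', hne, c, hle, hFeq⟩ := hF.1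
  have heq : pairingLin u' = c • pairingLin u := by
    refine eq_of_eqOn_vertsOn hF hu fun y hy => ?_
    have hyF := hy.2
    rw [hFeq] at hyF
    simp [pairingLin_apply, hu y hy.2, hyF.2]
  have hval (y : Fin d → ℝ) : pairing u' y = c * pairing u y := LinearMap.congr_fun heq y
  have hc0 : c ≠ 0 := by
    rintro rfl
    refine hne (funext fun i => ?_)
    simpa [pairing, Pi.single_apply] using hval (Pi.single i 1)
  have hc : 0 < c := lt_of_le_of_ne (by simpa [pairing_zero_right] using hle 0 h0) hc0.symm
  refine ⟨?_, fun h => hu x h, fun h => ?_⟩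
  · have := hle x hx
    rw [hval] at this
    nlinarith
  · rw [hFeq]
    exact ⟨hx, by rw [hval, h, mul_one]⟩

end Polytope

open Polytope in
/-- Lemma 1 (`simple_uf_lemma`): for a simplicial `d`-polytope `P` with `0` in its
interior, a facet `F`, a vertex `v` of `F` and the neighboring facet `F' = N(F, v)`,
one has `⟨u_{F'}, x⟩ = ⟨u_F, x⟩ + (⟨u_{F'}, v⟩ - 1)·⟨u_F^v, x⟩` for all `x`, together
with the three resulting equivalences. -/
theorem simple_uf_lemma {d : ℕ} (P : Polytope d) (hsimp : P.IsSimplicial)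
    (h0 : 0 ∈ interior P.carrier)
    (F : Set (Fin d → ℝ)) (hF : P.IsFacet F)
    (v : Fin d → ℝ) (hv : v ∈ P.vertsOn F)
    (F' : Set (Fin d → ℝ)) (hF' : P.IsNeighborFacet F v F')
    (uF : Fin d → ℝ) (huF : P.IsUF F uF)
    (uF' : Fin d → ℝ) (huF' : P.IsUF F' uF')
    (uFv : Fin d → ℝ) (huFv : P.IsDualBasisElt F v uFv) :
    ∀ x : Fin d → ℝ,
      pairing uF' x = pairing uF x + (pairing uF' v - 1) * pairing uFv x ∧
      (pairing uFv x < 0 ↔ pairing uF x < pairing uF' x) ∧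
      (0 < pairing uFv x ↔ pairing uF' x < pairing uF x) ∧
      (pairing uFv x = 0 ↔ pairing uF' x = pairing uF x) := by
  have h0P : 0 ∈ P.carrier := interior_subset h0
  have hvP : v ∈ P.carrier := subset_convexHull ℝ _ hv.1
  have hlin : pairingLin uF' = pairingLin uF + (pairing uF' v - 1) • pairingLin uFv := by
    refine eq_of_eqOn_vertsOn hF huF fun w hw => ?_
    simp only [LinearMap.add_apply, LinearMap.smul_apply, smul_eq_mul, pairingLin_apply]
    rw [huF w hw.2]
    by_cases hwv : w = v
    · rw [hwv, huFv.1]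
      ring
    · rw [huFv.2 w hw hwv, huF' w (hF'.2.2 w hw hwv)]
      ring
  have key (x : Fin d → ℝ) :
      pairing uF' x = pairing uF x + (pairing uF' v - 1) * pairing uFv x :=
    LinearMap.congr_fun hlin x
  have hlt : pairing uF' v < 1 := by
    refine lt_of_le_of_ne (le_one_and_mem_iff h0P hF'.1 huF' hvP).1 fun h => hF'.2.1 ?_
    have hsame (x : Fin d → ℝ) : pairing uF' x = pairing uF x := by
      rw [key x, h]
      ring
    have hsub {G : Set (Fin d → ℝ)} (hG : P.IsFacet G) : G ⊆ P.carrier := by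
      obtain ⟨_, -, _, -, rfl⟩ := hG.1
      exact Set.sep_subset _ _
    ext x
    constructor
    · intro hx
      exact (le_one_and_mem_iff h0P hF huF (hsub hF'.1 hx)).2.2 (hsame x ▸ huF' x hx)
    · intro hx
      exact (le_one_and_mem_iff h0P hF'.1 huF' (hsub hF hx)).2.2 (hsame x ▸ huF x hx)
  intro x
  have hx := key x
  refine ⟨hx, ⟨fun h => ?_, fun h => ?_⟩, ⟨fun h => ?_, fun h => ?_⟩, ⟨fun h => ?_, fun h => ?_⟩⟩
  · nlinarith
  · by_contra! hn
    nlinarith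
  · nlinarith
  · by_contra! hn
    nlinarith
  · rw [hx, h]
    ring
  · have hz : (pairing uF' v - 1) * pairing uFv x = 0 := by linarith
    exact (mul_eq_zero.1 hz).resolve_left (sub_ne_zero.2 hlt.ne)
end
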